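/- Let 1 ≤ n < N be integers. Define K_1 : (ℝ^N)^{n+2} → [0,∞) by K_1(x_0,…,x_{n+1}) := H^{n+1}(Δ(x_0,…,x_{n+1})) / ∏_{0 ≤ i < j ≤ n+1} |x_i − x_j| when the points x_0,…,x_{n+1} are pairwise distinct, and K_1(x_0,…,x_{n+1}) := 0 otherwise. If E ⊂ ℝ^N is a Borel set with M_{K_1^2}(E) := ∫_E ⋯ ∫_E K_1^2(x_0,…,x_{n+1}) dH^n(x_0)⋯dH^n(x_{n+1}) < ∞, then E is n-rectifiable. -/

import Mathlib

open MeasureTheory Metric Set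
open scoped NNReal ENNReal

noncomputable section

/-- The integral Menger curvature `M_{K^p}(μ) = ∫⋯∫ K^p dμ ⋯ dμ`. -/
def MengerEnergy (N n : ℕ) (p : ℝ) (K : (Fin (n + 2) → EuclideanSpace ℝ (Fin N)) → ℝ)
    (μ : Measure (EuclideanSpace ℝ (Fin N))) : ℝ≥0∞ :=
  ∫⁻ z, ENNReal.ofReal (K z ^ p) ∂(Measure.pi fun _ : Fin (n + 2) => μ)

/-- `E` is `n`-rectifiable: up to an `H^n`-null set it is covered by countably many
Lipschitz images of `ℝ^n`. -/
def IsNRectifiable (N n : ℕ) (E : Set (EuclideanSpace ℝ (Fin N))) : Prop :=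
  ∃ f : ℕ → EuclideanSpace ℝ (Fin n) → EuclideanSpace ℝ (Fin N),
    (∀ i, ∃ L : ℝ≥0, LipschitzWith L (f i)) ∧
    μH[(n : ℝ)] (E \ ⋃ i, Set.range (f i)) = 0

open Classical

/-- The explicit higher-dimensional Menger curvature integrand
`K₁(x₀,…,x_{n+1}) = H^{n+1}(Δ(x₀,…,x_{n+1})) / ∏_{i<j} |x_i − x_j|` for pairwise-distinct
points, and `0` otherwise. -/
def K1 (N n : ℕ) (x : Fin (n + 2) → EuclideanSpace ℝ (Fin N)) : ℝ :=
  if Function.Injective x then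
    (μH[((n : ℝ) + 1)] (convexHull ℝ (Set.range x))).toReal /
      ∏ i : Fin (n + 2), ∏ j ∈ Finset.univ.filter (fun j => i < j), dist (x i) (x j)
  else 0

namespace Menger

/-- Quantitative linear independence: every coefficient of a linear combination is controlled by
the norm of the combination. -/
def Indep {ι V : Type*} [Fintype ι] [NormedAddCommGroup V] [NormedSpace ℝ V] (c : ℝ)
    (u : ι → V) : Prop :=
  ∀ (a : ι → ℝ) (i : ι), c * |a i| ≤ ‖∑ j, a j • u j‖

section Gram

variable {V : Type*} [NormedAddCommGroup V] [InnerProductSpace ℝ V]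

lemma exists_orthogonal_residual {k : ℕ} (u : Fin k → V) (w : V) :
    ∃ a : Fin k → ℝ, ∀ j, inner ℝ (w - ∑ i, a i • u i) (u j) = 0 := by
  let W := Submodule.span ℝ (Set.range u)
  have : FiniteDimensional ℝ W := FiniteDimensional.span_of_finite ℝ (Set.finite_range u)
  have hP : W.starProjection w ∈ W := Submodule.starProjection_apply_mem W w
  obtain ⟨a, ha⟩ := (Submodule.mem_span_range_iff_exists_fun ℝ).1 hP
  refine ⟨a, fun j => ?_⟩
  rw [ha, real_inner_comm]
  exact Submodule.sub_starProjection_mem_orthogonal (K := W) w _ (Submodule.subset_span ⟨j, rfl⟩)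

lemma exists_det_gram_snoc {k : ℕ} (u : Fin k → V) (w : V) :
    ∃ a : Fin k → ℝ, (Matrix.gram ℝ (Fin.snoc u w : Fin (k + 1) → V)).det =
      ‖w - ∑ j, a j • u j‖ ^ 2 * (Matrix.gram ℝ u).det := by
  obtain ⟨a, ha⟩ := exists_orthogonal_residual u w
  refine ⟨a, ?_⟩
  set e := w - ∑ j, a j • u j with he
  have hw : w = e + ∑ j, a j • u j := by simp [he]
  let P : Matrix (Fin k ⊕ Unit) (Fin k ⊕ Unit) ℝ :=
    Matrix.fromBlocks 1 0 (Matrix.of fun _ j => a j) 1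
  have hP : P.det = 1 := by simp [P]
  have h1 : Matrix.gram ℝ (Sum.elim u (fun _ : Unit => e)) =
      Matrix.fromBlocks (Matrix.gram ℝ u) 0 0 (Matrix.of fun _ _ => ‖e‖ ^ 2) := by
    ext i j
    rcases i with i | i <;> rcases j with j | j <;>
      simp [Matrix.gram_apply, ha]
    rw [real_inner_comm]; exact ha i
  have h2 : Matrix.gram ℝ (Sum.elim u (fun _ : Unit => w)) =
      P * Matrix.gram ℝ (Sum.elim u (fun _ : Unit => e)) * P.transpose := by
    rw [h1]
    have hg : ∀ i, inner ℝ (u i) w = ∑ j, a j * inner ℝ (u i) (u j) := by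
      intro i
      rw [hw, inner_add_right, real_inner_comm, ha i, zero_add, inner_sum]
      simp [inner_smul_right]
    have hww : inner ℝ w w = ‖e‖ ^ 2 + ∑ i, (∑ j, a j * inner ℝ (u j) (u i)) * a i := by
      have : inner ℝ w w = inner ℝ e w + ∑ j, a j * inner ℝ (u j) w := by
        have h := congrArg (fun v => inner ℝ v w) hw
        simpa [inner_add_left, sum_inner, inner_smul_left] using h
      rw [this]
      congr 1
      · rw [hw, inner_add_right, real_inner_self_eq_norm_sq, inner_sum]
        simp [inner_smul_right, ha]
      · simp_rw [hg, Finset.sum_mul, Finset.mul_sum]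
        rw [Finset.sum_comm]
        refine Finset.sum_congr rfl fun i _ => Finset.sum_congr rfl fun j _ => ?_
        ring
    rw [Matrix.fromBlocks_transpose, Matrix.fromBlocks_multiply, Matrix.fromBlocks_multiply]
    ext i j
    rcases i with i | i <;> rcases j with j | j
    · simp [Matrix.gram_apply]
    · simp [Matrix.gram_apply, Matrix.mul_apply, hg, mul_comm]
    · simp only [Matrix.gram_apply, Sum.elim_inl, Sum.elim_inr, Matrix.fromBlocks_apply₂₁]
      rw [real_inner_comm, hg]
      simp [Matrix.mul_apply, Matrix.gram_apply, real_inner_comm]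
    · simp only [Matrix.gram_apply, Sum.elim_inr, Matrix.fromBlocks_apply₂₂]
      rw [hww]
      simp [Matrix.mul_apply, Matrix.gram_apply, add_comm]
  have h3 : (Matrix.gram ℝ (Fin.snoc u w : Fin (k + 1) → V)).det =
      (Matrix.gram ℝ (Sum.elim u (fun _ : Unit => w))).det := by
    let σ : Fin k ⊕ Unit ≃ Fin (k + 1) :=
      (Equiv.sumCongr (Equiv.refl _) (Equiv.ofUnique Unit (Fin 1))).trans finSumFinEquiv
    rw [← Matrix.det_submatrix_equiv_self σ]
    congr 1
    ext i j
    have : ∀ i, (Fin.snoc u w : Fin (k + 1) → V) (σ i) = Sum.elim u (fun _ : Unit => w) i := by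
      rintro (i | i)
      · simp only [σ, Equiv.trans_apply, Equiv.sumCongr_apply, Sum.map_inl, Equiv.refl_apply,
          finSumFinEquiv_apply_left, Sum.elim_inl]
        exact Fin.snoc_castSucc (α := fun _ => V) w u i
      · simp only [σ, Equiv.trans_apply, Equiv.sumCongr_apply, Sum.map_inr,
          finSumFinEquiv_apply_right, Sum.elim_inr]
        convert Fin.snoc_last (α := fun _ => V) w u using 2
        ext; simp
    simp [Matrix.gram_apply, this]
  rw [h3, h2, Matrix.det_mul, Matrix.det_mul, Matrix.det_transpose, hP, h1,
    Matrix.det_fromBlocks_zero₂₁]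
  simp [mul_comm]

lemma Indep.castSucc {k : ℕ} {c : ℝ} {u : Fin (k + 1) → V} (h : Indep c u) :
    Indep c (fun j : Fin k => u j.castSucc) := by
  intro a i
  simpa [Fin.sum_univ_castSucc] using h (Fin.snoc a 0) i.castSucc

lemma Indep.pow_le_det_gram {k : ℕ} {c : ℝ} (hc : 0 ≤ c) {u : Fin k → V} (h : Indep c u) :
    c ^ (2 * k) ≤ (Matrix.gram ℝ u).det := by
  induction k with
  | zero => simp
  | succ k ih =>
    obtain ⟨a, ha⟩ := exists_det_gram_snoc (fun j : Fin k => u j.castSucc) (u (Fin.last k))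
    have hu : (Fin.snoc (fun j : Fin k => u j.castSucc) (u (Fin.last k)) : Fin (k + 1) → V) = u :=
      Fin.snoc_init_self u
    rw [hu] at ha
    rw [ha]
    have h1 := ih h.castSucc
    have h2 : c ≤ ‖u (Fin.last k) - ∑ j, a j • u (Fin.castSucc j)‖ := by
      have := h (Fin.snoc (fun j => - a j) 1) (Fin.last k)
      simp only [Fin.snoc_last, abs_one, mul_one, Fin.sum_univ_castSucc, Fin.snoc_castSucc,
        one_smul, neg_smul, Finset.sum_neg_distrib] at this
      rwa [neg_add_eq_sub] at this
    have h3 : c ^ 2 ≤ ‖u (Fin.last k) - ∑ j, a j • u (Fin.castSucc j)‖ ^ 2 := by gcongr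
    calc c ^ (2 * (k + 1)) = c ^ 2 * c ^ (2 * k) := by ring
      _ ≤ _ := by gcongr

lemma Indep.exists_le_det_gram_snoc {k : ℕ} {c : ℝ} (hc : 0 ≤ c) {u : Fin k → V}
    (h : Indep c u) (w : V) : ∃ a : Fin k → ℝ, ‖w - ∑ j, a j • u j‖ ^ 2 * c ^ (2 * k) ≤
      (Matrix.gram ℝ (Fin.snoc u w : Fin (k + 1) → V)).det := by
  obtain ⟨a, ha⟩ := exists_det_gram_snoc u w
  exact ⟨a, by rw [ha]; gcongr; exact h.pow_le_det_gram hc⟩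

end Gram

end Menger

namespace Menger

section Volume

variable {V : Type*} [NormedAddCommGroup V] [InnerProductSpace ℝ V]

/-- The corners `0, e₀, …, e_{d-1}` of the standard corner simplex. -/
def corner (d : ℕ) : Fin (d + 1) → EuclideanSpace ℝ (Fin d) :=
  Fin.cons 0 fun i => EuclideanSpace.single i 1

lemma affineSpan_corner (d : ℕ) : affineSpan ℝ (Set.range (corner d)) = ⊤ := by
  rw [AffineSubspace.affineSpan_eq_top_iff_vectorSpan_eq_top_of_nonempty ℝ _ _
    (Set.range_nonempty _), eq_top_iff,
    ← (EuclideanSpace.basisFun (Fin d) ℝ).toBasis.span_eq, Submodule.span_le]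
  rintro _ ⟨i, rfl⟩
  have h := vsub_mem_vectorSpan ℝ (Set.mem_range_self (f := corner d) i.succ)
    (Set.mem_range_self (f := corner d) 0)
  simpa [corner] using h

/-- The `d`-dimensional Hausdorff measure of the standard corner simplex. -/
def cornerVolume (d : ℕ) : ℝ := (μH[(d : ℝ)] (convexHull ℝ (Set.range (corner d)))).toReal

lemma cornerVolume_pos (d : ℕ) : 0 < cornerVolume d := by
  have hd : Module.finrank ℝ (EuclideanSpace ℝ (Fin d)) = d := by simp
  have : (μH[(d : ℝ)] : Measure (EuclideanSpace ℝ (Fin d))).IsAddHaarMeasure := by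
    have := MeasureTheory.isAddHaarMeasure_hausdorffMeasure (E := EuclideanSpace ℝ (Fin d))
    rwa [hd] at this
  refine ENNReal.toReal_pos (ne_of_gt ?_) (ne_of_lt ?_)
  · have h := (interior_convexHull_nonempty_iff_affineSpan_eq_top (V := EuclideanSpace ℝ (Fin d))
      (s := Set.range (corner d))).2 (affineSpan_corner d)
    exact (isOpen_interior.measure_pos _ h).trans_le (measure_mono interior_subset)
  · exact ((Set.finite_range _).isCompact_convexHull ℝ).measure_lt_top

variable [MeasurableSpace V] [BorelSpace V]

lemma sq_hausdorffMeasure_simplex {d : ℕ} (x : Fin (d + 1) → V) :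
    (μH[(d : ℝ)] (convexHull ℝ (Set.range x))).toReal ^ 2 =
      cornerVolume d ^ 2 * (Matrix.gram ℝ fun i : Fin d => x i.succ - x 0).det := by
  let b := EuclideanSpace.basisFun (Fin d) ℝ
  let f : EuclideanSpace ℝ (Fin d) →ₗ[ℝ] V := b.toBasis.constr ℝ fun i => x i.succ - x 0
  have hf : ∀ i, f (EuclideanSpace.single i 1) = x i.succ - x 0 := by
    intro i
    have hb : b.toBasis i = EuclideanSpace.single i 1 := by simp [b]
    rw [← hb]
    exact b.toBasis.constr_basis ℝ (fun i => x i.succ - x 0) i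
  have hx : Set.range x = (fun v => x 0 + v) '' (f '' Set.range (corner d)) := by
    rw [← Set.range_comp, ← Set.range_comp]
    congr 1
    funext i
    refine Fin.cases ?_ (fun i => ?_) i
    · simp [corner]
    · simp [corner, hf]
  have himg : convexHull ℝ (Set.range x) =
      (fun v => x 0 + v) '' (f '' convexHull ℝ (Set.range (corner d))) := by
    rw [hx, LinearMap.image_convexHull]
    exact convexHull_vadd (𝕜 := ℝ) (x 0) (f '' Set.range (corner d))
  have hm := f.hausdorffMeasure_image (convexHull ℝ (Set.range (corner d)))
  rw [finrank_euclideanSpace_fin] at hm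
  have hdet := f.normDet_sq_eq_det_gram b
  rw [himg, (isometry_add_left (x 0)).hausdorffMeasure_image (Or.inl (by positivity)), hm,
    ENNReal.toReal_mul, ENNReal.toReal_ofReal f.normDet_nonneg, mul_pow]
  have hg : (fun i : Fin d => f (b i)) = fun i : Fin d => x i.succ - x 0 := by
    funext i; simpa [b] using hf i
  have hdet' : f.normDet ^ 2 = (Matrix.gram ℝ fun i : Fin d => x i.succ - x 0).det := by
    rw [← hg]; exact hdet
  rw [hdet', cornerVolume]
  ring

end Volume

/-- The product of the distances of all pairs of points. -/
def pairDist {V : Type*} [PseudoMetricSpace V] {k : ℕ} (x : Fin k → V) : ℝ :=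
  ∏ i : Fin k, ∏ j ∈ Finset.univ.filter (fun j => i < j), dist (x i) (x j)

/-- Up to a constant factor, the square of the Menger curvature integrand. -/
def curv {V : Type*} [NormedAddCommGroup V] [InnerProductSpace ℝ V] {n : ℕ}
    (x : Fin (n + 2) → V) : ℝ :=
  (Matrix.gram ℝ fun i : Fin (n + 1) => x i.succ - x 0).det / pairDist x ^ 2

lemma pairDist_eq_zero {V : Type*} [PseudoMetricSpace V] {k : ℕ} {x : Fin k → V}
    {i j : Fin k} (hij : i ≠ j) (h : x i = x j) : pairDist x = 0 := by
  wlog hlt : i < j generalizing i j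
  · exact this hij.symm h.symm (lt_of_le_of_ne (not_lt.1 hlt) hij.symm)
  exact Finset.prod_eq_zero (Finset.mem_univ i)
    (Finset.prod_eq_zero (by simpa using hlt) (by simp [h]))

lemma K1_sq {N n : ℕ} (x : Fin (n + 2) → EuclideanSpace ℝ (Fin N)) :
    K1 N n x ^ 2 = cornerVolume (n + 1) ^ 2 * curv x := by
  unfold K1 curv
  split_ifs with h
  · have := sq_hausdorffMeasure_simplex x
    push_cast at this
    rw [div_pow, this, pairDist, mul_div_assoc]
  · obtain ⟨i, j, hij, hne⟩ : ∃ i j, x i = x j ∧ i ≠ j := by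
      simpa [Function.Injective] using h
    rw [pairDist_eq_zero hne hij]; simp

end Menger

namespace Menger

section

variable {V : Type*} [NormedAddCommGroup V]

lemma Indep.linearIndependent [NormedSpace ℝ V] {ι : Type*} [Fintype ι] {c : ℝ} (hc : 0 < c)
    {u : ι → V} (h : Indep c u) : LinearIndependent ℝ u := by
  rw [Fintype.linearIndependent_iff]
  intro a ha i
  have := h a i
  rw [ha, norm_zero] at this
  exact abs_eq_zero.1 (le_antisymm (by nlinarith [abs_nonneg (a i)]) (abs_nonneg _))

lemma Indep.perturb [NormedSpace ℝ V] {ι : Type*} [Fintype ι] {c e : ℝ} {u u' : ι → V}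
    (h : Indep c u) (hu : ∀ j, ‖u j - u' j‖ ≤ e) (hc : Fintype.card ι * e ≤ c / 2) :
    Indep (c / 2) u' := by
  intro a i
  obtain ⟨i₀, -, hi₀⟩ := Finset.exists_max_image Finset.univ (fun j => |a j|) ⟨i, Finset.mem_univ i⟩
  have h1 := h a i₀
  have h2 : ‖∑ j, a j • u j - ∑ j, a j • u' j‖ ≤ c / 2 * |a i₀| := by
    rw [← Finset.sum_sub_distrib]
    calc _ ≤ ∑ j, ‖a j • u j - a j • u' j‖ := norm_sum_le _ _
      _ ≤ ∑ _j : ι, |a i₀| * e := by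
        refine Finset.sum_le_sum fun j _ => ?_
        rw [← smul_sub, norm_smul, Real.norm_eq_abs]
        exact mul_le_mul (hi₀ j (Finset.mem_univ j)) (hu j) (norm_nonneg _) (abs_nonneg _)
      _ = Fintype.card ι * e * |a i₀| := by simp; ring
      _ ≤ _ := by gcongr
  have h3 := norm_sub_norm_le (∑ j, a j • u j) (∑ j, a j • u' j)
  have hc0 : 0 ≤ c / 2 := le_trans
    (mul_nonneg (Nat.cast_nonneg _) ((norm_nonneg _).trans (hu i))) hc
  have h4 : c / 2 * |a i| ≤ c / 2 * |a i₀| := 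
    mul_le_mul_of_nonneg_left (hi₀ i (Finset.mem_univ i)) hc0
  linarith

lemma Indep.le_norm [NormedSpace ℝ V] {ι : Type*} [Fintype ι] {c : ℝ} {u : ι → V} (h : Indep c u) (i : ι) :
    c ≤ ‖u i‖ := by
  simpa [Pi.single_apply] using h (Pi.single i 1) i

/-- The edges of the simplex `t` issuing from its vertex `t 0`. -/
def edges {n : ℕ} (t : Fin (n + 1) → V) : Fin n → V := fun j => t j.succ - t 0

lemma edges_snoc {n : ℕ} (t : Fin (n + 1) → V) (z : V) :
    edges (Fin.snoc t z : Fin (n + 2) → V) = Fin.snoc (edges t) (z - t 0) := by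
  funext i
  have h0 : (Fin.snoc t z : Fin (n + 2) → V) 0 = t 0 := by simp
  refine Fin.lastCases ?_ (fun i => ?_) i
  · simp only [edges, h0, Fin.snoc_last, Fin.succ_last]
  · simp only [edges, h0, Fin.snoc_castSucc, Fin.succ_castSucc]

lemma injective_of_indep_edges [NormedSpace ℝ V] {n : ℕ} {c : ℝ} (hc : 0 < c)
    {t : Fin (n + 1) → V} (h : Indep c (edges t)) : Function.Injective t := by
  have hl := h.linearIndependent hc
  intro i j hij
  induction i using Fin.cases with
  | zero =>
    induction j using Fin.cases with
    | zero => rfl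
    | succ j => exact absurd (by simp [edges, hij]) (hl.ne_zero j)
  | succ i =>
    induction j using Fin.cases with
    | zero => exact absurd (by simp [edges, hij]) (hl.ne_zero i)
    | succ j => rw [hl.injective (show edges t i = edges t j by simp [edges, hij])]

end

lemma two_mul_sum_card_lt (k : ℕ) :
    2 * ∑ i : Fin k, (Finset.univ.filter (fun j => i < j)).card = k * (k - 1) := by
  have h : ∀ i : Fin k, (Finset.univ.filter (fun j => i < j)).card = k - 1 - i := by
    intro i
    have := Fin.card_Ioi i
    rwa [show Finset.Ioi i = Finset.univ.filter (fun j => i < j) by ext; simp] at this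
  simp_rw [h]
  rw [Fin.sum_univ_eq_sum_range (fun i => k - 1 - i), Finset.sum_range_reflect (fun i => i), mul_comm,
    Finset.sum_range_id_mul_two]

lemma pairDist_nonneg {V : Type*} [PseudoMetricSpace V] {k : ℕ} (x : Fin k → V) :
    0 ≤ pairDist x :=
  Finset.prod_nonneg fun _ _ => Finset.prod_nonneg fun _ _ => dist_nonneg

lemma pairDist_sq_le {V : Type*} [PseudoMetricSpace V] {k : ℕ} {x : Fin k → V} {D : ℝ}
    (h : ∀ i j, dist (x i) (x j) ≤ D) : pairDist x ^ 2 ≤ D ^ (k * (k - 1)) := by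
  have h1 : pairDist x ≤ D ^ (∑ i : Fin k, (Finset.univ.filter (fun j => i < j)).card) := by
    rw [← Finset.prod_pow_eq_pow_sum]
    refine Finset.prod_le_prod (fun _ _ => Finset.prod_nonneg fun _ _ => dist_nonneg)
      fun i _ => ?_
    rw [← Finset.prod_const]
    exact Finset.prod_le_prod (fun _ _ => dist_nonneg) fun j _ => h i j
  calc pairDist x ^ 2 ≤ (D ^ (∑ i : Fin k, (Finset.univ.filter (fun j => i < j)).card)) ^ 2 :=
        pow_le_pow_left₀ (pairDist_nonneg x) h1 2
    _ = D ^ (k * (k - 1)) := by rw [← two_mul_sum_card_lt, ← pow_mul, mul_comm]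

lemma exists_le_curv {V : Type*} [NormedAddCommGroup V] [InnerProductSpace ℝ V] {n : ℕ}
    {τ s : ℝ} (hτ : 0 < τ) (hs : 0 < s) {t : Fin (n + 1) → V} {z : V}
    (hd : ∀ i j, dist ((Fin.snoc t z : Fin (n + 2) → V) i) ((Fin.snoc t z : Fin (n + 2) → V) j)
      ≤ 4 * s) (h : Indep (τ * s) (edges t)) :
    ∃ a : Fin n → ℝ, τ ^ (2 * n) / 4 ^ ((n + 2) * (n + 1)) *
        (‖z - t 0 - ∑ j, a j • edges t j‖ ^ 2 / s ^ (2 + n * (n + 1))) ≤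
      curv (Fin.snoc t z : Fin (n + 2) → V) := by
  have hτs : 0 < τ * s := mul_pos hτ hs
  have hgram : (fun i : Fin (n + 1) => (Fin.snoc t z : Fin (n + 2) → V) i.succ -
      (Fin.snoc t z : Fin (n + 2) → V) 0) = Fin.snoc (edges t) (z - t 0) := edges_snoc t z
  have hcurv : 0 ≤ curv (Fin.snoc t z : Fin (n + 2) → V) :=
    div_nonneg (Matrix.posSemidef_gram _ _).det_nonneg (sq_nonneg _)
  by_cases hz : ∃ i, z = t i
  · obtain ⟨i, rfl⟩ := hz
    have : ∃ a : Fin n → ℝ, t i - t 0 - ∑ j, a j • edges t j = 0 := by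
      induction i using Fin.cases with
      | zero => exact ⟨0, by simp⟩
      | succ i => exact ⟨Pi.single i 1, by simp [Pi.single_apply, edges]⟩
    obtain ⟨a, ha⟩ := this
    exact ⟨a, by rw [ha]; simpa using hcurv⟩
  · push Not at hz
    have hinj : Function.Injective (Fin.snoc t z : Fin (n + 2) → V) := by
      rw [Fin.snoc_injective_iff]
      exact ⟨injective_of_indep_edges hτs h, by rintro ⟨i, hi⟩; exact hz i hi.symm⟩
    have hpos : 0 < pairDist (Fin.snoc t z : Fin (n + 2) → V) := by
      refine Finset.prod_pos fun i _ => Finset.prod_pos fun j hj => dist_pos.2 fun he => ?_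
      exact (Finset.mem_filter.1 hj).2.ne (hinj he)
    obtain ⟨a, ha⟩ := h.exists_le_det_gram_snoc hτs.le (z - t 0)
    refine ⟨a, ?_⟩
    unfold curv
    rw [hgram, le_div_iff₀ (by positivity)]
    refine le_trans ?_ ha
    have hp := pairDist_sq_le hd
    set d := ‖z - t 0 - ∑ j, a j • edges t j‖
    calc _ ≤ τ ^ (2 * n) / 4 ^ ((n + 2) * (n + 1)) * (d ^ 2 / s ^ (2 + n * (n + 1))) *
          (4 * s) ^ ((n + 2) * (n + 2 - 1)) := by gcongr
      _ = d ^ 2 * (τ * s) ^ (2 * n) := by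
        have e1 : n + 2 - 1 = n + 1 := rfl
        have e2 : (n + 2) * (n + 1) = 2 + n * (n + 1) + 2 * n := by ring
        rw [e1, mul_pow, mul_pow]
        field_simp
        rw [e2]; ring

end Menger

namespace Menger

lemma sum_pow_le_of_separated {W ι : Type*} [NormedAddCommGroup W] [NormedSpace ℝ W]
    [FiniteDimensional ℝ W] (I : Finset ι) (q : ι → W) (r : ι → ℝ) {c : W} {ρ : ℝ} (hρ : 0 ≤ ρ)
    (hr : ∀ i ∈ I, 0 ≤ r i)
    (hsep : ∀ i ∈ I, ∀ j ∈ I, i ≠ j → r i + r j < dist (q i) (q j))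
    (hball : ∀ i ∈ I, dist (q i) c + r i ≤ ρ) :
    ∑ i ∈ I, r i ^ Module.finrank ℝ W ≤ ρ ^ Module.finrank ℝ W := by
  let : MeasurableSpace W := borel W
  have : BorelSpace W := ⟨rfl⟩
  let μ : Measure W := Measure.addHaar
  have hb : 0 < μ.real (ball (0 : W) 1) :=
    ENNReal.toReal_pos (measure_ball_pos μ _ one_pos).ne' measure_ball_lt_top.ne
  have h1 : μ.real (⋃ i ∈ I, closedBall (q i) (r i)) = ∑ i ∈ I, μ.real (closedBall (q i) (r i)) :=
    measureReal_biUnion_finset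
      (fun i hi j hj hij => closedBall_disjoint_closedBall (hsep i hi j hj hij))
      (fun i _ => measurableSet_closedBall) (fun i _ => measure_closedBall_lt_top.ne)
  have h2 : μ.real (⋃ i ∈ I, closedBall (q i) (r i)) ≤ μ.real (closedBall c ρ) := by
    refine measureReal_mono (iUnion₂_subset fun i hi => ?_) measure_closedBall_lt_top.ne
    exact closedBall_subset_closedBall' (by linarith [hball i hi])
  rw [h1, Measure.addHaar_real_closedBall μ c hρ,
    Finset.sum_congr rfl fun i hi => Measure.addHaar_real_closedBall μ (q i) (hr i hi),
    ← Finset.sum_mul] at h2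
  exact le_of_mul_le_mul_right h2 hb

lemma exists_cover_card {V : Type*} [NormedAddCommGroup V] [NormedSpace ℝ V] [FiniteDimensional ℝ V]
    (κ : ℝ) (hκ : 0 < κ) : ∃ M : ℕ, 0 < M ∧ ∀ (x : V) (s : ℝ), 0 < s →
    ∃ c : Fin M → V, closedBall x s ⊆ ⋃ i, closedBall (c i) (κ * s) := by
  obtain ⟨T, -, hT, hcov⟩ := (isCompact_closedBall (0 : V) 1).finite_cover_balls hκ
  have hne : T.Nonempty := by
    rcases T.eq_empty_or_nonempty with rfl | h
    · have : (0 : V) ∈ closedBall (0 : V) 1 := mem_closedBall_self zero_le_one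
      simpa using hcov this
    · exact h
  let e := hT.toFinset.equivFin
  refine ⟨hT.toFinset.card, Finset.card_pos.2 (by simpa using hne), fun x s hs =>
    ⟨fun i => x + s • (e.symm i : V), fun y hy => ?_⟩⟩
  have h1 : s⁻¹ • (y - x) ∈ closedBall (0 : V) 1 := by
    rw [mem_closedBall_zero_iff, norm_smul, Real.norm_eq_abs, abs_of_pos (inv_pos.2 hs),
      inv_mul_le_iff₀ hs, mul_one, ← dist_eq_norm]
    exact hy
  obtain ⟨c, hc, hyc⟩ := mem_iUnion₂.1 (hcov h1)
  refine mem_iUnion.2 ⟨e ⟨c, by simpa using hc⟩, ?_⟩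
  rw [mem_ball, dist_eq_norm] at hyc
  rw [mem_closedBall, dist_eq_norm]
  simp only [Equiv.symm_apply_apply]
  have : y - (x + s • c) = s • (s⁻¹ • (y - x) - c) := by
    rw [smul_sub, smul_inv_smul₀ hs.ne']; abel
  rw [this, norm_smul, Real.norm_eq_abs, abs_of_pos hs]
  nlinarith

lemma exists_large_piece {V : Type*} [PseudoMetricSpace V] [MeasurableSpace V]
    {μ : Measure V} {A : Set V} {M : ℕ} (hM : 0 < M) {x : V} {s r b : ℝ}
    {c : Fin M → V} (hcov : closedBall x s ⊆ ⋃ i, closedBall (c i) r)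
    (hA : A ⊆ closedBall x s) (hAb : ENNReal.ofReal b ≤ μ A) :
    ∃ y, ENNReal.ofReal (b / M) ≤ μ (A ∩ closedBall y r) := by
  by_contra! hcon
  have : Nonempty (Fin M) := ⟨⟨0, hM⟩⟩
  have h1 : μ A ≤ ∑ i, μ (A ∩ closedBall (c i) r) := by
    refine (measure_mono ?_).trans (measure_iUnion_fintype_le μ _)
    rw [← inter_iUnion]
    exact subset_inter le_rfl (hA.trans hcov)
  have h2 : ∑ i, μ (A ∩ closedBall (c i) r) < ∑ _i : Fin M, ENNReal.ofReal (b / M) :=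
    ENNReal.sum_lt_sum_of_nonempty Finset.univ_nonempty fun i _ => hcon _
  rw [Finset.sum_const, Finset.card_univ, Fintype.card_fin, nsmul_eq_mul, ← ENNReal.ofReal_natCast,
    ← ENNReal.ofReal_mul (by positivity), mul_div_cancel₀ _ (by positivity)] at h2
  exact absurd (hAb.trans h1) (not_le.2 h2)

section Selection

variable {V : Type*} [NormedAddCommGroup V] [InnerProductSpace ℝ V] [FiniteDimensional ℝ V]
  [MeasurableSpace V] [BorelSpace V]

/-- Upper Ahlfors regularity with dimension `n` and constant `C₀`. -/
def UpperRegular (n : ℕ) (C₀ : ℝ) (μ : Measure V) : Prop :=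
  ∀ y r, 0 < r → μ (closedBall y r) ≤ ENNReal.ofReal (C₀ * r ^ n)

/-- The points of a ball close to the affine subspace `p + W`. -/
def strip (W : Submodule ℝ V) (p x : V) (s w : ℝ) : Set V :=
  {y | y ∈ closedBall x s ∧ ‖(y - p) - W.starProjection (y - p)‖ ≤ w}

lemma measure_strip_le {n : ℕ} {C₀ : ℝ} (hC₀ : 0 ≤ C₀) {μ : Measure V} (hμ : UpperRegular n C₀ μ)
    {W : Submodule ℝ V} (hW : Module.finrank ℝ W + 1 ≤ n) (p x : V) {s τ : ℝ} (hs : 0 < s)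
    (hτ : 0 < τ) (hτ1 : τ ≤ 1) :
    μ (strip W p x s (τ * s)) ≤ ENNReal.ofReal (C₀ * 20 ^ n * τ * s ^ n) := by
  have hτs : 0 < τ * s := mul_pos hτ hs
  obtain ⟨u, hu, hdisj, hcov⟩ := Vitali.exists_disjoint_subfamily_covering_enlargement_closedBall
    (strip W p x s (τ * s)) id (fun _ => 2 * (τ * s)) (2 * (τ * s)) (fun _ _ => le_rfl) 5
    (by norm_num)
  let d := Module.finrank ℝ W
  let q : V → W := fun y => W.orthogonalProjectionOnto (y - p)
  have hq : ∀ y y', dist (q y) (q y') ≤ dist y y' := by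
    intro y y'
    have h := W.norm_starProjection_apply_le (y - y')
    have e : q y - q y' = W.orthogonalProjectionOnto (y - y') := by
      rw [← map_sub]; congr 1; abel
    rw [dist_eq_norm, dist_eq_norm, e]
    exact h
  have hcard : ∀ I : Finset V, (I : Set V) ⊆ u → (I.card : ℝ) ≤ (2 / τ) ^ d := by
    intro I hI
    have h := sum_pow_le_of_separated I q (fun _ => τ * s) (c := q x) (ρ := 2 * s)
      (by positivity) (fun _ _ => hτs.le) ?_ ?_
    · simp only [Finset.sum_const, nsmul_eq_mul] at h
      rw [div_pow, le_div_iff₀ (by positivity)]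
      rw [mul_pow, mul_pow, ← mul_assoc] at h
      exact le_of_mul_le_mul_right h (by positivity)
    · intro i hi j hj hij
      have h1 := (disjoint_closedBall_closedBall_iff (by positivity) (by positivity)).1
        (hdisj (hI hi) (hI hj) hij)
      have hi' := (hu (hI hi)).2
      have hj' := (hu (hI hj)).2
      have h2 : dist i j ≤ dist (q i) (q j) + 2 * (τ * s) := by
        have e : i - j = ((i - p) - W.starProjection (i - p)) -
            ((j - p) - W.starProjection (j - p)) + ((q i : V) - q j) := by
          simp [q]; abel
        have e2 : ‖(q i : V) - q j‖ = dist (q i) (q j) := by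
          rw [dist_eq_norm]; rfl
        rw [dist_eq_norm, e]
        refine (norm_add_le _ _).trans ?_
        rw [e2]
        have := norm_sub_le ((i - p) - W.starProjection (i - p))
          ((j - p) - W.starProjection (j - p))
        linarith
      simp only [id] at h1
      linarith
    · intro i hi
      have h1 := (hu (hI hi)).1
      have h2 := (hq i x).trans (mem_closedBall.1 h1)
      nlinarith
  have hfin : u.Finite := by
    by_contra hinf
    obtain ⟨I, hI, hc⟩ := Set.Infinite.exists_subset_card_eq hinf (⌊(2 / τ) ^ d⌋₊ + 1)
    have h1 := hcard I hI
    rw [hc] at h1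
    push_cast at h1
    linarith [Nat.lt_floor_add_one ((2 / τ) ^ d)]
  have hsub : strip W p x s (τ * s) ⊆ ⋃ y ∈ hfin.toFinset, closedBall y (10 * (τ * s)) := by
    intro y hy
    obtain ⟨b, hb, hyb⟩ := hcov y hy
    have := hyb (mem_closedBall_self (by positivity))
    simp only [mem_iUnion, Set.Finite.mem_toFinset]
    exact ⟨b, hb, by simpa [← mul_assoc, show (5 : ℝ) * 2 = 10 by norm_num] using this⟩
  calc μ (strip W p x s (τ * s))
      ≤ ∑ y ∈ hfin.toFinset, μ (closedBall y (10 * (τ * s))) :=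
        (measure_mono hsub).trans (measure_biUnion_finset_le _ _)
    _ ≤ ∑ _y ∈ hfin.toFinset, ENNReal.ofReal (C₀ * (10 * (τ * s)) ^ n) :=
        Finset.sum_le_sum fun y _ => hμ y _ (by positivity)
    _ = ENNReal.ofReal (hfin.toFinset.card * (C₀ * (10 * (τ * s)) ^ n)) := by
        rw [Finset.sum_const, nsmul_eq_mul, ← ENNReal.ofReal_natCast,
          ← ENNReal.ofReal_mul (by positivity)]
    _ ≤ ENNReal.ofReal (C₀ * 20 ^ n * τ * s ^ n) := by
        apply ENNReal.ofReal_le_ofReal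
        have h1 : (hfin.toFinset.card : ℝ) ≤ (2 / τ) ^ (n - 1) := by
          refine (hcard _ (by simp)).trans (pow_le_pow_right₀ ?_ (by omega))
          rw [le_div_iff₀ hτ]; linarith
        obtain ⟨m, rfl⟩ : ∃ m, n = m + 1 := ⟨n - 1, by omega⟩
        simp only [add_tsub_cancel_right] at h1
        calc _ ≤ (2 / τ) ^ m * (C₀ * (10 * (τ * s)) ^ (m + 1)) := by gcongr
          _ = C₀ * (2 ^ m * 10 ^ (m + 1)) * τ * s ^ (m + 1) := by
            rw [div_pow, mul_pow, mul_pow, pow_succ τ]; field_simp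
          _ ≤ C₀ * 20 ^ (m + 1) * τ * s ^ (m + 1) := by
            gcongr
            rw [show (20 : ℝ) = 2 * 10 by norm_num, mul_pow]
            gcongr <;> norm_num

end Selection

end Menger

namespace Menger

lemma Indep.snoc {V : Type*} [NormedAddCommGroup V] [NormedSpace ℝ V] {k : ℕ} {c c' c'' D : ℝ}
    {u : Fin k → V} {w : V} (h : Indep c u) (hw : ‖w‖ ≤ D) (hc' : 0 < c')
    (hd : ∀ a : Fin k → ℝ, c' ≤ ‖w - ∑ j, a j • u j‖) (h1 : c'' ≤ c')
    (h2 : c'' * (1 + D / c') ≤ c) : Indep c'' (Fin.snoc u w : Fin (k + 1) → V) := by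
  intro a i
  set b := a (Fin.last k) with hb
  set X := ‖∑ j, a j • (Fin.snoc u w : Fin (k + 1) → V) j‖ with hX
  have hsum : ∑ j, a j • (Fin.snoc u w : Fin (k + 1) → V) j =
      ∑ j : Fin k, a j.castSucc • u j + b • w := by
    simp [Fin.sum_univ_castSucc, hb]
  have hbX : c' * |b| ≤ X := by
    by_cases h0 : b = 0
    · simp [h0, hX]
    · have h3 := hd fun j => - (a j.castSucc / b)
      have h4 : ∑ j : Fin k, a j.castSucc • u j + b • w =
          b • (w - ∑ j : Fin k, (- (a j.castSucc / b)) • u j) := by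
        rw [smul_sub, Finset.smul_sum, sub_eq_add_neg, ← Finset.sum_neg_distrib, add_comm]
        congr 1
        refine Finset.sum_congr rfl fun j _ => ?_
        rw [smul_smul, ← neg_smul]; congr 1; field_simp
      rw [hX, hsum, h4, norm_smul, Real.norm_eq_abs, mul_comm]
      gcongr
  have hD : 0 ≤ D := (norm_nonneg _).trans hw
  refine Fin.lastCases ?_ (fun i => ?_) i
  · exact (mul_le_mul_of_nonneg_right h1 (abs_nonneg _)).trans hbX
  · have h3 := h (fun j => a j.castSucc) i
    have h4 : ‖∑ j : Fin k, a j.castSucc • u j‖ ≤ X + |b| * D := by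
      have : ∑ j : Fin k, a j.castSucc • u j =
          ∑ j, a j • (Fin.snoc u w : Fin (k + 1) → V) j - b • w := by rw [hsum]; abel
      rw [this]
      refine (norm_sub_le _ _).trans ?_
      rw [norm_smul, Real.norm_eq_abs]
      gcongr
    have h5 : |b| * D ≤ X * (D / c') := by
      rw [mul_div_assoc', le_div_iff₀ hc']
      nlinarith
    have h6 : c * |a i.castSucc| ≤ X * (1 + D / c') := by linarith
    have hp : 0 < 1 + D / c' := by positivity
    have h7 : c'' * (1 + D / c') * |a i.castSucc| ≤ X * (1 + D / c') :=
      (mul_le_mul_of_nonneg_right h2 (abs_nonneg _)).trans h6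
    have h8 : (c'' * |a i.castSucc|) * (1 + D / c') ≤ X * (1 + D / c') := by linarith
    exact le_of_mul_le_mul_right h8 hp

section Selection

variable {V : Type*} [NormedAddCommGroup V] [InnerProductSpace ℝ V] [FiniteDimensional ℝ V]
  [MeasurableSpace V] [BorelSpace V]

lemma measurableSet_strip (W : Submodule ℝ V) (p x : V) (s w : ℝ) :
    MeasurableSet (strip W p x s w) := by
  have h : IsClosed {y : V | ‖(y - p) - W.starProjection (y - p)‖ ≤ w} :=
    isClosed_le (by fun_prop) continuous_const
  exact (isClosed_closedBall.inter h).measurableSet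

lemma exists_selection_aux (n : ℕ) {δ C₀ : ℝ} (hδ : 0 < δ) (hC₀ : 0 < C₀) (k : ℕ) (hk : k ≤ n) :
    ∃ τ : ℝ, 0 < τ ∧ ∀ κ : ℝ, 0 < κ → ∃ m : ℝ, 0 < m ∧
      ∀ (μ : Measure V) (E : Set V), MeasurableSet E → μ Eᶜ = 0 → UpperRegular n C₀ μ →
      ∀ (x : V) (s : ℝ), 0 < s → ENNReal.ofReal (δ * s ^ n) ≤ μ (closedBall x s) →
      ∃ S : Fin (k + 1) → Set V, (∀ j, MeasurableSet (S j) ∧ S j ⊆ E ∩ closedBall x s ∧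
        ENNReal.ofReal (m * s ^ n) ≤ μ (S j) ∧ ∃ c, S j ⊆ closedBall c (κ * s)) ∧
        ∀ t : Fin (k + 1) → V, (∀ j, t j ∈ S j) → Indep (τ * s) (edges t) := by
  have hbase : ∀ (μ : Measure V) (E : Set V), μ Eᶜ = 0 → ∀ (x : V) (s : ℝ),
      ENNReal.ofReal (δ * s ^ n) ≤ μ (closedBall x s) →
      ENNReal.ofReal (δ * s ^ n) ≤ μ (E ∩ closedBall x s) := by
    intro μ E hE x s h
    refine h.trans ((measure_mono (t := (E ∩ closedBall x s) ∪ Eᶜ) ?_).trans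
      ((measure_union_le _ _).trans (by simp [hE])))
    intro y hy
    by_cases hyE : y ∈ E
    · exact Or.inl ⟨hyE, hy⟩
    · exact Or.inr hyE
  induction k with
  | zero =>
    refine ⟨1, one_pos, fun κ hκ => ?_⟩
    obtain ⟨M, hM, hcov⟩ := exists_cover_card (V := V) κ hκ
    refine ⟨δ / M, by positivity, fun μ E hE hE0 hμ x s hs hx => ?_⟩
    obtain ⟨c, hc⟩ := hcov x s hs
    obtain ⟨y, hy⟩ := exists_large_piece hM hc inter_subset_right (hbase μ E hE0 x s hx)
    refine ⟨fun _ => E ∩ closedBall x s ∩ closedBall y (κ * s), fun j =>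
      ⟨(hE.inter measurableSet_closedBall).inter measurableSet_closedBall, inter_subset_left,
        ?_, y, inter_subset_right⟩, fun t _ a i => i.elim0⟩
    rwa [div_mul_eq_mul_div]
  | succ k ih =>
    obtain ⟨τ₀, hτ₀, ih⟩ := ih (by omega)
    obtain ⟨τ', hτ', hτ'1, hτ'2⟩ : ∃ τ' : ℝ, 0 < τ' ∧ τ' ≤ 1 ∧ C₀ * 20 ^ n * τ' ≤ δ / 2 := by
      refine ⟨min 1 (δ / 2 / (C₀ * 20 ^ n)), by positivity, min_le_left _ _, ?_⟩
      rw [mul_comm, ← le_div_iff₀ (by positivity)]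
      exact min_le_right _ _
    obtain ⟨τ'', hτ'', hτ''1, hτ''2⟩ : ∃ τ'' : ℝ, 0 < τ'' ∧ τ'' ≤ τ' ∧ τ'' * (1 + 2 / τ') ≤ τ₀ := by
      refine ⟨min τ' (τ₀ / (1 + 2 / τ')), by positivity, min_le_left _ _, ?_⟩
      rw [← le_div_iff₀ (by positivity)]
      exact min_le_right _ _
    refine ⟨τ'' / 2, by positivity, fun κ hκ => ?_⟩
    obtain ⟨κ', hκ', hκκ, hκ'2⟩ : ∃ κ' : ℝ, 0 < κ' ∧ κ' ≤ κ ∧ (k + 1 : ℝ) * (4 * κ') ≤ τ'' / 2 := by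
      refine ⟨min κ (τ'' / (8 * (k + 1))), by positivity, min_le_left _ _, ?_⟩
      have : min κ (τ'' / (8 * (k + 1))) ≤ τ'' / (8 * (k + 1)) := min_le_right _ _
      rw [le_div_iff₀ (by positivity)] at this
      linarith
    obtain ⟨m, hm, ih⟩ := ih κ' hκ'
    obtain ⟨M, hM, hcov⟩ := exists_cover_card (V := V) κ' hκ'
    refine ⟨min m (δ / 2 / M), by positivity, fun μ E hE hE0 hμ x s hs hx => ?_⟩
    obtain ⟨S, hS, hind⟩ := ih μ E hE hE0 hμ x s hs hx
    have hne : ∀ j, (S j).Nonempty := by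
      intro j
      refine nonempty_of_measure_ne_zero (μ := μ) (ne_of_gt (lt_of_lt_of_le ?_ (hS j).2.2.1))
      rw [ENNReal.ofReal_pos]; positivity
    choose t' ht' using hne
    let W := Submodule.span ℝ (Set.range (edges t'))
    have hWrank : Module.finrank ℝ W + 1 ≤ n := by
      have := finrank_range_le_card (R := ℝ) (edges t')
      rw [Fintype.card_fin] at this
      exact le_trans (Nat.succ_le_succ this) hk
    let A := (E ∩ closedBall x s) \ strip W (t' 0) x s (τ' * s)
    have hAmeas : MeasurableSet A :=
      (hE.inter measurableSet_closedBall).diff (measurableSet_strip _ _ _ _ _)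
    have hA : ENNReal.ofReal (δ * s ^ n / 2) ≤ μ A := by
      have h1 := hbase μ E hE0 x s hx
      have h2 : μ (E ∩ closedBall x s) ≤ μ A + ENNReal.ofReal (δ * s ^ n / 2) := by
        refine (measure_mono (t := A ∪ strip W (t' 0) x s (τ' * s)) ?_).trans
          ((measure_union_le _ _).trans ?_)
        · intro y hy
          by_cases hy' : y ∈ strip W (t' 0) x s (τ' * s)
          · exact Or.inr hy'
          · exact Or.inl ⟨hy, hy'⟩
        · gcongr
          refine (measure_strip_le hC₀.le hμ hWrank (t' 0) x hs hτ' hτ'1).trans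
            (ENNReal.ofReal_le_ofReal ?_)
          have : 0 < s ^ n := by positivity
          nlinarith
      have h3 := h1.trans h2
      have h4 : δ * s ^ n = δ * s ^ n / 2 + δ * s ^ n / 2 := by ring
      rw [h4, ENNReal.ofReal_add (by positivity) (by positivity)] at h3
      have h5 : δ * s ^ n / 2 + δ * s ^ n / 2 = δ * s ^ n := by ring
      rw [h5] at h3
      exact (ENNReal.add_le_add_iff_right ENNReal.ofReal_ne_top).1 h3
    obtain ⟨c, hc⟩ := hcov x s hs
    obtain ⟨y₀, hy₀⟩ := exists_large_piece hM hc
      (sdiff_subset.trans inter_subset_right : A ⊆ closedBall x s) hA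
    refine ⟨Fin.snoc S (A ∩ closedBall y₀ (κ' * s)), fun j => ?_, fun t ht => ?_⟩
    · refine Fin.lastCases ?_ (fun j => ?_) j
      · simp only [Fin.snoc_last]
        refine ⟨hAmeas.inter measurableSet_closedBall, inter_subset_left.trans sdiff_subset,
          le_trans (ENNReal.ofReal_le_ofReal ?_) hy₀, y₀, inter_subset_right.trans
          (closedBall_subset_closedBall (by gcongr))⟩
        calc min m (δ / 2 / M) * s ^ n ≤ δ / 2 / M * s ^ n := by gcongr; exact min_le_right _ _
          _ = δ * s ^ n / 2 / M := by ring
      · simp only [Fin.snoc_castSucc]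
        obtain ⟨h1, h2, h3, c, h4⟩ := hS j
        refine ⟨h1, h2, le_trans (ENNReal.ofReal_le_ofReal ?_) h3, c, h4.trans
          (closedBall_subset_closedBall (by gcongr))⟩
        gcongr; exact min_le_left _ _
    · set t₀ : Fin (k + 1) → V := fun j => t j.castSucc with ht₀
      set y := t (Fin.last (k + 1)) with hy
      have htt : t = (Fin.snoc t₀ y : Fin (k + 2) → V) := (Fin.snoc_init_self t).symm
      have ht₀S : ∀ j, t₀ j ∈ S j := fun j => by
        have := ht j.castSucc; rwa [Fin.snoc_castSucc] at this
      have hyS : y ∈ A ∩ closedBall y₀ (κ' * s) := by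
        have := ht (Fin.last (k + 1)); rwa [Fin.snoc_last] at this
      have hclose : ∀ j, ‖t' j - t₀ j‖ ≤ 2 * (κ' * s) := by
        intro j
        obtain ⟨c, hc⟩ := (hS j).2.2.2
        rw [← dist_eq_norm]
        have h1 := hc (ht' j)
        have h2 := hc (ht₀S j)
        rw [mem_closedBall] at h1 h2
        linarith [dist_triangle_right (t' j) (t₀ j) c]
      have hstar : Indep (τ'' * s) (Fin.snoc (edges t') (y - t' 0) : Fin (k + 1) → V) := by
        refine (hind t' ht').snoc (c' := τ' * s) (D := 2 * s) ?_ (by positivity)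
          (fun a => ?_) (by gcongr) ?_
        · have h1 := hyS.1.1.2
          have h2 := ((hS 0).2.1 (ht' 0)).2
          rw [mem_closedBall] at h1 h2
          rw [← dist_eq_norm]
          linarith [dist_triangle_right y (t' 0) x]
        · have h1 : ¬ ‖(y - t' 0) - W.starProjection (y - t' 0)‖ ≤ τ' * s :=
            fun h => hyS.1.2 ⟨hyS.1.1.2, h⟩
          have h2 : ∑ j, a j • edges t' j ∈ W :=
            Submodule.sum_mem _ fun j _ => Submodule.smul_mem _ _ (Submodule.subset_span ⟨j, rfl⟩)
          have h3 : ‖(y - t' 0) - W.starProjection (y - t' 0)‖ ≤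
              ‖(y - t' 0) - ∑ j, a j • edges t' j‖ := by
            rw [Submodule.starProjection_minimal]
            exact ciInf_le ⟨0, by rintro _ ⟨_, rfl⟩; exact norm_nonneg _⟩
              (⟨_, h2⟩ : W)
          linarith
        · have : 2 * s / (τ' * s) = 2 / τ' := by field_simp
          rw [this]
          nlinarith
      rw [htt, edges_snoc, div_mul_eq_mul_div]
      refine hstar.perturb (e := 4 * κ' * s) (fun j => ?_) ?_
      · refine Fin.lastCases ?_ (fun j => ?_) j
        · simp only [Fin.snoc_last]
          have : y - t' 0 - (y - t₀ 0) = - (t' 0 - t₀ 0) := by abel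
          rw [this, norm_neg]
          have : 0 < κ' * s := by positivity
          linarith [hclose 0]
        · simp only [Fin.snoc_castSucc, edges]
          have : t' j.succ - t' 0 - (t₀ j.succ - t₀ 0) =
            (t' j.succ - t₀ j.succ) - (t' 0 - t₀ 0) := by abel
          rw [this]
          linarith [norm_sub_le (t' j.succ - t₀ j.succ) (t' 0 - t₀ 0), hclose j.succ, hclose 0]
      · rw [Fintype.card_fin]
        push_cast
        nlinarith

/-- The box `∏ S j` consists of `τ s`-nondegenerate `n`-simplices of `E` in `closedBall x s`, and
its sides have large measure. -/
structure IsSelection (n : ℕ) (τ m : ℝ) (μ : Measure V) (E : Set V) (x : V) (s : ℝ)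
    (S : Fin (n + 1) → Set V) : Prop where
  measurable : ∀ j, MeasurableSet (S j)
  subset : ∀ j, S j ⊆ E ∩ closedBall x s
  le_measure : ∀ j, ENNReal.ofReal (m * s ^ n) ≤ μ (S j)
  indep : ∀ t : Fin (n + 1) → V, (∀ j, t j ∈ S j) → Indep (τ * s) (edges t)

lemma exists_selection (V : Type*) [NormedAddCommGroup V] [InnerProductSpace ℝ V]
    [FiniteDimensional ℝ V] [MeasurableSpace V] [BorelSpace V]
    (n : ℕ) {δ C₀ : ℝ} (hδ : 0 < δ) (hC₀ : 0 < C₀) :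
    ∃ τ m : ℝ, 0 < τ ∧ 0 < m ∧
      ∀ (μ : Measure V) (E : Set V), MeasurableSet E → μ Eᶜ = 0 → UpperRegular n C₀ μ →
      ∀ (x : V) (s : ℝ), 0 < s → ENNReal.ofReal (δ * s ^ n) ≤ μ (closedBall x s) →
      ∃ S : Fin (n + 1) → Set V, IsSelection n τ m μ E x s S := by
  obtain ⟨τ, hτ, h⟩ := exists_selection_aux (V := V) n hδ hC₀ n le_rfl
  obtain ⟨m, hm, h⟩ := h 1 one_pos
  refine ⟨τ, m, hτ, hm, fun μ E hE hE0 hμ x s hs hx => ?_⟩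
  obtain ⟨S, hS, hind⟩ := h μ E hE hE0 hμ x s hs hx
  exact ⟨S, fun j => (hS j).1, fun j => (hS j).2.1, fun j => (hS j).2.2.1, hind⟩

end Selection

end Menger

namespace Menger

variable {V : Type*} [NormedAddCommGroup V] [InnerProductSpace ℝ V] [FiniteDimensional ℝ V]
  [MeasurableSpace V] [BorelSpace V]

lemma measurable_curv {n : ℕ} : Measurable (curv : (Fin (n + 2) → V) → ℝ) := by
  refine Measurable.div (Continuous.measurable ?_) (Continuous.measurable ?_)
  · refine Continuous.matrix_det (continuous_matrix fun i j => ?_)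
    simp only [Matrix.gram_apply]
    fun_prop
  · unfold pairDist
    fun_prop

lemma measurable_curv_snoc {n : ℕ} (z : V) :
    Measurable fun t : Fin (n + 1) → V => curv (Fin.snoc t z : Fin (n + 2) → V) := by
  refine measurable_curv.comp (measurable_pi_iff.2 fun i => ?_)
  refine Fin.lastCases ?_ (fun i => ?_) i
  · simp
  · simpa using measurable_pi_apply i

/-- The nondegenerate simplices of size comparable to `s`. -/
def shell (V : Type*) [NormedAddCommGroup V] (n : ℕ) (τ s : ℝ) : Set (Fin (n + 1) → V) :=
  {t | ∀ j, τ * s ≤ ‖edges t j‖ ∧ ‖edges t j‖ ≤ 2 * s}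

lemma measurableSet_shell (n : ℕ) (τ s : ℝ) : MeasurableSet (shell V n τ s) := by
  have : shell V n τ s = ⋂ j, {t | τ * s ≤ ‖edges t j‖} ∩ {t | ‖edges t j‖ ≤ 2 * s} := by
    ext t; simp [shell]
  rw [this]
  have hc : ∀ j : Fin n, Continuous fun t : Fin (n + 1) → V => ‖edges t j‖ := by
    intro j; unfold edges; fun_prop
  exact MeasurableSet.iInter fun j =>
    (isClosed_le continuous_const (hc j)).measurableSet.inter
      (isClosed_le (hc j) continuous_const).measurableSet

/-- The part of the pointwise curvature at `z` coming from simplices of size about `s`. -/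
def scaleCurv (n : ℕ) (μ : Measure V) (τ s : ℝ) (z : V) : ℝ≥0∞ :=
  ∫⁻ t in shell V n τ s, ENNReal.ofReal (curv (Fin.snoc t z : Fin (n + 2) → V))
    ∂(Measure.pi fun _ : Fin (n + 1) => μ)

/-- The pointwise curvature at `z`. -/
def pointCurv (n : ℕ) (μ : Measure V) (z : V) : ℝ≥0∞ :=
  ∫⁻ t, ENNReal.ofReal (curv (Fin.snoc t z : Fin (n + 2) → V))
    ∂(Measure.pi fun _ : Fin (n + 1) => μ)

/-- The constant of the approximation of points by a plane spanned by a good simplex. -/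
def apxConst (n : ℕ) (τ m : ℝ) : ℝ := 4 ^ ((n + 2) * (n + 1)) / (τ ^ (2 * n) * m ^ (n + 1))

lemma apxConst_pos (n : ℕ) {τ m : ℝ} (hτ : 0 < τ) (hm : 0 < m) : 0 < apxConst n τ m := by
  unfold apxConst; positivity

lemma IsSelection.exists_good_simplex {n : ℕ} {τ m : ℝ} {μ : Measure V} [IsFiniteMeasure μ]
    {E : Set V} {x : V} {s : ℝ} {S : Fin (n + 1) → Set V} (hS : IsSelection n τ m μ E x s S)
    (hτ : 0 < τ) (hm : 0 < m) (hs : 0 < s) (Z : Finset V) (hZ : ∀ z ∈ Z, z ∈ closedBall x (2 * s))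
    (hfin : ∑ z ∈ Z, scaleCurv n μ τ s z ≠ ∞) :
    ∃ t : Fin (n + 1) → V, (∀ j, t j ∈ S j) ∧ ∀ z ∈ Z, ∃ a : Fin n → ℝ,
      ‖z - t 0 - ∑ j, a j • edges t j‖ ^ 2 ≤
        apxConst n τ m * s ^ 2 * (∑ z ∈ Z, scaleCurv n μ τ s z).toReal := by
  let P : Measure (Fin (n + 1) → V) := Measure.pi fun _ => μ
  let f : (Fin (n + 1) → V) → ℝ≥0∞ := fun t =>
    ∑ z ∈ Z, ENNReal.ofReal (curv (Fin.snoc t z : Fin (n + 2) → V))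
  have hfm : ∀ z, Measurable fun t : Fin (n + 1) → V =>
      ENNReal.ofReal (curv (Fin.snoc t z : Fin (n + 2) → V)) := fun z =>
    (measurable_curv_snoc z).ennreal_ofReal
  have hf : Measurable f := Finset.measurable_sum _ fun z _ => hfm z
  have hball : ∀ t ∈ Set.pi univ S, ∀ j, t j ∈ closedBall x s := fun t ht j =>
    (hS.subset j (ht j (mem_univ j))).2
  have hbox : P (Set.pi univ S) = ∏ j, μ (S j) := Measure.pi_pi _ _
  have hlow : ENNReal.ofReal ((m * s ^ n) ^ (n + 1)) ≤ P (Set.pi univ S) := by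
    rw [hbox, ENNReal.ofReal_pow (by positivity)]
    calc ENNReal.ofReal (m * s ^ n) ^ (n + 1) = ∏ _j : Fin (n + 1), ENNReal.ofReal (m * s ^ n) := by
          simp
      _ ≤ _ := Finset.prod_le_prod' fun j _ => hS.le_measure j
  have hP0 : P (Set.pi univ S) ≠ 0 := by
    refine (lt_of_lt_of_le ?_ hlow).ne'
    rw [ENNReal.ofReal_pos]; positivity
  have hPt : P (Set.pi univ S) ≠ ∞ := measure_ne_top _ _
  obtain ⟨t, ht, hft⟩ := exists_le_setLAverage hP0 hPt hf.aemeasurable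
  have hsub : Set.pi univ S ⊆ shell V n τ s := by
    intro t ht j
    refine ⟨(hS.indep t fun j => ht j (mem_univ j)).le_norm j, ?_⟩
    have h1 := hball t ht j.succ
    have h2 := hball t ht 0
    rw [mem_closedBall] at h1 h2
    rw [edges, ← dist_eq_norm]
    linarith [dist_triangle_right (t j.succ) (t 0) x]
  have hbelow : f t * P (Set.pi univ S) ≤ ∑ z ∈ Z, scaleCurv n μ τ s z := by
    rw [setLAverage_eq] at hft
    refine (mul_le_mul_left hft _).trans ?_
    rw [ENNReal.div_mul_cancel hP0 hPt]
    refine (lintegral_mono_set hsub).trans ?_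
    rw [lintegral_finsetSum _ fun z _ => hfm z]
    exact le_rfl
  refine ⟨t, fun j => ht j (mem_univ j), fun z hz => ?_⟩
  have htj : ∀ j, dist (t j) x ≤ s := fun j => hball t ht j
  have hzx : dist z x ≤ 2 * s := hZ z hz
  obtain ⟨a, ha⟩ := exists_le_curv (t := t) (z := z) hτ hs (by
    have key : ∀ i, dist ((Fin.snoc t z : Fin (n + 2) → V) i) x ≤ 2 * s := by
      intro i
      refine Fin.lastCases ?_ (fun i => ?_) i
      · simpa using hzx
      · simpa using (htj i).trans (by linarith)
    intro i j
    linarith [key i, key j, dist_triangle_right ((Fin.snoc t z : Fin (n + 2) → V) i)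
      ((Fin.snoc t z : Fin (n + 2) → V) j) x]) (hS.indep t fun j => ht j (mem_univ j))
  refine ⟨a, ?_⟩
  set d := ‖z - t 0 - ∑ j, a j • edges t j‖
  have h1 : ENNReal.ofReal (τ ^ (2 * n) / 4 ^ ((n + 2) * (n + 1)) *
      (d ^ 2 / s ^ (2 + n * (n + 1)))) ≤ f t :=
    (ENNReal.ofReal_le_ofReal ha).trans (Finset.single_le_sum
      (f := fun z => ENNReal.ofReal (curv (Fin.snoc t z : Fin (n + 2) → V)))
      (fun _ _ => zero_le) hz)
  have h2 := (mul_le_mul' h1 hlow).trans hbelow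
  rw [← ENNReal.ofReal_mul (by positivity)] at h2
  have h3 := ENNReal.toReal_mono hfin h2
  rw [ENNReal.toReal_ofReal (by positivity)] at h3
  set Q := (∑ z ∈ Z, scaleCurv n μ τ s z).toReal
  have h4 : apxConst n τ m * s ^ 2 * (τ ^ (2 * n) / 4 ^ ((n + 2) * (n + 1)) *
      (d ^ 2 / s ^ (2 + n * (n + 1))) * (m * s ^ n) ^ (n + 1)) = d ^ 2 := by
    unfold apxConst
    rw [mul_pow, ← pow_mul, pow_add s]
    field_simp
  rw [← h4]
  have := apxConst_pos n hτ hm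
  gcongr

lemma scaleCurv_le_pointCurv (n : ℕ) (μ : Measure V) (τ s : ℝ) (z : V) :
    scaleCurv n μ τ s z ≤ pointCurv n μ z := setLIntegral_le_lintegral _ _

lemma card_scales_le {τ R : ℝ} (hτ : 0 < τ) (hR : 0 < R) {J : ℕ} (hJ : 2 / τ < 2 ^ J) (M : ℕ)
    (D : ℝ) : ((Finset.range M).filter
      fun k => τ * (R * (1 / 2) ^ k) ≤ D ∧ D ≤ 2 * (R * (1 / 2) ^ k)).card ≤ J := by
  set F := (Finset.range M).filter
      fun k => τ * (R * (1 / 2) ^ k) ≤ D ∧ D ≤ 2 * (R * (1 / 2) ^ k) with hF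
  rcases F.eq_empty_or_nonempty with h | h
  · simp [h]
  have hsub : F ⊆ Finset.Ico (F.min' h) (F.min' h + J) := by
    intro k hk
    have hmin := F.min'_le k hk
    rw [Finset.mem_Ico]
    refine ⟨hmin, ?_⟩
    have h0 := (Finset.mem_filter.1 (F.min'_mem h)).2.1
    have h1 := (Finset.mem_filter.1 hk).2.2
    obtain ⟨d, hd⟩ := Nat.exists_eq_add_of_le hmin
    rw [hd] at h1 ⊢
    set k₀ := F.min' h
    have h2 : τ ≤ 2 * (1 / 2) ^ d := by
      have h3 : τ * (R * (1 / 2) ^ k₀) ≤ (2 * (1 / 2) ^ d) * (R * (1 / 2) ^ k₀) := by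
        rw [pow_add] at h1; linarith
      exact le_of_mul_le_mul_right h3 (by positivity)
    have h4 : (2 : ℝ) ^ d ≤ 2 / τ := by
      rw [le_div_iff₀ hτ]
      have h5 : (2 : ℝ) ^ d * (1 / 2) ^ d = 1 := by rw [← mul_pow]; norm_num
      calc (2 : ℝ) ^ d * τ ≤ 2 ^ d * (2 * (1 / 2) ^ d) := by gcongr
        _ = 2 := by linear_combination 2 * h5
    have h6 : (2 : ℝ) ^ d < 2 ^ J := lt_of_le_of_lt h4 hJ
    have := (pow_lt_pow_iff_right₀ (one_lt_two : (1 : ℝ) < 2)).1 h6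
    omega
  exact (Finset.card_le_card hsub).trans (by simp)

lemma sum_scaleCurv_le {n : ℕ} (hn : 1 ≤ n) {τ R : ℝ} (hτ : 0 < τ) (hR : 0 < R) {J : ℕ}
    (hJ : 2 / τ < 2 ^ J) (μ : Measure V) (M : ℕ) (z : V) :
    ∑ k ∈ Finset.range M, scaleCurv n μ τ (R * (1 / 2) ^ k) z ≤ J * pointCurv n μ z := by
  set g : (Fin (n + 1) → V) → ℝ≥0∞ :=
    fun t => ENNReal.ofReal (curv (Fin.snoc t z : Fin (n + 2) → V))
  have hg : Measurable g := (measurable_curv_snoc z).ennreal_ofReal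
  simp only [scaleCurv, pointCurv]
  rw [← lintegral_const_mul _ hg]
  simp_rw [← lintegral_indicator (measurableSet_shell (V := V) n τ _)]
  rw [← lintegral_finsetSum _ fun k _ => hg.indicator (measurableSet_shell n τ _)]
  refine lintegral_mono fun t => ?_
  simp only [indicator_apply]
  rw [← Finset.sum_filter, Finset.sum_const, nsmul_eq_mul]
  gcongr
  refine (Finset.card_le_card ?_).trans (card_scales_le hτ hR hJ M ‖edges t ⟨0, hn⟩‖)
  intro k hk
  rw [Finset.mem_filter] at hk ⊢
  exact ⟨hk.1, hk.2 _⟩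

end Menger

namespace Menger

section Split

variable {V X : Type*} [NormedAddCommGroup V] [InnerProductSpace ℝ V]
  [NormedAddCommGroup X] [InnerProductSpace ℝ X]

/-- `π` and `σ` are the two components of an orthogonal splitting. -/
def IsSplit (π : V →ₗ[ℝ] X) (σ : V →ₗ[ℝ] V) : Prop :=
  ∀ v, ‖v‖ ^ 2 = ‖π v‖ ^ 2 + ‖σ v‖ ^ 2

variable {π : V →ₗ[ℝ] X} {σ : V →ₗ[ℝ] V}

lemma IsSplit.norm_fst_le (h : IsSplit π σ) (v : V) : ‖π v‖ ≤ ‖v‖ :=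
  le_of_sq_le_sq (by linarith [h v, sq_nonneg ‖σ v‖]) (norm_nonneg _)

lemma IsSplit.norm_snd_le (h : IsSplit π σ) (v : V) : ‖σ v‖ ≤ ‖v‖ :=
  le_of_sq_le_sq (by linarith [h v, sq_nonneg ‖π v‖]) (norm_nonneg _)

lemma IsSplit.norm_le_add (h : IsSplit π σ) (v : V) : ‖v‖ ≤ ‖π v‖ + ‖σ v‖ :=
  le_of_sq_le_sq (by nlinarith [h v, norm_nonneg (π v), norm_nonneg (σ v)])
    (by positivity)

lemma IsSplit.norm_le_two_mul (h : IsSplit π σ) {v : V} {α : ℝ} (hα : α ≤ 1 / 2)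
    (hv : ‖σ v‖ ≤ α * ‖v‖) : ‖v‖ ≤ 2 * ‖π v‖ := by
  nlinarith [h.norm_le_add v, norm_nonneg v]

lemma Indep.fst {ι : Type*} [Fintype ι] {c e : ℝ} {u : ι → V} (hu : Indep c u)
    (h : IsSplit π σ) (hσ : ∀ j, ‖σ (u j)‖ ≤ e) (hc : Fintype.card ι * e ≤ c / 2) :
    Indep (c / 2) (fun j => π (u j)) := by
  intro a i
  obtain ⟨i₀, -, hi₀⟩ := Finset.exists_max_image Finset.univ (fun j => |a j|) ⟨i, Finset.mem_univ i⟩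
  have h1 := (hu a i₀).trans (h.norm_le_add _)
  have h2 : ‖σ (∑ j, a j • u j)‖ ≤ c / 2 * |a i₀| := by
    rw [map_sum]
    calc _ ≤ ∑ j, ‖σ (a j • u j)‖ := norm_sum_le _ _
      _ ≤ ∑ _j : ι, |a i₀| * e := by
        refine Finset.sum_le_sum fun j _ => ?_
        rw [map_smul, norm_smul, Real.norm_eq_abs]
        exact mul_le_mul (hi₀ j (Finset.mem_univ j)) (hσ j) (norm_nonneg _) (abs_nonneg _)
      _ = Fintype.card ι * e * |a i₀| := by simp; ring
      _ ≤ _ := by gcongr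
  have hc0 : 0 ≤ c / 2 := le_trans
    (mul_nonneg (Nat.cast_nonneg _) ((norm_nonneg _).trans (hσ i))) hc
  have h4 := mul_le_mul_of_nonneg_left (hi₀ i (Finset.mem_univ i)) hc0
  have h5 : π (∑ j, a j • u j) = ∑ j, a j • π (u j) := by simp
  rw [h5] at h1
  linarith

variable {n : ℕ} [FiniteDimensional ℝ X] (hX : Module.finrank ℝ X = n)

include hX in
lemma Indep.exists_coeff {c : ℝ} (hc : 0 < c) {u : Fin n → X} (hu : Indep c u) (q : X) :
    ∃ b : Fin n → ℝ, ∑ j, b j • u j = q := by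
  have h := (hu.linearIndependent hc).span_eq_top_of_card_eq_finrank' (by simp [hX])
  have hq : q ∈ Submodule.span ℝ (Set.range u) := by rw [h]; trivial
  exact (Submodule.mem_span_range_iff_exists_fun ℝ).1 hq

include hX in
lemma exists_weights {c : ℝ} (hc : 0 < c) {t : Fin (n + 1) → V}
    (hu : Indep c (fun j => π (edges t j))) (q : X) :
    ∃ w : Fin (n + 1) → ℝ, ∑ j, w j = 1 ∧ ∑ j, w j • π (t j) = q ∧
      ∑ j, |w j| ≤ 1 + 2 * n * (‖q - π (t 0)‖ / c) := by
  obtain ⟨b, hb⟩ := hu.exists_coeff hX hc (q - π (t 0))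
  refine ⟨Fin.cons (1 - ∑ j, b j) b, by simp [Fin.sum_univ_succ], ?_, ?_⟩
  · simp only [edges, map_sub, smul_sub, Finset.sum_sub_distrib, ← Finset.sum_smul] at hb
    simp only [Fin.sum_univ_succ, Fin.cons_zero, Fin.cons_succ, sub_smul, one_smul]
    rw [sub_eq_sub_iff_add_eq_add] at hb
    rw [sub_add_eq_add_sub, sub_eq_iff_eq_add, ← hb, add_comm]
  · simp only [Fin.sum_univ_succ, Fin.cons_zero, Fin.cons_succ]
    have h1 : ∑ j, |b j| ≤ n * (‖q - π (t 0)‖ / c) := by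
      calc ∑ j, |b j| ≤ ∑ _j : Fin n, ‖q - π (t 0)‖ / c := by
            refine Finset.sum_le_sum fun j _ => ?_
            rw [le_div_iff₀ hc, mul_comm, ← hb]
            exact hu b j
        _ = _ := by simp
    have h2 : |1 - ∑ j, b j| ≤ 1 + ∑ j, |b j| := by
      refine (abs_sub _ _).trans ?_
      rw [abs_one]
      gcongr
      exact Finset.abs_sum_le_sum_abs _ _
    linarith

include hX in
lemma exists_slope {c e : ℝ} (hc : 0 < c) {u : Fin n → V}
    (hu : Indep c (fun j => π (u j))) (hσ : ∀ j, ‖σ (u j)‖ ≤ e) (hec : n * e ≤ c) :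
    ∃ Λ : X →ₗ[ℝ] V, (∀ j, Λ (π (u j)) = σ (u j)) ∧ ∀ q, ‖Λ q‖ ≤ ‖q‖ := by
  let b := basisOfLinearIndependentOfCardEqFinrank' (fun j => π (u j)) (hu.linearIndependent hc)
    (by simp [hX])
  have hb : ∀ j, b j = π (u j) := fun j => by simp [b]
  have hΛ : ∀ j, (b.constr ℝ fun j => σ (u j)) (π (u j)) = σ (u j) := by
    intro j; rw [← hb j]; exact b.constr_basis ℝ _ j
  refine ⟨b.constr ℝ fun j => σ (u j), hΛ, fun q => ?_⟩
  obtain ⟨a, rfl⟩ := hu.exists_coeff hX hc q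
  have hval : (b.constr ℝ fun j => σ (u j)) (∑ j, a j • π (u j)) = ∑ j, a j • σ (u j) := by
    simp only [map_sum, map_smul, hΛ]
  rw [hval]
  set q := ∑ j, a j • π (u j) with hq
  calc ‖∑ j, a j • σ (u j)‖ ≤ ∑ j, ‖a j • σ (u j)‖ := norm_sum_le _ _
    _ ≤ ∑ _j : Fin n, ‖q‖ / c * e := by
      refine Finset.sum_le_sum fun j _ => ?_
      rw [norm_smul, Real.norm_eq_abs]
      have h1 : |a j| ≤ ‖q‖ / c := by
        rw [le_div_iff₀ hc, mul_comm]; exact hu a j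
      exact mul_le_mul h1 (hσ j) (norm_nonneg _) (by positivity)
    _ = n * e * ‖q‖ / c := by simp; ring
    _ ≤ ‖q‖ := by
      rw [div_le_iff₀ hc, mul_comm]
      gcongr

end Split

variable {V X : Type*} [NormedAddCommGroup V] [InnerProductSpace ℝ V] [FiniteDimensional ℝ V]
  [MeasurableSpace V] [BorelSpace V] [NormedAddCommGroup X] [InnerProductSpace ℝ X]
  [FiniteDimensional ℝ X] {π : V →ₗ[ℝ] X} {σ : V →ₗ[ℝ] V}

lemma IsSelection.norm_snd_edges_le {n : ℕ} {τ m e : ℝ} {μ : Measure V}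
    {E : Set V} {x : V} {s : ℝ} {S : Fin (n + 1) → Set V} (hS : IsSelection n τ m μ E x s S)
    (hcone : ∀ y ∈ E ∩ closedBall x s, ‖σ (y - x)‖ ≤ e * s)
    {t : Fin (n + 1) → V} (ht : ∀ j, t j ∈ S j) (j : Fin n) : ‖σ (edges t j)‖ ≤ 2 * e * s := by
  have h1 := hcone _ (hS.subset _ (ht j.succ))
  have h2 := hcone _ (hS.subset _ (ht 0))
  have : edges t j = (t j.succ - x) - (t 0 - x) := by simp [edges]
  rw [this, map_sub]
  linarith [norm_sub_le (σ (t j.succ - x)) (σ (t 0 - x))]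

lemma IsSelection.indep_fst {n : ℕ} {τ m e : ℝ} {μ : Measure V}
    {E : Set V} {x : V} {s : ℝ} {S : Fin (n + 1) → Set V} (hS : IsSelection n τ m μ E x s S)
    (hs : 0 < s) (h : IsSplit π σ) (he : 4 * n * e ≤ τ)
    (hcone : ∀ y ∈ E ∩ closedBall x s, ‖σ (y - x)‖ ≤ e * s)
    {t : Fin (n + 1) → V} (ht : ∀ j, t j ∈ S j) :
    Indep (τ * s / 2) (fun j => π (edges t j)) := by
  refine (hS.indep t ht).fst h (hS.norm_snd_edges_le hcone ht) ?_
  rw [Fintype.card_fin]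
  nlinarith

lemma IsSelection.exists_affine_approx {n : ℕ} (hX : Module.finrank ℝ X = n) {τ m e : ℝ}
    {μ : Measure V} [IsFiniteMeasure μ]
    {E : Set V} {x : V} {s : ℝ} {S : Fin (n + 1) → Set V} (hS : IsSelection n τ m μ E x s S)
    (hτ : 0 < τ) (hm : 0 < m) (hs : 0 < s) (h : IsSplit π σ) (he : 4 * n * e ≤ τ)
    (hcone : ∀ y ∈ E ∩ closedBall x s, ‖σ (y - x)‖ ≤ e * s)
    (Z : Finset V) (hZ : ∀ z ∈ Z, z ∈ closedBall x (2 * s))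
    (hfin : ∑ z ∈ Z, scaleCurv n μ τ s z ≠ ∞) :
    ∃ t : Fin (n + 1) → V, (∀ j, t j ∈ S j) ∧ ∃ (Λ : X →ₗ[ℝ] V) (c : V),
      (∀ j, c + Λ (π (t j)) = σ (t j)) ∧
      ∀ z ∈ Z, ‖σ z - (c + Λ (π z))‖ ^ 2 ≤
        4 * apxConst n τ m * s ^ 2 * (∑ z ∈ Z, scaleCurv n μ τ s z).toReal := by
  obtain ⟨t, ht, hz⟩ := hS.exists_good_simplex hτ hm hs Z hZ hfin
  obtain ⟨Λ, hΛ, hΛn⟩ := exists_slope (σ := σ) hX (by positivity) (hS.indep_fst hs h he hcone ht)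
    (hS.norm_snd_edges_le hcone ht) (by nlinarith)
  refine ⟨t, ht, Λ, σ (t 0) - Λ (π (t 0)), fun j => ?_, fun z hzZ => ?_⟩
  · induction j using Fin.cases with
    | zero => simp
    | succ j =>
      have := hΛ j
      simp only [edges, map_sub] at this
      rw [sub_add_eq_add_sub, add_sub_assoc, this]; abel
  · obtain ⟨a, ha⟩ := hz z hzZ
    set v := z - t 0 - ∑ j, a j • edges t j with hv
    have e1 : σ z - (σ (t 0) - Λ (π (t 0)) + Λ (π z)) = σ v - Λ (π v) := by
      simp only [hv, map_sub, map_sum, map_smul, hΛ]; abel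
    have h1 : ‖σ v - Λ (π v)‖ ≤ 2 * ‖v‖ := by
      linarith [norm_sub_le (σ v) (Λ (π v)), hΛn (π v), h.norm_fst_le v, h.norm_snd_le v]
    rw [e1]
    calc ‖σ v - Λ (π v)‖ ^ 2 ≤ (2 * ‖v‖) ^ 2 := by gcongr
      _ = 4 * ‖v‖ ^ 2 := by ring
      _ ≤ _ := by linarith

/-- Values at `∑ w j • p j` of an affine map and of a weighted sum can be compared at the `p j`. -/
lemma norm_sum_sub_affine_le {X V : Type*} [NormedAddCommGroup V] [NormedSpace ℝ V]
    [AddCommGroup X] [Module ℝ X] {ι : Type*} [Fintype ι] {w : ι → ℝ} {p : ι → X} {v : ι → V}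
    {A e : ℝ} (hw : ∑ j, w j = 1) (hA : ∑ j, |w j| ≤ A) (Λ : X →ₗ[ℝ] V) (c : V) (he : 0 ≤ e)
    (h : ∀ j, ‖v j - (c + Λ (p j))‖ ≤ e) :
    ‖∑ j, w j • v j - (c + Λ (∑ j, w j • p j))‖ ≤ A * e := by
  have : ∑ j, w j • v j - (c + Λ (∑ j, w j • p j)) = ∑ j, w j • (v j - (c + Λ (p j))) := by
    simp only [smul_sub, smul_add, Finset.sum_sub_distrib, Finset.sum_add_distrib, ← Finset.sum_smul,
      hw, one_smul, map_sum, map_smul]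
  rw [this]
  calc _ ≤ ∑ j, ‖w j • (v j - (c + Λ (p j)))‖ := norm_sum_le _ _
    _ ≤ ∑ j, |w j| * e := by
      refine Finset.sum_le_sum fun j _ => ?_
      rw [norm_smul, Real.norm_eq_abs]
      gcongr
      exact h j
    _ = (∑ j, |w j|) * e := by rw [Finset.sum_mul]
    _ ≤ A * e := by gcongr

end Menger

namespace Menger

variable {V X : Type*} [NormedAddCommGroup V] [InnerProductSpace ℝ V] [FiniteDimensional ℝ V]
  [MeasurableSpace V] [BorelSpace V] [NormedAddCommGroup X] [InnerProductSpace ℝ X]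
  [FiniteDimensional ℝ X]

/-- A set `E` which, above the scale `h x` at each of its points `x`, is dense and lies in a
narrow cone around the kernel of `σ`, and which has small curvature. -/
structure Scene (n : ℕ) (μ : Measure V) (E : Set V) (π : V →ₗ[ℝ] X) (σ : V →ₗ[ℝ] V)
    (h : V → ℝ) (R α τ κ η : ℝ) : Prop where
  finrank_eq : Module.finrank ℝ X = n
  split : IsSplit π σ
  R_pos : 0 < R
  α_pos : 0 < α
  α_le : α ≤ 1 / 6
  τ_pos : 0 < τ
  κ_pos : 0 < κ
  η_pos : 0 < η
  α_le_τ : 4 * n * α ≤ τ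
  h_nonneg : ∀ x, 0 ≤ h x
  cone : ∀ x ∈ E, ∀ y ∈ E, h x / 10 < ‖y - x‖ → ‖σ (y - x)‖ ≤ α * ‖y - x‖
  selection : ∀ x ∈ E, ∀ s, h x < s → s ≤ R → ∃ S, IsSelection n τ κ μ E x s S
  curvature : ∀ z ∈ E, pointCurv n μ z ≤ ENNReal.ofReal η

/-- A representation of `p` by an affine combination of projections of points of `E`
near `p` at scale `s`. -/
structure IsNode {n : ℕ} (E : Set V) (π : V →ₗ[ℝ] X) (α A : ℝ) (p : X) (s : ℝ) (x : V)
    (t : Fin (n + 1) → V) (w : Fin (n + 1) → ℝ) : Prop where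
  mem : x ∈ E
  norm_le : ‖π x - p‖ ≤ α * s
  vertex_mem : ∀ j, t j ∈ E
  vertex_dist : ∀ j, ‖t j - x‖ ≤ s
  sum_eq : ∑ j, w j = 1
  combination : ∑ j, w j • π (t j) = p
  sum_abs_le : ∑ j, |w j| ≤ A

/-- There is a point of `E` over `p` with stopping scale small compared to `s`. -/
def Near (E : Set V) (π : V →ₗ[ℝ] X) (h : V → ℝ) (α : ℝ) (p : X) (s : ℝ) : Prop :=
  ∃ x ∈ E, ‖π x - p‖ ≤ α * s ∧ h x ≤ α * s

lemma IsNode.mono {n : ℕ} {E : Set V} {π : V →ₗ[ℝ] X} {α A : ℝ} {p : X}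
    {s s' : ℝ} {x : V} {t : Fin (n + 1) → V} {w : Fin (n + 1) → ℝ}
    (hN : IsNode E π α A p s x t w) (hα : 0 ≤ α) (hs : s ≤ s') : IsNode E π α A p s' x t w :=
  { hN with
    norm_le := hN.norm_le.trans (by gcongr)
    vertex_dist := fun j => (hN.vertex_dist j).trans hs }

namespace Scene

variable {n : ℕ} {μ : Measure V} [IsFiniteMeasure μ] {E : Set V} {π : V →ₗ[ℝ] X}
  {σ : V →ₗ[ℝ] V} {h : V → ℝ} {R α τ κ η : ℝ}

lemma norm_snd_le (H : Scene n μ E π σ h R α τ κ η) {x y : V} {s : ℝ} (hx : x ∈ E) (hy : y ∈ E)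
    (hh : h x ≤ α * s) (hs : ‖y - x‖ ≤ s) : ‖σ (y - x)‖ ≤ α * s := by
  have h0 := H.h_nonneg x
  by_cases hc : h x / 10 < ‖y - x‖
  · exact (H.cone x hx y hy hc).trans (mul_le_mul_of_nonneg_left hs H.α_pos.le)
  · exact (H.split.norm_snd_le _).trans (by linarith)

lemma norm_sub_le_of_fst (H : Scene n μ E π σ h R α τ κ η) {x y : V} {a : ℝ} (hx : x ∈ E) (hy : y ∈ E)
    (hh : h x ≤ a) (hs : 2 * ‖π (y - x)‖ ≤ a) : ‖y - x‖ ≤ a := by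
  have h0 := H.h_nonneg x
  by_cases hc : h x / 10 < ‖y - x‖
  · exact (H.split.norm_le_two_mul (by linarith [H.α_le]) (H.cone x hx y hy hc)).trans hs
  · linarith

lemma h_lt (H : Scene n μ E π σ h R α τ κ η) {x : V} {s : ℝ} (hs : 0 < s)
    (hh : h x ≤ α * s) : h x < s := by
  nlinarith [H.α_le, H.α_pos]

lemma sum_scaleCurv_le_card (H : Scene n μ E π σ h R α τ κ η) (s : ℝ) (Z : Finset V)
    (hZ : ∀ z ∈ Z, z ∈ E) : ∑ z ∈ Z, scaleCurv n μ τ s z ≤ Z.card * ENNReal.ofReal η := by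
  rw [← nsmul_eq_mul]
  exact Finset.sum_le_card_nsmul _ _ _ fun z hz =>
    (scaleCurv_le_pointCurv n μ τ s z).trans (H.curvature z (hZ z hz))

lemma exists_affine (H : Scene n μ E π σ h R α τ κ η) {x : V} {s : ℝ} (hx : x ∈ E)
    (hs : 0 < s) (hsR : s ≤ R) (hh : h x ≤ α * s) (Z : Finset V) (hZE : ∀ z ∈ Z, z ∈ E)
    (hZ : ∀ z ∈ Z, ‖z - x‖ ≤ 2 * s) :
    ∃ t : Fin (n + 1) → V, (∀ j, t j ∈ E ∧ ‖t j - x‖ ≤ s) ∧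
      Indep (τ * s / 2) (fun j => π (edges t j)) ∧ ∃ (Λ : X →ₗ[ℝ] V) (c : V),
      (∀ j, c + Λ (π (t j)) = σ (t j)) ∧
      ∀ z ∈ Z, ‖σ z - (c + Λ (π z))‖ ^ 2 ≤
        4 * apxConst n τ κ * s ^ 2 * (∑ z ∈ Z, scaleCurv n μ τ s z).toReal := by
  obtain ⟨S, hS⟩ := H.selection x hx s (H.h_lt hs hh) hsR
  have hcone : ∀ y ∈ E ∩ closedBall x s, ‖σ (y - x)‖ ≤ α * s := fun y hy =>
    H.norm_snd_le hx hy.1 hh (by simpa [dist_eq_norm] using hy.2)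
  obtain ⟨t, ht, Λ, c, h1, h2⟩ := hS.exists_affine_approx H.finrank_eq H.τ_pos H.κ_pos hs H.split
    H.α_le_τ hcone Z (fun z hz => by simpa [dist_eq_norm] using hZ z hz)
    (ne_top_of_le_ne_top (by finiteness) (H.sum_scaleCurv_le_card s Z hZE))
  exact ⟨t, fun j => ⟨(hS.subset j (ht j)).1, by simpa [dist_eq_norm] using (hS.subset j (ht j)).2⟩,
    hS.indep_fst hs H.split H.α_le_τ hcone ht, Λ, c, h1, h2⟩

lemma exists_node (H : Scene n μ E π σ h R α τ κ η) {p : X} {s : ℝ} (hs : 0 < s) (hsR : s ≤ R)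
    (hp : Near E π h α p s) : ∃ x, ∃ t : Fin (n + 1) → V, ∃ w,
      IsNode E π α (1 + 8 * n / τ) p s x t w := by
  obtain ⟨x, hx, hxp, hhx⟩ := hp
  obtain ⟨t, ht, hi, -⟩ := H.exists_affine hx hs hsR hhx ∅ (by simp) (by simp)
  have hτ := H.τ_pos
  obtain ⟨w, hw1, hw2, hw3⟩ := exists_weights H.finrank_eq (by positivity) hi p
  refine ⟨x, t, w, hx, hxp, fun j => (ht j).1, fun j => (ht j).2, hw1, hw2, hw3.trans ?_⟩
  have h1 : ‖p - π (t 0)‖ ≤ 2 * s := by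
    have : p - π (t 0) = -(π x - p) - π (t 0 - x) := by simp
    rw [this]
    have h2 := norm_sub_le (-(π x - p)) (π (t 0 - x))
    rw [norm_neg] at h2
    have h3 := (H.split.norm_fst_le (t 0 - x)).trans (ht 0).2
    have := H.α_le
    nlinarith
  have h2 : ‖p - π (t 0)‖ / (τ * s / 2) ≤ 4 / τ := by
    rw [div_le_div_iff₀ (by positivity) hτ]
    nlinarith
  have h3 : 2 * (n : ℝ) * (‖p - π (t 0)‖ / (τ * s / 2)) ≤ 2 * n * (4 / τ) := by gcongr
  have h4 : 2 * (n : ℝ) * (4 / τ) = 8 * n / τ := by ring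
  linarith

lemma vertex_dist_le (H : Scene n μ E π σ h R α τ κ η) {x : V} {s A : ℝ} (hx : x ∈ E)
    (hs : 0 < s) (hh : h x ≤ α * s) {p : X} {x' : V} {t : Fin (n + 1) → V}
    {w : Fin (n + 1) → ℝ} (hN : IsNode E π α A p s x' t w) (hp : ‖π x - p‖ ≤ 2 * α * s)
    (j : Fin (n + 1)) : ‖t j - x‖ ≤ 2 * s := by
  have h1 : ‖π (x' - x)‖ ≤ 3 * α * s := by
    have : π (x' - x) = (π x' - p) - (π x - p) := by simp
    rw [this]
    linarith [norm_sub_le (π x' - p) (π x - p), hN.norm_le]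
  have hα := H.α_le
  have h2 : ‖x' - x‖ ≤ s := H.norm_sub_le_of_fst hx hN.mem (H.h_lt hs hh).le (by nlinarith)
  have h3 := hN.vertex_dist j
  have : t j - x = (t j - x') + (x' - x) := by abel
  rw [this]
  linarith [norm_add_le (t j - x') (x' - x)]

lemma exists_nodes (H : Scene n μ E π σ h R α τ κ η) (M : ℕ) :
    ∃ (x : X → V) (t : X → Fin (n + 1) → V) (w : X → Fin (n + 1) → ℝ), ∀ p, ∀ k ≤ M,
      Near E π h α p (R * (1 / 2) ^ k) →
        IsNode E π α (1 + 8 * n / τ) p (R * (1 / 2) ^ k) (x p) (t p) (w p) := by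
  have hR := H.R_pos
  have : ∀ p, ∃ x, ∃ t : Fin (n + 1) → V, ∃ w, ∀ k ≤ M, Near E π h α p (R * (1 / 2) ^ k) →
        IsNode E π α (1 + 8 * n / τ) p (R * (1 / 2) ^ k) x t w := by
    intro p
    by_cases hp : ∃ k ≤ M, Near E π h α p (R * (1 / 2) ^ k)
    · obtain ⟨k, hkM, hk⟩ := hp
      have hg := Nat.findGreatest_spec (P := fun k => Near E π h α p (R * (1 / 2) ^ k)) hkM hk
      obtain ⟨x, t, w, hN⟩ := H.exists_node (by positivity)
        (mul_le_of_le_one_right hR.le (pow_le_one₀ (by norm_num) (by norm_num))) hg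
      refine ⟨x, t, w, fun j hj hnj => hN.mono H.α_pos.le ?_⟩
      have := Nat.le_findGreatest (P := fun k => Near E π h α p (R * (1 / 2) ^ k)) hj hnj
      gcongr ?_ * ?_
      exact pow_le_pow_of_le_one (by norm_num) (by norm_num) this
    · push Not at hp
      exact ⟨0, 0, 0, fun k hk hk' => (hp k hk hk').elim⟩
  choose x t w hN using this
  exact ⟨x, t, w, hN⟩

end Scene

end Menger

namespace Menger

lemma sum_image_le_sum {ι β : Type*} [Fintype ι] (g : ι → β) (F : β → ℝ≥0∞) :
    ∑ z ∈ Finset.univ.image g, F z ≤ ∑ i, F (g i) := by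
  rw [Finset.sum_comp F g]
  refine Finset.sum_le_sum fun z hz => ?_
  obtain ⟨i, -, rfl⟩ := Finset.mem_image.1 hz
  have : 1 ≤ (Finset.univ.filter fun a => g a = g i).card :=
    Finset.card_pos.2 ⟨i, by simp⟩
  rw [nsmul_eq_mul]
  exact le_mul_of_one_le_left zero_le (by exact_mod_cast this)

namespace Scene

variable {V X : Type*} [NormedAddCommGroup V] [InnerProductSpace ℝ V] [FiniteDimensional ℝ V]
  [MeasurableSpace V] [BorelSpace V] [NormedAddCommGroup X] [InnerProductSpace ℝ X]
  [FiniteDimensional ℝ X]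
  {n : ℕ} {μ : Measure V} [IsFiniteMeasure μ] {E : Set V} {π : V →ₗ[ℝ] X}
  {σ : V →ₗ[ℝ] V} {h : V → ℝ} {R α τ κ η : ℝ}

lemma exists_affine_tuples (H : Scene n μ E π σ h R α τ κ η) {x : V} {s : ℝ} (hx : x ∈ E)
    (hs : 0 < s) (hsR : s ≤ R) (hh : h x ≤ α * s) {ι : Type*} [Fintype ι]
    (T : ι → Fin (n + 1) → V) (hTE : ∀ i j, T i j ∈ E) (hT : ∀ i j, ‖T i j - x‖ ≤ 2 * s) :
    ∃ (Λ : X →ₗ[ℝ] V) (c : V), ∀ i j, ‖σ (T i j) - (c + Λ (π (T i j)))‖ ^ 2 ≤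
        4 * apxConst n τ κ * s ^ 2 * (∑ i, ∑ j, scaleCurv n μ τ s (T i j)).toReal := by
  let g : ι × Fin (n + 1) → V := fun q => T q.1 q.2
  obtain ⟨t, -, -, Λ, c, -, h2⟩ := H.exists_affine hx hs hsR hh (Finset.univ.image g)
    (Finset.forall_mem_image.2 fun q _ => hTE q.1 q.2)
    (Finset.forall_mem_image.2 fun q _ => hT q.1 q.2)
  refine ⟨Λ, c, fun i j => (h2 _ (Finset.mem_image_of_mem g (Finset.mem_univ (i, j)))).trans ?_⟩
  have hp := apxConst_pos n H.τ_pos H.κ_pos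
  gcongr
  · rw [← Fintype.sum_prod_type' (f := fun i j => scaleCurv n μ τ s (T i j))]
    refine ne_top_of_le_ne_top ?_ (Finset.sum_le_sum fun q _ =>
      (scaleCurv_le_pointCurv n μ τ s (T q.1 q.2)).trans (H.curvature _ (hTE q.1 q.2)))
    simp only [Finset.sum_const, nsmul_eq_mul]
    finiteness
  · rw [← Fintype.sum_prod_type' (f := fun i j => scaleCurv n μ τ s (T i j))]
    exact sum_image_le_sum g _

lemma toReal_sum_scaleCurv_le (H : Scene n μ E π σ h R α τ κ η) (s : ℝ) {ι : Type*} [Fintype ι]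
    (T : ι → Fin (n + 1) → V) (hTE : ∀ i j, T i j ∈ E) :
    (∑ i, ∑ j, scaleCurv n μ τ s (T i j)).toReal ≤ Fintype.card ι * (n + 1) * η := by
  have h1 : ∑ i, ∑ j, scaleCurv n μ τ s (T i j) ≤
      ∑ _i : ι, ∑ _j : Fin (n + 1), ENNReal.ofReal η :=
    Finset.sum_le_sum fun i _ => Finset.sum_le_sum fun j _ =>
      (scaleCurv_le_pointCurv n μ τ s (T i j)).trans (H.curvature _ (hTE i j))
  refine (ENNReal.toReal_mono ?_ h1).trans ?_
  · simp only [Finset.sum_const, nsmul_eq_mul]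
    finiteness
  · rw [Finset.sum_const, Finset.sum_const]
    simp [ENNReal.toReal_add, ENNReal.toReal_ofReal H.η_pos.le, mul_assoc]

lemma second_difference (H : Scene n μ E π σ h R α τ κ η) {x : V} {s A : ℝ} (hx : x ∈ E)
    (hs : 0 < s) (hsR : s ≤ R) (hh : h x ≤ α * s) {p : Fin 3 → X} {y : Fin 3 → V}
    {t : Fin 3 → Fin (n + 1) → V} {w : Fin 3 → Fin (n + 1) → ℝ}
    (hN : ∀ i, IsNode E π α A (p i) s (y i) (t i) (w i)) (hp : ∀ i, ‖π x - p i‖ ≤ 2 * α * s)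
    (hmid : p 0 + p 2 = p 1 + p 1) :
    ‖(∑ j, w 1 j • σ (t 1 j) - ∑ j, w 0 j • σ (t 0 j)) -
      (∑ j, w 2 j • σ (t 2 j) - ∑ j, w 1 j • σ (t 1 j))‖ ^ 2 ≤
      64 * A ^ 2 * apxConst n τ κ * s ^ 2 * (∑ i, ∑ j, scaleCurv n μ τ s (t i j)).toReal := by
  obtain ⟨Λ, c, hΛ⟩ := H.exists_affine_tuples hx hs hsR hh t (fun i j => (hN i).vertex_mem j)
    (fun i j => H.vertex_dist_le hx hs hh (hN i) (hp i) j)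
  set Q := 4 * apxConst n τ κ * s ^ 2 * (∑ i, ∑ j, scaleCurv n μ τ s (t i j)).toReal
  have hQ : 0 ≤ Q := (sq_nonneg _).trans (hΛ 0 0)
  have key : ∀ i, ‖∑ j, w i j • σ (t i j) - (c + Λ (p i))‖ ≤ A * √Q := by
    intro i
    have := norm_sum_sub_affine_le (hN i).sum_eq (hN i).sum_abs_le Λ c (Real.sqrt_nonneg Q)
      (fun j => Real.le_sqrt_of_sq_le (hΛ i j))
    rwa [(hN i).combination] at this
  have hA : 0 ≤ A := (Finset.sum_nonneg fun j _ => abs_nonneg _).trans (hN 0).sum_abs_le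
  have hm : Λ (p 0) + Λ (p 2) = Λ (p 1) + Λ (p 1) := by rw [← map_add, hmid, map_add]
  have k0 := key 0
  generalize (∑ j, w 0 j • σ (t 0 j)) = f0 at k0 ⊢
  have e : (∑ j, w 1 j • σ (t 1 j) - f0) - (∑ j, w 2 j • σ (t 2 j) - ∑ j, w 1 j • σ (t 1 j)) =
      (∑ j, w 1 j • σ (t 1 j) - (c + Λ (p 1))) + (∑ j, w 1 j • σ (t 1 j) - (c + Λ (p 1)))
      - (f0 - (c + Λ (p 0))) - (∑ j, w 2 j • σ (t 2 j) - (c + Λ (p 2))) := by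
    have : Λ (p 2) = Λ (p 1) + Λ (p 1) - Λ (p 0) := by rw [← hm]; abel
    rw [this]; abel
  have hb : ‖(∑ j, w 1 j • σ (t 1 j) - f0) -
      (∑ j, w 2 j • σ (t 2 j) - ∑ j, w 1 j • σ (t 1 j))‖ ≤ 4 * A * √Q := by
    rw [e]
    refine (norm_sub_le _ _).trans ?_
    have h1 := norm_sub_le ((∑ j, w 1 j • σ (t 1 j) - (c + Λ (p 1))) +
      (∑ j, w 1 j • σ (t 1 j) - (c + Λ (p 1)))) (f0 - (c + Λ (p 0)))
    have h2 := norm_add_le (∑ j, w 1 j • σ (t 1 j) - (c + Λ (p 1)))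
      (∑ j, w 1 j • σ (t 1 j) - (c + Λ (p 1)))
    linarith [key 1, key 2, k0]
  calc _ ≤ (4 * A * √Q) ^ 2 := by gcongr
    _ = 16 * A ^ 2 * Q := by rw [mul_pow, Real.sq_sqrt hQ]; ring
    _ = _ := by ring

/-- The slope of the plane spanned by `t` is close to the difference quotients between nodes. -/
lemma norm_slope_sub_le (H : Scene n μ E π σ h R α τ κ η) {x : V} {s A ℓ : ℝ} (hx : x ∈ E)
    (hs : 0 < s) (hsR : s ≤ R) (hh : h x ≤ α * s) (hℓ : 0 < ℓ)
    {t : Fin (n + 1) → V} (ht : ∀ j, t j ∈ E ∧ ‖t j - x‖ ≤ s)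
    (hi : Indep (τ * s / 2) (fun j => π (edges t j))) {Λ : X →ₗ[ℝ] V} {c : V}
    (hΛ : ∀ j, c + Λ (π (t j)) = σ (t j)) {e p₁ p₂ : X} (he : ‖e‖ = 1) (hp : p₂ = p₁ + ℓ • e)
    {y₁ y₂ : V} {t₁ t₂ : Fin (n + 1) → V} {w₁ w₂ : Fin (n + 1) → ℝ}
    (hN₁ : IsNode E π α A p₁ s y₁ t₁ w₁) (hN₂ : IsNode E π α A p₂ s y₂ t₂ w₂)
    (hp₁ : ‖π x - p₁‖ ≤ 2 * α * s) (hp₂ : ‖π x - p₂‖ ≤ 2 * α * s) :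
    ‖Λ e‖ ≤ ℓ⁻¹ * ‖∑ j, w₂ j • σ (t₂ j) - ∑ j, w₁ j • σ (t₁ j)‖ +
      (4 * n / (τ * s) + 2 * A / ℓ) * (s * √(4 * apxConst n τ κ * (3 * (n + 1) * η))) := by
  have hτ := H.τ_pos
  obtain ⟨Λ', c', hΛ'⟩ := H.exists_affine_tuples hx hs hsR hh ![t, t₁, t₂]
    (by
      intro i j; fin_cases i
      · exact (ht j).1
      · exact hN₁.vertex_mem j
      · exact hN₂.vertex_mem j)
    (by
      intro i j; fin_cases i
      · exact (ht j).2.trans (by linarith)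
      · exact H.vertex_dist_le hx hs hh hN₁ hp₁ j
      · exact H.vertex_dist_le hx hs hh hN₂ hp₂ j)
  have hsum := H.toReal_sum_scaleCurv_le s ![t, t₁, t₂]
    (by
      intro i j; fin_cases i
      · exact (ht j).1
      · exact hN₁.vertex_mem j
      · exact hN₂.vertex_mem j)
  have hap := apxConst_pos n H.τ_pos H.κ_pos
  have hη := H.η_pos
  set Q := s * √(4 * apxConst n τ κ * (3 * (n + 1) * η)) with hQdef
  have hQ0 : 0 ≤ Q := by positivity
  have hQ : ∀ i j, ‖σ ((![t, t₁, t₂] : Fin 3 → Fin (n + 1) → V) i j) -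
      (c' + Λ' (π ((![t, t₁, t₂] : Fin 3 → Fin (n + 1) → V) i j)))‖ ≤ Q := by
    intro i j
    refine le_of_sq_le_sq ((hΛ' i j).trans ?_) hQ0
    rw [hQdef, mul_pow, Real.sq_sqrt (by positivity)]
    calc _ ≤ 4 * apxConst n τ κ * s ^ 2 * (3 * (n + 1) * η) :=
        mul_le_mul_of_nonneg_left (hsum.trans (by norm_num)) (by positivity)
      _ = _ := by ring
  have q0 : ∀ j, ‖σ (t j) - (c' + Λ' (π (t j)))‖ ≤ Q := hQ 0
  have q1 : ∀ j, ‖σ (t₁ j) - (c' + Λ' (π (t₁ j)))‖ ≤ Q := hQ 1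
  have q2 : ∀ j, ‖σ (t₂ j) - (c' + Λ' (π (t₂ j)))‖ ≤ Q := hQ 2
  have v1 := norm_sum_sub_affine_le hN₁.sum_eq hN₁.sum_abs_le Λ' c' hQ0 q1
  have v2 := norm_sum_sub_affine_le hN₂.sum_eq hN₂.sum_abs_le Λ' c' hQ0 q2
  rw [hN₁.combination] at v1
  rw [hN₂.combination] at v2
  set f₁ := ∑ j, w₁ j • σ (t₁ j)
  set f₂ := ∑ j, w₂ j • σ (t₂ j)
  have b1 : ‖ℓ • Λ' e‖ ≤ ‖f₂ - f₁‖ + 2 * A * Q := by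
    have : ℓ • Λ' e = (f₂ - f₁) + (f₁ - (c' + Λ' p₁)) - (f₂ - (c' + Λ' p₂)) := by
      rw [hp, map_add, map_smul]; abel
    rw [this]
    linarith [norm_sub_le ((f₂ - f₁) + (f₁ - (c' + Λ' p₁))) (f₂ - (c' + Λ' p₂)),
      norm_add_le (f₂ - f₁) (f₁ - (c' + Λ' p₁))]
  have b1' : ‖Λ' e‖ ≤ ℓ⁻¹ * ‖f₂ - f₁‖ + 2 * A / ℓ * Q := by
    rw [norm_smul, Real.norm_of_nonneg hℓ.le] at b1
    have : ‖Λ' e‖ ≤ (‖f₂ - f₁‖ + 2 * A * Q) / ℓ := by rw [le_div_iff₀ hℓ]; linarith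
    refine this.trans (le_of_eq ?_)
    ring
  obtain ⟨b, hb⟩ := hi.exists_coeff H.finrank_eq (by positivity) e
  have hb' : ∀ j, |b j| ≤ 2 / (τ * s) := by
    intro j
    have := hi b j
    rw [hb, he] at this
    rw [le_div_iff₀ (by positivity)]
    linarith
  have b2 : ‖Λ e - Λ' e‖ ≤ 4 * n / (τ * s) * Q := by
    rw [← hb]
    simp only [map_sum, map_smul, ← Finset.sum_sub_distrib, ← smul_sub]
    calc _ ≤ ∑ j, ‖b j • (Λ (π (edges t j)) - Λ' (π (edges t j)))‖ := norm_sum_le _ _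
      _ ≤ ∑ _j : Fin n, 2 / (τ * s) * (2 * Q) := by
        refine Finset.sum_le_sum fun j _ => ?_
        rw [norm_smul, Real.norm_eq_abs]
        gcongr
        · exact hb' j
        · have : Λ (π (edges t j)) - Λ' (π (edges t j)) =
              (σ (t j.succ) - (c' + Λ' (π (t j.succ)))) - (σ (t 0) - (c' + Λ' (π (t 0)))) := by
            rw [← hΛ, ← hΛ 0]; simp only [edges, map_sub]; abel
          rw [this]
          linarith [norm_sub_le (σ (t j.succ) - (c' + Λ' (π (t j.succ))))
            (σ (t 0) - (c' + Λ' (π (t 0)))), q0 j.succ, q0 0]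
      _ = _ := by simp; ring
  have : Λ e = (Λ e - Λ' e) + Λ' e := by abel
  rw [this, add_mul]
  linarith [norm_add_le (Λ e - Λ' e) (Λ' e)]

end Scene

lemma Scene.exists_direction {V : Type*} [NormedAddCommGroup V] [InnerProductSpace ℝ V]
    [FiniteDimensional ℝ V] [MeasurableSpace V] [BorelSpace V] {n : ℕ} {μ : Measure V}
    [IsFiniteMeasure μ] {E : Set V} {π : V →ₗ[ℝ] EuclideanSpace ℝ (Fin n)}
    {σ : V →ₗ[ℝ] V} {h : V → ℝ} {R α τ κ η : ℝ} (H : Scene n μ E π σ h R α τ κ η)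
    {x y : V} {s : ℝ} (hx : x ∈ E) (hy : y ∈ E)
    (hs : 0 < s) (hsR : s ≤ R) (hh : h x ≤ α * s) (hxy : ‖y - x‖ ≤ 2 * s)
    (hσ : α * ‖y - x‖ < ‖σ (y - x)‖)
    (hη : 8 * apxConst n τ κ * s ^ 2 * η ≤ (α * ‖y - x‖ / 4) ^ 2) :
    ∃ t : Fin (n + 1) → V, (∀ j, t j ∈ E ∧ ‖t j - x‖ ≤ s) ∧
      Indep (τ * s / 2) (fun j => π (edges t j)) ∧
      ∃ (Λ : EuclideanSpace ℝ (Fin n) →ₗ[ℝ] V) (c : V), (∀ j, c + Λ (π (t j)) = σ (t j)) ∧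
      ∃ d : Fin n, α / (2 * n) ≤ ‖Λ (EuclideanSpace.single d 1)‖ := by
  obtain ⟨t, ht, hi, Λ, c, hΛ, hz⟩ := H.exists_affine hx hs hsR hh {x, y}
    (by simp [hx, hy]) (by simp [hxy, hs.le])
  refine ⟨t, ht, hi, Λ, c, hΛ, ?_⟩
  have hap := apxConst_pos n H.τ_pos H.κ_pos
  have hα := H.α_pos
  have hsum : (∑ z ∈ ({x, y} : Finset V), scaleCurv n μ τ s z).toReal ≤ 2 * η := by
    have h1 : ∑ z ∈ ({x, y} : Finset V), scaleCurv n μ τ s z ≤ 2 * ENNReal.ofReal η := by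
      refine (H.sum_scaleCurv_le_card s {x, y} (by simp [hx, hy])).trans ?_
      gcongr
      exact_mod_cast Finset.card_le_two
    refine (ENNReal.toReal_mono (by finiteness) h1).trans ?_
    simp [ENNReal.toReal_ofReal H.η_pos.le]
  have herr : ∀ z ∈ ({x, y} : Finset V), ‖σ z - (c + Λ (π z))‖ ≤ α * ‖y - x‖ / 4 := by
    intro z hzZ
    refine le_of_sq_le_sq ((hz z hzZ).trans (le_trans ?_ hη)) (by positivity)
    calc _ ≤ 4 * apxConst n τ κ * s ^ 2 * (2 * η) := by gcongr
      _ = _ := by ring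
  have e1 := herr x (by simp)
  have e2 := herr y (by simp)
  have h1 : α / 2 * ‖y - x‖ < ‖Λ (π (y - x))‖ := by
    have : σ (y - x) = Λ (π (y - x)) + (σ y - (c + Λ (π y))) - (σ x - (c + Λ (π x))) := by
      simp only [map_sub]; abel
    rw [this] at hσ
    linarith [norm_sub_le (Λ (π (y - x)) + (σ y - (c + Λ (π y)))) (σ x - (c + Λ (π x))),
      norm_add_le (Λ (π (y - x))) (σ y - (c + Λ (π y)))]
  by_contra! hcon
  set q := π (y - x) with hq
  have hqn : ‖q‖ ≤ ‖y - x‖ := H.split.norm_fst_le _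
  have hdec : q = ∑ d, q d • EuclideanSpace.single d (1 : ℝ) := by
    ext j; simp [Pi.single_apply]
  have h2 : ‖Λ q‖ ≤ α / 2 * ‖q‖ := by
    conv_lhs => rw [hdec]
    simp only [map_sum, map_smul]
    calc _ ≤ ∑ d, ‖q d • Λ (EuclideanSpace.single d 1)‖ := norm_sum_le _ _
      _ ≤ ∑ _d : Fin n, ‖q‖ * (α / (2 * n)) := by
        refine Finset.sum_le_sum fun d _ => ?_
        rw [norm_smul]
        gcongr
        · exact PiLp.norm_apply_le q d
        · exact (hcon d).le
      _ = n * (‖q‖ * (α / (2 * n))) := by simp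
      _ ≤ _ := by
        rcases Nat.eq_zero_or_pos n with rfl | hn
        · simp; positivity
        · have : (0 : ℝ) < n := by exact_mod_cast hn
          apply le_of_eq; field_simp
  nlinarith

end Menger

namespace Menger

section Dyadic

variable {T : Type*} [AddCommGroup T]

/-- The average of `φ` over the `2 ^ r` consecutive translates of `v` by multiples of `e`. -/
def dyadicAvg (φ : T → ℝ≥0∞) (e : T) : ℕ → T → ℝ≥0∞
  | 0, v => φ v
  | r + 1, v => (dyadicAvg φ e r v + dyadicAvg φ e r (v + 2 ^ r • e)) / 2

/-- The sum of the averages of `q` over the dyadic subintervals of an interval. -/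
def dyadicSum (q : ℕ → T → ℝ≥0∞) (e : T) : ℕ → T → ℝ≥0∞
  | 0, _ => 0
  | r + 1, v => q (r + 1) v + (dyadicSum q e r v + dyadicSum q e r (v + 2 ^ r • e)) / 2

lemma tsum_half_add_translate (g : T → ℝ≥0∞) (a : T) :
    ∑' v, (g v + g (v + a)) / 2 = ∑' v, g v := by
  simp only [div_eq_mul_inv]
  have h : ∑' v, g (v + a) = ∑' v, g v := (Equiv.addRight a).tsum_eq g
  rw [ENNReal.tsum_mul_right, ENNReal.tsum_add, h]
  rw [← two_mul, mul_comm, ← mul_assoc, ENNReal.inv_mul_cancel (by simp) (by simp), one_mul]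

lemma tsum_dyadicAvg (φ : T → ℝ≥0∞) (e : T) (r : ℕ) :
    ∑' v, dyadicAvg φ e r v = ∑' v, φ v := by
  induction r with
  | zero => rfl
  | succ r ih => simp only [dyadicAvg]; rw [tsum_half_add_translate, ih]

lemma tsum_dyadicSum (q : ℕ → T → ℝ≥0∞) (e : T) (r : ℕ) :
    ∑' v, dyadicSum q e r v = ∑ k ∈ Finset.range r, ∑' v, q (k + 1) v := by
  induction r with
  | zero => simp [dyadicSum]
  | succ r ih =>
    simp only [dyadicSum]
    rw [ENNReal.tsum_add, tsum_half_add_translate, ih, Finset.sum_range_succ, add_comm]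

lemma dyadicAvg_eq_zero {φ : T → ℝ≥0∞} {e : T} (r : ℕ) (v : T)
    (h : ∀ j < 2 ^ r, φ (v + j • e) = 0) : dyadicAvg φ e r v = 0 := by
  induction r generalizing v with
  | zero => simpa [dyadicAvg] using h 0 (by simp)
  | succ r ih =>
    have h1 := ih v fun j hj => h j (hj.trans (by rw [pow_succ]; lia))
    have h2 := ih (v + 2 ^ r • e) fun j hj => by
      rw [add_assoc, ← add_smul]; exact h _ (by rw [pow_succ]; lia)
    simp [dyadicAvg, h1, h2]

lemma dyadicAvg_le_const {φ : T → ℝ≥0∞} {e : T} {M : ℝ≥0∞} (h : ∀ v, φ v ≤ M) (r : ℕ) (v : T) :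
    dyadicAvg φ e r v ≤ M := by
  induction r generalizing v with
  | zero => exact h v
  | succ r ih =>
    calc _ ≤ (M + M) / 2 := ENNReal.div_le_div_right (add_le_add (ih _) (ih _)) _
      _ = M := by rw [ENNReal.add_div, ENNReal.add_halves]

variable {V : Type*} [NormedAddCommGroup V] [InnerProductSpace ℝ V]

lemma half_add_sq_norm (a b : V) : (‖a‖ ^ 2 + ‖b‖ ^ 2) / 2 =
    ‖(1 / 2 : ℝ) • (a + b)‖ ^ 2 + ‖(1 / 2 : ℝ) • (a - b)‖ ^ 2 := by
  have := parallelogram_law_with_norm ℝ a b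
  rw [norm_smul, norm_smul, mul_pow, mul_pow]
  norm_num
  nlinarith

lemma dyadicAvg_le_add {φ : T → ℝ≥0∞} {e : T} {q : ℕ → T → ℝ≥0∞} {G : ℕ → T → V}
    (hG : ∀ r v, G (r + 1) v = (1 / 2 : ℝ) • (G r v + G r (v + 2 ^ r • e)))
    {P : ℕ → T → Prop}
    (hP : ∀ r v, P r v → dyadicAvg φ e r v = 0 ∨
      dyadicAvg φ e r v ≤ ENNReal.ofReal (‖G r v‖ ^ 2) ∨
      ∃ r', r = r' + 1 ∧ P r' v ∧ P r' (v + 2 ^ r' • e) ∧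
        ENNReal.ofReal (‖(1 / 2 : ℝ) • (G r' v - G r' (v + 2 ^ r' • e))‖ ^ 2) ≤ q r v)
    (r : ℕ) (v : T) (h : P r v) :
    dyadicAvg φ e r v ≤ ENNReal.ofReal (‖G r v‖ ^ 2) + dyadicSum q e r v := by
  induction r generalizing v with
  | zero =>
    rcases hP 0 v h with h0 | h0 | ⟨r', h0, -⟩
    · rw [h0]; exact zero_le
    · exact h0.trans le_self_add
    · simp at h0
  | succ r ih =>
    rcases hP (r + 1) v h with h0 | h0 | ⟨r', h0, h1, h2, h3⟩
    · rw [h0]; exact zero_le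
    · exact h0.trans le_self_add
    · obtain rfl : r = r' := by lia
      have i1 := ih _ h1
      have i2 := ih _ h2
      simp only [dyadicAvg, dyadicSum]
      set g1 := G r v
      set g2 := G r (v + 2 ^ r • e)
      have hsq : (ENNReal.ofReal (‖g1‖ ^ 2) + ENNReal.ofReal (‖g2‖ ^ 2)) / 2 =
          ENNReal.ofReal (‖G (r + 1) v‖ ^ 2) +
            ENNReal.ofReal (‖(1 / 2 : ℝ) • (g1 - g2)‖ ^ 2) := by
        rw [← ENNReal.ofReal_add (by positivity) (by positivity),
          ← ENNReal.ofReal_add (by positivity) (by positivity), hG, ← half_add_sq_norm,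
          ENNReal.ofReal_div_of_pos (by norm_num), ENNReal.ofReal_ofNat]
      calc _ ≤ ((ENNReal.ofReal (‖g1‖ ^ 2) + dyadicSum q e r v) +
            (ENNReal.ofReal (‖g2‖ ^ 2) + dyadicSum q e r (v + 2 ^ r • e))) / 2 :=
            ENNReal.div_le_div_right (add_le_add i1 i2) _
        _ = (ENNReal.ofReal (‖g1‖ ^ 2) + ENNReal.ofReal (‖g2‖ ^ 2)) / 2 +
            (dyadicSum q e r v + dyadicSum q e r (v + 2 ^ r • e)) / 2 := by
            rw [← ENNReal.add_div]; congr 1; abel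
        _ ≤ (ENNReal.ofReal (‖G (r + 1) v‖ ^ 2) + q (r + 1) v) +
            (dyadicSum q e r v + dyadicSum q e r (v + 2 ^ r • e)) / 2 := by
            rw [hsq]; gcongr
        _ = _ := by rw [add_assoc]

end Dyadic

section Lattice

variable {n : ℕ}

/-- The points of the lattice with mesh `ω`. -/
def latticePoint (ω : ℝ) (v : Fin n → ℤ) : EuclideanSpace ℝ (Fin n) :=
  WithLp.toLp 2 fun j => ω * v j

lemma latticePoint_add_nsmul_single (ω : ℝ) (v : Fin n → ℤ) (d : Fin n) (k : ℕ) :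
    latticePoint ω (v + k • Pi.single d 1) =
      latticePoint ω v + (k * ω) • EuclideanSpace.single d (1 : ℝ) := by
  ext j
  by_cases h : j = d
  · subst h; simp [latticePoint]; ring
  · simp [latticePoint, h]

lemma euclidean_norm_le_sum (q : EuclideanSpace ℝ (Fin n)) : ‖q‖ ≤ ∑ j, |q j| := by
  have hdec : q = ∑ d, q d • EuclideanSpace.single d (1 : ℝ) := by
    ext j; simp [Pi.single_apply]
  conv_lhs => rw [hdec]
  refine (norm_sum_le _ _).trans (le_of_eq ?_)
  simp [norm_smul]

lemma exists_lattice_superset {ω ρ : ℝ} (hω : 0 < ω) (hρ : 0 ≤ ρ)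
    (q : EuclideanSpace ℝ (Fin n)) : ∃ F : Finset (Fin n → ℤ),
      (∀ v, ‖latticePoint ω v - q‖ ≤ ρ → v ∈ F) ∧ (F.card : ℝ) ≤ (2 * ρ / ω + 1) ^ n := by
  refine ⟨Fintype.piFinset fun j => Finset.Icc ⌈(q j - ρ) / ω⌉ ⌊(q j + ρ) / ω⌋,
    fun v hv => ?_, ?_⟩
  · rw [Fintype.mem_piFinset]
    intro j
    have h1 := (PiLp.norm_apply_le (latticePoint ω v - q) j).trans hv
    simp only [PiLp.sub_apply, latticePoint, Real.norm_eq_abs] at h1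
    rw [abs_le] at h1
    rw [Finset.mem_Icc, Int.ceil_le, Int.le_floor, div_le_iff₀ hω, le_div_iff₀ hω]
    constructor <;> linarith
  · rw [Fintype.card_piFinset]
    push_cast
    calc _ ≤ ∏ _j : Fin n, (2 * ρ / ω + 1) := by
          refine Finset.prod_le_prod (fun _ _ => Nat.cast_nonneg _) fun j _ => ?_
          rw [Int.card_Icc]
          have h1 := Int.le_ceil ((q j - ρ) / ω)
          have h2 := Int.floor_le ((q j + ρ) / ω)
          have h3 : (q j + ρ) / ω - (q j - ρ) / ω = 2 * ρ / ω := by ring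
          have h0 : 0 ≤ 2 * ρ / ω := by positivity
          have : (((⌊(q j + ρ) / ω⌋ + 1 - ⌈(q j - ρ) / ω⌉).toNat : ℤ) : ℝ) ≤ 2 * ρ / ω + 1 := by
            rw [Int.toNat_eq_max]
            push_cast
            exact max_le (by linarith) (by linarith)
          exact_mod_cast this
      _ = _ := by simp

lemma exists_lattice_subset (hn : 1 ≤ n) {ω ρ : ℝ} (hω : 0 < ω) (hρ : n * ω ≤ ρ)
    (q : EuclideanSpace ℝ (Fin n)) : ∃ F : Finset (Fin n → ℤ),
      (∀ v ∈ F, ‖latticePoint ω v - q‖ ≤ ρ) ∧ (ρ / (n * ω)) ^ n ≤ (F.card : ℝ) := by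
  have hn0 : (0 : ℝ) < n := by exact_mod_cast hn
  refine ⟨Fintype.piFinset fun j => Finset.Icc ⌈(q j - ρ / n) / ω⌉ ⌊(q j + ρ / n) / ω⌋,
    fun v hv => ?_, ?_⟩
  · rw [Fintype.mem_piFinset] at hv
    refine (euclidean_norm_le_sum _).trans ?_
    calc _ ≤ ∑ _j : Fin n, ρ / n := by
          refine Finset.sum_le_sum fun j _ => ?_
          have := hv j
          rw [Finset.mem_Icc, Int.ceil_le, Int.le_floor, div_le_iff₀ hω, le_div_iff₀ hω] at this
          simp only [PiLp.sub_apply, latticePoint]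
          rw [abs_le]
          constructor <;> linarith
      _ = ρ := by simp; field_simp
  · rw [Fintype.card_piFinset]
    push_cast
    calc (ρ / (n * ω)) ^ n = ∏ _j : Fin n, (ρ / (n * ω)) := by
            rw [Finset.prod_const, Finset.card_univ, Fintype.card_fin]
      _ ≤ _ := by
          have hρ0 : 0 < ρ := lt_of_lt_of_le (by positivity) hρ
          refine Finset.prod_le_prod (fun _ _ => by positivity) fun j _ => ?_
          rw [Int.card_Icc]
          have h1 := Int.ceil_lt_add_one ((q j - ρ / n) / ω)
          have h2 := Int.lt_floor_add_one ((q j + ρ / n) / ω)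
          have h3 : (q j + ρ / n) / ω - (q j - ρ / n) / ω = 2 * (ρ / (n * ω)) := by
            field_simp; ring
          have h0 : 1 ≤ ρ / (n * ω) := by rw [le_div_iff₀ (by positivity)]; linarith
          have h4 := Int.self_le_toNat (⌊(q j + ρ / n) / ω⌋ + 1 - ⌈(q j - ρ / n) / ω⌉)
          have h5 : ((⌊(q j + ρ / n) / ω⌋ + 1 - ⌈(q j - ρ / n) / ω⌉ : ℤ) : ℝ) ≤
            (((⌊(q j + ρ / n) / ω⌋ + 1 - ⌈(q j - ρ / n) / ω⌉).toNat : ℤ) : ℝ) := by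
            exact_mod_cast h4
          push_cast at h5
          linarith

end Lattice

end Menger

namespace Menger

lemma exists_level {a b : ℝ} (ha : 0 < a) (hb : 0 < b) (hab : 4 * a ≤ b) :
    ∃ k : ℕ, 2 * a ≤ b * (1 / 2) ^ (k + 1) ∧ b * (1 / 2) ^ k < 8 * a := by
  obtain ⟨k, h1, h2⟩ := exists_nat_pow_near_of_lt_one (x := 4 * a / b) (y := 1 / 2)
    (by positivity) (by rw [div_le_one hb]; exact hab) (by norm_num) (by norm_num)
  refine ⟨k, ?_, ?_⟩
  · rw [div_le_iff₀ hb] at h2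
    rw [pow_succ]; linarith
  · rw [lt_div_iff₀ hb, pow_succ] at h1
    linarith

lemma Near.mono {V X : Type*} [NormedAddCommGroup V] [InnerProductSpace ℝ V]
    [NormedAddCommGroup X] [InnerProductSpace ℝ X] {E : Set V} {π : V →ₗ[ℝ] X} {h : V → ℝ}
    {α : ℝ} {p : X} {s s' : ℝ} (hp : Near E π h α p s) (hα : 0 ≤ α) (hs : s ≤ s') :
    Near E π h α p s' := by
  obtain ⟨x, hx, h1, h2⟩ := hp
  exact ⟨x, hx, h1.trans (by gcongr), h2.trans (by gcongr)⟩

namespace Scene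

variable {V : Type*} [NormedAddCommGroup V] [InnerProductSpace ℝ V]
    [FiniteDimensional ℝ V] [MeasurableSpace V] [BorelSpace V] {n : ℕ} {μ : Measure V}
    [IsFiniteMeasure μ] {E : Set V} {π : V →ₗ[ℝ] EuclideanSpace ℝ (Fin n)}
    {σ : V →ₗ[ℝ] V} {h : V → ℝ} {R α τ κ η : ℝ}

/-- In direction `d`, all difference quotients between nodes near `x` at scale `s` are steep. -/
def SteepAt (_H : Scene n μ E π σ h R α τ κ η) (A s : ℝ) (x : V) (d : Fin n) : Prop :=
  ∀ (p : EuclideanSpace ℝ (Fin n)) (y₁ y₂ : V) (t₁ t₂ : Fin (n + 1) → V)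
    (w₁ w₂ : Fin (n + 1) → ℝ), IsNode E π α A p s y₁ t₁ w₁ →
    IsNode E π α A (p + (α * s / 4) • EuclideanSpace.single d (1 : ℝ)) s y₂ t₂ w₂ →
    ‖π x - p‖ ≤ α * s →
    α / (4 * n) ≤ (α * s / 4)⁻¹ * ‖∑ j, w₂ j • σ (t₂ j) - ∑ j, w₁ j • σ (t₁ j)‖

lemma exists_steepAt (H : Scene n μ E π σ h R α τ κ η) {A : ℝ}
    {x y : V} {s : ℝ} (hx : x ∈ E) (hy : y ∈ E)
    (hs : 0 < s) (hsR : s ≤ R) (hh : 2 * h x ≤ α * s) (hsh : α * s < 8 * h x)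
    (hxy : h x / 20 ≤ ‖y - x‖) (hxy' : ‖y - x‖ ≤ h x / 10)
    (hσ : α * ‖y - x‖ < ‖σ (y - x)‖)
    (hη : 2 ^ 22 * apxConst n τ κ * η ≤ α ^ 4)
    (hη' : (4 * n / τ + 8 * A / α) * √(4 * apxConst n τ κ * (3 * (n + 1) * η)) ≤ α / (4 * n)) :
    ∃ d : Fin n, H.SteepAt A s x d := by
  have hα := H.α_pos
  have hα' := H.α_le
  have hτ := H.τ_pos
  have hη0 := H.η_pos
  have hap := apxConst_pos n H.τ_pos H.κ_pos
  have hh0 := H.h_nonneg x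
  have hhs : h x ≤ α * s := by linarith
  obtain ⟨t, ht, hi, Λ, c, hΛ, d, hd⟩ := H.exists_direction hx hy hs hsR hhs
    (by nlinarith) hσ (by
      have h1 : (α * s) ^ 2 ≤ (8 * h x) ^ 2 := by gcongr
      have h2 : (h x / 20) ^ 2 ≤ ‖y - x‖ ^ 2 := by gcongr
      have h3 : α ^ 2 * (8 * apxConst n τ κ * s ^ 2 * η) ≤
          α ^ 2 * (α * ‖y - x‖ / 4) ^ 2 := by
        calc _ = 8 * apxConst n τ κ * η * (α * s) ^ 2 := by ring
          _ ≤ 8 * apxConst n τ κ * η * (8 * h x) ^ 2 := by gcongr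
          _ ≤ (2 ^ 22 * apxConst n τ κ * η) * (h x / 20) ^ 2 / 16 := by
            have : 0 ≤ apxConst n τ κ * η * h x ^ 2 := by positivity
            nlinarith
          _ ≤ α ^ 4 * ‖y - x‖ ^ 2 / 16 := by gcongr
          _ = _ := by ring
      exact le_of_mul_le_mul_left h3 (by positivity))
  refine ⟨d, fun p y₁ y₂ t₁ t₂ w₁ w₂ hN₁ hN₂ hp => ?_⟩
  have hℓ : 0 < α * s / 4 := by positivity
  have key := H.norm_slope_sub_le hx hs hsR hhs hℓ ht hi hΛ (e := EuclideanSpace.single d (1 : ℝ))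
    (by simp) rfl hN₁ hN₂ (by nlinarith) (by
      have : π x - (p + (α * s / 4) • EuclideanSpace.single d (1 : ℝ)) =
        (π x - p) - (α * s / 4) • EuclideanSpace.single d (1 : ℝ) := by abel
      rw [this]
      refine (norm_sub_le _ _).trans ?_
      rw [norm_smul, Real.norm_of_nonneg hℓ.le]
      simp only [PiLp.norm_single, norm_one]
      nlinarith)
  have e : (4 * n / (τ * s) + 2 * A / (α * s / 4)) *
      (s * √(4 * apxConst n τ κ * (3 * (n + 1) * η))) =
      (4 * n / τ + 8 * A / α) * √(4 * apxConst n τ κ * (3 * (n + 1) * η)) := by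
    field_simp; ring
  rw [e] at key
  have : α / (2 * n) = α / (4 * n) + α / (4 * n) := by ring
  linarith

end Scene

end Menger

namespace Menger

namespace Scene

variable {V : Type*} [NormedAddCommGroup V] [InnerProductSpace ℝ V]
    [FiniteDimensional ℝ V] [MeasurableSpace V] [BorelSpace V] {n : ℕ} {μ : Measure V}
    [IsFiniteMeasure μ] {E : Set V} {π : V →ₗ[ℝ] EuclideanSpace ℝ (Fin n)}
    {σ : V →ₗ[ℝ] V} {h : V → ℝ} {R α τ κ η : ℝ}

/-- The number of lattice points near the projection of `E`. -/
lemma exists_near_finset (H : Scene n μ E π σ h R α τ κ η) {x₀ : V} (hE : ∀ x ∈ E, ‖x - x₀‖ ≤ R)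
    {ω : ℝ} (hω : 0 < ω) (hωR : ω ≤ R) : ∃ F : Finset (Fin n → ℤ),
      (∀ v, Near E π h α (latticePoint ω v) R → v ∈ F) ∧ (F.card : ℝ) ≤ (5 * R / ω) ^ n := by
  have hR := H.R_pos
  obtain ⟨F, hF, hc⟩ := exists_lattice_superset hω (ρ := 2 * R) (by positivity) (π x₀)
  refine ⟨F, fun v ⟨x, hx, hxv, _⟩ => hF v ?_, hc.trans ?_⟩
  · have : latticePoint ω v - π x₀ = π (x - x₀) - (π x - latticePoint ω v) := by
      rw [map_sub]; abel
    rw [this]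
    have h1 := (H.split.norm_fst_le (x - x₀)).trans (hE x hx)
    have := H.α_le
    nlinarith [norm_sub_le (π (x - x₀)) (π x - latticePoint ω v)]
  · gcongr
    have : 1 ≤ R / ω := by rwa [le_div_iff₀ hω, one_mul]
    have e1 : 2 * (2 * R) / ω = 4 * (R / ω) := by ring
    have e2 : 5 * R / ω = 5 * (R / ω) := by ring
    rw [e1, e2]; linarith

lemma tsum_nodes_le (H : Scene n μ E π σ h R α τ κ η) (hn : 1 ≤ n) {ω : ℝ}
    {F : Finset (Fin n → ℤ)} (hF : ∀ v, Near E π h α (latticePoint ω v) R → v ∈ F)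
    {t : EuclideanSpace ℝ (Fin n) → Fin (n + 1) → V}
    (ht : ∀ p, Near E π h α p R → ∀ j, t p j ∈ E) {J : ℕ} (hJ : 2 / τ < 2 ^ J) (M : ℕ) :
    ∑ k ∈ Finset.range M, ∑' v, (if Near E π h α (latticePoint ω v) R then
      ∑ j, scaleCurv n μ τ (R * (1 / 2) ^ (M - (k + 1))) (t (latticePoint ω v) j) else 0) ≤
    F.card * ((n + 1) * (J * ENNReal.ofReal η)) := by
  have hsupp : ∀ k, ∑' v, (if Near E π h α (latticePoint ω v) R then
      ∑ j, scaleCurv n μ τ (R * (1 / 2) ^ (M - (k + 1))) (t (latticePoint ω v) j) else 0) =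
      ∑ v ∈ F, (if Near E π h α (latticePoint ω v) R then
      ∑ j, scaleCurv n μ τ (R * (1 / 2) ^ (M - (k + 1))) (t (latticePoint ω v) j) else 0) :=
    fun k => tsum_eq_sum fun v hv => if_neg fun hc => hv (hF v hc)
  simp only [hsupp]
  rw [Finset.sum_comm, ← nsmul_eq_mul]
  refine Finset.sum_le_card_nsmul _ _ _ fun v _ => ?_
  by_cases hv : Near E π h α (latticePoint ω v) R
  · simp only [if_pos hv]
    rw [Finset.sum_comm]
    calc _ ≤ ∑ _j : Fin (n + 1), (J * ENNReal.ofReal η) := by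
          refine Finset.sum_le_sum fun j _ => ?_
          have h1 := sum_scaleCurv_le hn H.τ_pos H.R_pos hJ μ M (t (latticePoint ω v) j)
          rw [← Finset.sum_range_reflect] at h1
          refine le_trans (le_of_eq (Finset.sum_congr rfl fun k _ => ?_)) (h1.trans ?_)
          · rw [Nat.sub_sub, add_comm 1 k]
          · gcongr
            exact H.curvature _ (ht _ hv j)
      _ = _ := by rw [Finset.sum_const]; simp
  · simp [hv]

set_option maxHeartbeats 1000000 in
lemma tsum_steep_le (H : Scene n μ E π σ h R α τ κ η) (hn : 1 ≤ n) {x₀ : V}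
    (hE : ∀ x ∈ E, ‖x - x₀‖ ≤ R) {ε : ℝ} (hε : 0 ≤ ε)
    (hflat : ∀ y ∈ E, ∀ z ∈ E, ‖σ (y - z)‖ ≤ ε * R) {J : ℕ} (hJ : 2 / τ < 2 ^ J) (M : ℕ)
    (I : Finset V) (hI : ∀ x ∈ I, x ∈ E) (k : V → ℕ) (hkM : ∀ x ∈ I, k x ≤ M)
    (hk : ∀ x ∈ I, 2 * h x ≤ α * (R * (1 / 2) ^ (k x + 1))) (d : Fin n)
    (hd : ∀ x ∈ I, H.SteepAt (1 + 8 * n / τ) (R * (1 / 2) ^ k x) x d)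
    {ω : ℝ} (hω : ω = α * (R * (1 / 2) ^ M) / 4) :
    ∑' v, (if ∃ x ∈ I, ‖latticePoint ω v - π x‖ ≤ h x / 2 then
      ENNReal.ofReal ((α / (4 * n)) ^ 2) else 0) ≤
    ENNReal.ofReal ((5 * R / ω) ^ n * ((8 * (1 + 8 * n / τ) * ε / α) ^ 2 +
      1024 * (1 + 8 * n / τ) ^ 2 * apxConst n τ κ / α ^ 2 * (3 * ((n + 1) * (J * η))))) := by
  have hα := H.α_pos
  have hα' := H.α_le
  have hR := H.R_pos
  have hτ := H.τ_pos
  have hη := H.η_pos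
  have hap := apxConst_pos n H.τ_pos H.κ_pos
  have hω0 : 0 < ω := by rw [hω]; positivity
  have hωR : ω ≤ R := by
    have : R * (1 / 2) ^ M ≤ R := mul_le_of_le_one_right hR.le (pow_le_one₀ (by norm_num) (by norm_num))
    rw [hω]; nlinarith
  set A : ℝ := 1 + 8 * n / τ with hA
  have hA0 : 0 ≤ A := by positivity
  set C : ℝ := 1024 * A ^ 2 * apxConst n τ κ / α ^ 2 with hC
  have hC0 : 0 ≤ C := by positivity
  set s : ℕ → ℝ := fun k => R * (1 / 2) ^ k with hs
  have hs0 : ∀ k, 0 < s k := fun k => by simp only [hs]; positivity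
  have hsR : ∀ k, s k ≤ R := fun k =>
    mul_le_of_le_one_right hR.le (pow_le_one₀ (by norm_num) (by norm_num))
  have hs_succ : ∀ k, s (k + 1) = s k / 2 := fun k => by simp only [hs, pow_succ]; ring
  have hs_anti : ∀ {i j : ℕ}, i ≤ j → s j ≤ s i := fun hij => by
    simp only [hs]; gcongr ?_ * ?_; exact pow_le_pow_of_le_one (by norm_num) (by norm_num) hij
  have hmesh : ∀ r ≤ M, (2 : ℝ) ^ r * ω = α * s (M - r) / 4 := by
    intro r hr
    have : (1 / 2 : ℝ) ^ M = (1 / 2) ^ (M - r) * (1 / 2) ^ r := by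
      rw [← pow_add, Nat.sub_add_cancel hr]
    rw [hω, this, one_div, inv_pow (2 : ℝ) r]
    simp only [hs]
    field_simp
  obtain ⟨x, t, w, hN⟩ := H.exists_nodes M
  obtain ⟨F, hF, hFc⟩ := H.exists_near_finset hE hω0 hωR
  set P : (Fin n → ℤ) → EuclideanSpace ℝ (Fin n) := latticePoint ω with hP
  set e : Fin n → ℤ := Pi.single d 1 with he
  have hPadd : ∀ v (j : ℕ), P (v + j • e) =
      P v + (j * ω) • EuclideanSpace.single d (1 : ℝ) := fun v j =>
    latticePoint_add_nsmul_single ω v d j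
  have hPdist : ∀ v (j : ℕ) q, ‖P v - q‖ ≤ ‖P (v + j • e) - q‖ + j * ω := by
    intro v j q
    have e1 : P v - q = (P (v + j • e) - q) - (j * ω) • EuclideanSpace.single d (1 : ℝ) := by
      rw [hPadd]; abel
    rw [e1]
    refine (norm_sub_le _ _).trans ?_
    rw [norm_smul, Real.norm_of_nonneg (by positivity)]
    simp
  have hPdist' : ∀ v (j : ℕ) q, ‖P (v + j • e) - q‖ ≤ ‖P v - q‖ + j * ω := by
    intro v j q
    have e1 : P (v + j • e) - q = (P v - q) + (j * ω) • EuclideanSpace.single d (1 : ℝ) := by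
      rw [hPadd]; abel
    rw [e1]
    refine (norm_add_le _ _).trans ?_
    rw [norm_smul, Real.norm_of_nonneg (by positivity)]
    simp
  set f : (Fin n → ℤ) → V := fun v => ∑ j, w (P v) j • σ (t (P v) j) with hf
  set G : ℕ → (Fin n → ℤ) → V := fun r v =>
    ((2 : ℝ) ^ r * ω)⁻¹ • (f (v + 2 ^ r • e) - f v) with hGdef
  set g : ℕ → (Fin n → ℤ) → ℝ≥0∞ := fun r v => if Near E π h α (P v) R then
      ∑ j, scaleCurv n μ τ (s (M - r)) (t (P v) j) else 0 with hg
  set q : ℕ → (Fin n → ℤ) → ℝ≥0∞ := fun r v => ENNReal.ofReal C *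
    (g r v + g r (v + 2 ^ (r - 1) • e) + g r (v + 2 ^ r • e)) with hq
  set φ : (Fin n → ℤ) → ℝ≥0∞ := fun v => if ∃ x ∈ I, ‖P v - π x‖ ≤ h x / 2 then
      ENNReal.ofReal ((α / (4 * n)) ^ 2) else 0 with hφ
  set close : V → ℕ → (Fin n → ℤ) → Prop := fun x r v => ‖P v - π x‖ ≤ h x / 2 + 2 ^ r * ω
    with hclose
  -- points near a centre, at a scale above its level
  have hnear : ∀ x ∈ I, ∀ r ≤ M, M ≤ k x + r → ∀ v, close x r v → ∀ j ≤ 2 ^ r,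
      Near E π h α (P (v + j • e)) (s (M - r)) ∧ ‖π x - P (v + j • e)‖ ≤ α * s (M - r) ∧
        h x ≤ α * s (M - r) := by
    intro x hx r hr hkr v hv j hj
    have h1 := hk x hx
    have h2 : s (k x + 1) ≤ s (M - r) / 2 := by
      rw [hs_succ]; linarith [hs_anti (show M - r ≤ k x by lia)]
    have h3 : 2 * h x ≤ α * (s (M - r) / 2) := h1.trans (by gcongr)
    have h4 := hPdist' v j (π x)
    have h5 : (j : ℝ) * ω ≤ 2 ^ r * ω := by gcongr; exact_mod_cast hj
    have h6 : ‖P v - π x‖ ≤ h x / 2 + 2 ^ r * ω := hv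
    rw [hmesh r hr] at h5 h6
    have h7 : 0 < α * s (M - r) := mul_pos hα (hs0 _)
    have h8 : ‖π x - P (v + j • e)‖ ≤ α * s (M - r) := by rw [norm_sub_rev]; linarith
    exact ⟨⟨x, hI x hx, h8, by linarith⟩, h8, by linarith⟩
  have hG : ∀ r v, G (r + 1) v = (1 / 2 : ℝ) • (G r v + G r (v + 2 ^ r • e)) := by
    intro r v
    have e1 : v + 2 ^ r • e + 2 ^ r • e = v + 2 ^ (r + 1) • e := by
      rw [add_assoc, ← add_smul, pow_succ, mul_two]
    have e2 : ((2 : ℝ) ^ (r + 1) * ω)⁻¹ = 1 / 2 * ((2 : ℝ) ^ r * ω)⁻¹ := by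
      rw [pow_succ]; field_simp
    simp only [hGdef, e1, e2]
    rw [← smul_add, smul_smul]
    congr 1
    abel
  have hφle : ∀ v, φ v ≤ ENNReal.ofReal ((α / (4 * n)) ^ 2) := by
    intro v; simp only [hφ]; split_ifs
    · exact le_rfl
    · exact zero_le
  have hdead : ∀ r v, (∀ x ∈ I, ¬ close x r v) → dyadicAvg φ e r v = 0 := by
    intro r v hv
    refine dyadicAvg_eq_zero r v fun j hj => if_neg ?_
    rintro ⟨x, hx, hxv⟩
    refine hv x hx ?_
    have h5 : (j : ℝ) * ω ≤ 2 ^ r * ω := by gcongr; exact_mod_cast hj.le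
    simp only [hclose]
    linarith [hPdist v j (π x)]
  have hmain : ∀ r v, (r ≤ M ∧ ∀ x ∈ I, close x r v → M ≤ k x + r) →
      dyadicAvg φ e r v ≤ ENNReal.ofReal (‖G r v‖ ^ 2) + dyadicSum q e r v := by
    intro r v hrv
    refine dyadicAvg_le_add hG (P := fun r v => r ≤ M ∧ ∀ x ∈ I, close x r v → M ≤ k x + r)
      ?_ r v hrv
    clear r v hrv
    rintro r v ⟨hrM, hrv⟩
    by_cases hA1 : ∀ x ∈ I, ¬ close x r v
    · exact Or.inl (hdead r v hA1)
    right
    by_cases hB : ∃ x ∈ I, close x r v ∧ k x + r = M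
    · left
      obtain ⟨y, hy, hyv, hky⟩ := hB
      refine (dyadicAvg_le_const hφle r v).trans (ENNReal.ofReal_le_ofReal ?_)
      have hkr : M - r = k y := by lia
      have n1 := hnear y hy r hrM (by lia) v hyv 0 (by positivity)
      have n2 := hnear y hy r hrM (by lia) v hyv (2 ^ r) le_rfl
      rw [hkr] at n1 n2
      have N1 := hN _ _ (hkM y hy) n1.1
      have N2 := hN _ _ (hkM y hy) n2.1
      have hm : ((2 ^ r : ℕ) : ℝ) * ω = α * s (k y) / 4 := by
        push_cast; rw [hmesh r hrM, hkr]
      have hst := hd y hy (P v) _ _ _ _ _ _ (by simpa using N1)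
        (by rw [hPadd, hm] at N2; exact N2) (by
          have := n1.2.1; rwa [zero_nsmul, add_zero] at this)
      have hGn : ‖G r v‖ = (α * (R * (1 / 2) ^ k y) / 4)⁻¹ * ‖f (v + 2 ^ r • e) - f v‖ := by
        simp only [hGdef]
        rw [norm_smul, hmesh r hrM, hkr, Real.norm_of_nonneg
          (inv_nonneg.2 (by have := hs0 (k y); positivity))]
      have e3 : α / (4 * n) ≤ ‖G r v‖ := by
        rw [hGn]
        convert hst using 3
        simp only [hf]
        rw [hPadd, hm]
      gcongr
    · right
      push Not at hA1 hB
      obtain ⟨y, hy, hyv⟩ := hA1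
      have hky : M < k y + r := lt_of_le_of_ne (hrv y hy hyv) (Ne.symm (hB y hy hyv))
      obtain ⟨r', rfl⟩ : ∃ r', r = r' + 1 := ⟨r - 1, by have := hkM y hy; lia⟩
      have hlt : ∀ x ∈ I, close x (r' + 1) v → M ≤ k x + r' := by
        intro x hx hxv
        have h1 := hrv x hx hxv
        have h2 := hB x hx hxv
        lia
      have hpow : (2 : ℝ) ^ (r' + 1) * ω = 2 ^ r' * ω + 2 ^ r' * ω := by rw [pow_succ]; ring
      have hpos : 0 < (2 : ℝ) ^ r' * ω := by positivity
      refine ⟨r', rfl, ⟨by lia, fun x hx hxv => hlt x hx ?_⟩,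
        ⟨by lia, fun x hx hxv => hlt x hx ?_⟩, ?_⟩
      · simp only [hclose] at hxv ⊢
        linarith
      · simp only [hclose] at hxv ⊢
        have := hPdist v (2 ^ r') (π x)
        push_cast at this
        linarith
      · have hs' := hs0 (M - (r' + 1))
        let idx : Fin 3 → ℕ := ![0, 2 ^ r', 2 ^ (r' + 1)]
        have hidx : ∀ i, idx i ≤ 2 ^ (r' + 1) := by
          intro i; fin_cases i
          · simp [idx]
          · simp [idx, pow_succ]
          · simp [idx]
        have hn3 := fun i => hnear y hy (r' + 1) hrM hky.le v hyv (idx i) (hidx i)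
        have hmid : P (v + idx 0 • e) + P (v + idx 2 • e) =
            P (v + idx 1 • e) + P (v + idx 1 • e) := by
          rw [hPadd, hPadd, hPadd]
          have : ((idx 2 : ℕ) : ℝ) * ω = idx 1 * ω + idx 1 * ω := by
            simp only [idx, Matrix.cons_val]
            push_cast; exact hpow
          rw [this, add_smul]
          simp only [idx, Matrix.cons_val_zero, Nat.cast_zero, zero_mul, zero_smul, add_zero]
          abel
        have sd := H.second_difference (hI y hy) hs' (hsR _) (hn3 0).2.2
          (p := fun i => P (v + idx i • e)) (fun i => hN _ _ (Nat.sub_le M _) (hn3 i).1)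
          (fun i => (hn3 i).2.1.trans (by nlinarith)) hmid
        have hR3 : ∀ i, Near E π h α (P (v + idx i • e)) R := fun i =>
          (hn3 i).1.mono hα.le (hsR _)
        have e1 : v + 2 ^ r' • e + 2 ^ r' • e = v + 2 ^ (r' + 1) • e := by
          rw [add_assoc, ← add_smul, pow_succ, mul_two]
        have i0 : v + idx 0 • e = v := by simp [idx]
        have i1 : v + idx 1 • e = v + 2 ^ r' • e := by simp [idx]
        have i2 : v + idx 2 • e = v + 2 ^ (r' + 1) • e := by simp [idx]
        have gsum : g (r' + 1) v + g (r' + 1) (v + 2 ^ r' • e) + g (r' + 1) (v + 2 ^ (r' + 1) • e) =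
            ∑ i, ∑ j, scaleCurv n μ τ (s (M - (r' + 1))) (t (P (v + idx i • e)) j) := by
          rw [Fin.sum_univ_three, i0, i1, i2]
          simp only [hg]
          rw [if_pos (i0 ▸ hR3 0), if_pos (i1 ▸ hR3 1), if_pos (i2 ▸ hR3 2)]
        have hnorm : ‖(1 / 2 : ℝ) • (G r' v - G r' (v + 2 ^ r' • e))‖ ^ 2 =
            (α * s (M - (r' + 1)) / 4)⁻¹ ^ 2 *
              ‖(f (v + 2 ^ r' • e) - f v) - (f (v + 2 ^ (r' + 1) • e) - f (v + 2 ^ r' • e))‖ ^ 2 := by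
          simp only [hGdef, e1]
          rw [← smul_sub, smul_smul, norm_smul, mul_pow, ← hmesh _ hrM, hpow]
          congr 2
          rw [Real.norm_of_nonneg (by positivity)]
          field_simp; norm_num
        rw [i0, i1, i2] at sd
        simp only [hq, Nat.add_sub_cancel]
        rw [gsum, hnorm]
        set Sg := ∑ i, ∑ j, scaleCurv n μ τ (s (M - (r' + 1))) (t (P (v + idx i • e)) j)
        calc _ ≤ ENNReal.ofReal (C * Sg.toReal) := by
              apply ENNReal.ofReal_le_ofReal
              calc _ ≤ (α * s (M - (r' + 1)) / 4)⁻¹ ^ 2 *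
                    (64 * A ^ 2 * apxConst n τ κ * s (M - (r' + 1)) ^ 2 * Sg.toReal) := by
                    gcongr
                _ = _ := by rw [hC]; field_simp; ring
          _ = ENNReal.ofReal C * ENNReal.ofReal Sg.toReal := ENNReal.ofReal_mul hC0
          _ ≤ _ := by gcongr; exact ENNReal.ofReal_toReal_le
  -- the top scale
  have htop : ∀ v, dyadicAvg φ e M v ≤
      (if v ∈ F then ENNReal.ofReal ((8 * A * ε / α) ^ 2) else 0) + dyadicSum q e M v := by
    intro v
    by_cases hc : ∀ x ∈ I, ¬ close x M v
    · rw [hdead M v hc]; exact zero_le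
    push Not at hc
    obtain ⟨y, hy, hyv⟩ := hc
    refine (hmain M v ⟨le_rfl, fun x _ _ => by lia⟩).trans ?_
    have n1 := hnear y hy M le_rfl (by lia) v hyv 0 (by positivity)
    have n2 := hnear y hy M le_rfl (by lia) v hyv (2 ^ M) le_rfl
    rw [Nat.sub_self] at n1 n2
    have hs00 : s 0 = R := by simp [hs]
    have hvF : v ∈ F := hF v (by simpa [hs00] using n1.1)
    rw [if_pos hvF]
    gcongr
    have N1 := hN _ 0 (Nat.zero_le _) n1.1
    have N2 := hN _ 0 (Nat.zero_le _) n2.1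
    have hval : ∀ {v : Fin n → ℤ}, IsNode E π α A (P v) (R * (1 / 2) ^ 0) (x (P v)) (t (P v))
        (w (P v)) → ‖f v - σ y‖ ≤ A * (ε * R) := by
      intro v hv
      have := norm_sum_sub_affine_le (p := fun j => π (t (P v) j)) (v := fun j => σ (t (P v) j))
        hv.sum_eq hv.sum_abs_le 0 (σ y) (e := ε * R) (by positivity) (fun j => by
          simpa using hflat _ (hv.vertex_mem j) y (hI y hy))
      simpa using this
    have v1 := hval (v := v) (by simpa using N1)
    have v2 := hval N2
    have hGn : ‖G M v‖ = (α * R / 4)⁻¹ * ‖f (v + 2 ^ M • e) - f v‖ := by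
      simp only [hGdef]
      rw [norm_smul, hmesh M le_rfl, Nat.sub_self, hs00, Real.norm_of_nonneg (by positivity)]
    rw [hGn]
    have h3 : ‖f (v + 2 ^ M • e) - f v‖ ≤ 2 * A * (ε * R) := by
      have : f (v + 2 ^ M • e) - f v = (f (v + 2 ^ M • e) - σ y) - (f v - σ y) := by abel
      rw [this]
      linarith [norm_sub_le (f (v + 2 ^ M • e) - σ y) (f v - σ y)]
    calc _ ≤ (α * R / 4)⁻¹ * (2 * A * (ε * R)) := by gcongr
      _ = _ := by field_simp; ring
  have hgsum := H.tsum_nodes_le hn hF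
    (fun p hp => (hN p 0 (Nat.zero_le _) (by simpa using hp)).vertex_mem) hJ M
  calc ∑' v, φ v = ∑' v, dyadicAvg φ e M v := (tsum_dyadicAvg φ e M).symm
    _ ≤ ∑' v, ((if v ∈ F then ENNReal.ofReal ((8 * A * ε / α) ^ 2) else 0) + dyadicSum q e M v) :=
      ENNReal.tsum_le_tsum htop
    _ = F.card * ENNReal.ofReal ((8 * A * ε / α) ^ 2) +
        ∑ r ∈ Finset.range M, ENNReal.ofReal C * (3 * ∑' v, g (r + 1) v) := by
      rw [ENNReal.tsum_add, tsum_dyadicSum]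
      congr 1
      · rw [tsum_eq_sum (s := F) fun v hv => if_neg hv, Finset.sum_congr rfl fun v hv => if_pos hv]
        simp
      · refine Finset.sum_congr rfl fun r _ => ?_
        simp only [hq]
        have htr : ∀ a, ∑' v, g (r + 1) (v + a) = ∑' v, g (r + 1) v := fun a =>
          (Equiv.addRight a).tsum_eq (g (r + 1))
        rw [ENNReal.tsum_mul_left, ENNReal.tsum_add, ENNReal.tsum_add, htr, htr]
        ring
    _ = F.card * ENNReal.ofReal ((8 * A * ε / α) ^ 2) +
        ENNReal.ofReal C * (3 * ∑ r ∈ Finset.range M, ∑' v, g (r + 1) v) := by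
      rw [← Finset.mul_sum, ← Finset.mul_sum]
    _ ≤ F.card * ENNReal.ofReal ((8 * A * ε / α) ^ 2) +
        ENNReal.ofReal C * (3 * (F.card * ((n + 1) * (J * ENNReal.ofReal η)))) := by
      gcongr
    _ = ENNReal.ofReal (F.card * ((8 * A * ε / α) ^ 2 + C * (3 * ((n + 1) * (J * η))))) := by
      rw [ENNReal.ofReal_mul (by positivity), ENNReal.ofReal_add (by positivity) (by positivity),
        ENNReal.ofReal_mul hC0, ENNReal.ofReal_mul (by norm_num),
        ENNReal.ofReal_mul (by positivity), ENNReal.ofReal_mul (by positivity),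
        ENNReal.ofReal_add (by positivity) (by positivity)]
      simp only [ENNReal.ofReal_natCast, ENNReal.ofReal_ofNat, ENNReal.ofReal_one]
      ring
    _ ≤ _ := by
      apply ENNReal.ofReal_le_ofReal
      gcongr

end Scene

end Menger

namespace Menger

lemma sum_pow_le_tsum_lattice {ι : Type*} {n : ℕ} (hn : 1 ≤ n) {ω : ℝ} (hω : 0 < ω)
    (I : Finset ι) (q : ι → EuclideanSpace ℝ (Fin n)) (ρ : ι → ℝ) (hρ : ∀ i ∈ I, n * ω ≤ ρ i)
    (hsep : ∀ i ∈ I, ∀ j ∈ I, i ≠ j → ρ i + ρ j < ‖q i - q j‖) {c : ℝ} (hc : 0 ≤ c) :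
    ENNReal.ofReal ((∑ i ∈ I, (ρ i / (n * ω)) ^ n) * c) ≤
      ∑' v : Fin n → ℤ, (if ∃ i ∈ I, ‖latticePoint ω v - q i‖ ≤ ρ i then ENNReal.ofReal c else 0) := by
  have key : ∀ i : ι, ∃ F : Finset (Fin n → ℤ), i ∈ I →
      (∀ v ∈ F, ‖latticePoint ω v - q i‖ ≤ ρ i) ∧ (ρ i / (n * ω)) ^ n ≤ (F.card : ℝ) := by
    intro i
    by_cases hi : i ∈ I
    · obtain ⟨F, hF⟩ := exists_lattice_subset hn hω (hρ i hi) (q i)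
      exact ⟨F, fun _ => hF⟩
    · exact ⟨∅, fun h => absurd h hi⟩
  choose F hF using key
  have hdisj : ∀ i ∈ I, ∀ j ∈ I, i ≠ j → Disjoint (F i) (F j) := by
    intro i hi j hj hij
    rw [Finset.disjoint_left]
    intro v hvi hvj
    have h1 := (hF i hi).1 v hvi
    have h2 := (hF j hj).1 v hvj
    have h3 := hsep i hi j hj hij
    have h4 : q i - q j = (latticePoint ω v - q j) - (latticePoint ω v - q i) := by abel
    rw [h4] at h3
    linarith [norm_sub_le (latticePoint ω v - q j) (latticePoint ω v - q i)]
  have hcard : (∑ i ∈ I, (ρ i / (n * ω)) ^ n) ≤ ((I.biUnion F).card : ℝ) := by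
    rw [Finset.card_biUnion hdisj]
    push_cast
    exact Finset.sum_le_sum fun i hi => (hF i hi).2
  calc _ ≤ ENNReal.ofReal (((I.biUnion F).card : ℝ) * c) := by
        apply ENNReal.ofReal_le_ofReal; gcongr
    _ = ∑ v ∈ I.biUnion F, ENNReal.ofReal c := by
        rw [Finset.sum_const, nsmul_eq_mul, ENNReal.ofReal_mul (by positivity),
          ENNReal.ofReal_natCast]
    _ = ∑ v ∈ I.biUnion F,
        (if ∃ i ∈ I, ‖latticePoint ω v - q i‖ ≤ ρ i then ENNReal.ofReal c else 0) := by
        refine Finset.sum_congr rfl fun v hv => ?_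
        obtain ⟨i, hi, hv⟩ := Finset.mem_biUnion.1 hv
        rw [if_pos ⟨i, hi, (hF i hi).1 v hv⟩]
    _ ≤ _ := ENNReal.sum_le_tsum _

namespace Scene

variable {V : Type*} [NormedAddCommGroup V] [InnerProductSpace ℝ V]
    [FiniteDimensional ℝ V] [MeasurableSpace V] [BorelSpace V] {n : ℕ} {μ : Measure V}
    [IsFiniteMeasure μ] {E : Set V} {π : V →ₗ[ℝ] EuclideanSpace ℝ (Fin n)}
    {σ : V →ₗ[ℝ] V} {h : V → ℝ} {R α τ κ η : ℝ}

/-- The balls on which the stopping scale is caused by steepness have small total content. -/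
lemma sum_steep_le (H : Scene n μ E π σ h R α τ κ η) (hn : 1 ≤ n) {x₀ : V}
    (hE : ∀ x ∈ E, ‖x - x₀‖ ≤ R) {ε : ℝ} (hε : 0 ≤ ε)
    (hflat : ∀ y ∈ E, ∀ z ∈ E, ‖σ (y - z)‖ ≤ ε * R) {J : ℕ} (hJ : 2 / τ < 2 ^ J)
    (I : Finset V) (hI : ∀ x ∈ I, x ∈ E) (hpos : ∀ x ∈ I, 0 < h x)
    (hle : ∀ x ∈ I, 4 * h x ≤ α * R)
    (hsteep : ∀ x ∈ I, ∃ y ∈ E, h x / 20 ≤ ‖y - x‖ ∧ ‖y - x‖ ≤ h x / 10 ∧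
      α * ‖y - x‖ < ‖σ (y - x)‖)
    (hsep : ∀ x ∈ I, ∀ y ∈ I, x ≠ y → h x / 2 + h y / 2 < ‖π x - π y‖)
    (hη : 2 ^ 22 * apxConst n τ κ * η ≤ α ^ 4)
    (hη' : (4 * n / τ + 8 * (1 + 8 * n / τ) / α) * √(4 * apxConst n τ κ * (3 * (n + 1) * η)) ≤
      α / (4 * n)) :
    ∑ x ∈ I, h x ^ n ≤ n * ((10 * n * R) ^ n * (4 * n / α) ^ 2 *
      ((8 * (1 + 8 * n / τ) * ε / α) ^ 2 +
      1024 * (1 + 8 * n / τ) ^ 2 * apxConst n τ κ / α ^ 2 * (3 * ((n + 1) * (J * η))))) := by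
  have hα := H.α_pos
  have hR := H.R_pos
  have hτ := H.τ_pos
  have hη0 := H.η_pos
  have hap := apxConst_pos n H.τ_pos H.κ_pos
  have hn0 : (0 : ℝ) < n := by exact_mod_cast hn
  have key : ∀ x : V, ∃ k : ℕ, ∃ d : Fin n, ∃ m : ℕ, x ∈ I →
      2 * h x ≤ α * (R * (1 / 2) ^ (k + 1)) ∧
      H.SteepAt (1 + 8 * n / τ) (R * (1 / 2) ^ k) x d ∧ α * R * (1 / 2) ^ m * n ≤ h x := by
    intro x
    by_cases hx : x ∈ I
    · obtain ⟨k, h1, h2⟩ := exists_level (hpos x hx) (b := α * R) (by positivity) (hle x hx)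
      obtain ⟨y, hy, h3, h4, h5⟩ := hsteep x hx
      have hk1 : α * R * (1 / 2) ^ (k + 1) ≤ α * R * (1 / 2) ^ k := by
        rw [pow_succ]
        have : 0 < α * R * (1 / 2) ^ k := by positivity
        linarith
      obtain ⟨d, hd⟩ := H.exists_steepAt (A := 1 + 8 * n / τ) (s := R * (1 / 2) ^ k) (hI x hx) hy
        (by positivity)
        (mul_le_of_le_one_right hR.le (pow_le_one₀ (by norm_num) (by norm_num)))
        (by linarith) (by linarith) h3 h4 h5 hη hη'
      obtain ⟨m, hm⟩ := exists_pow_lt_of_lt_one (x := h x / (α * R * n)) (y := (1 / 2 : ℝ))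
        (by have := hpos x hx; positivity) (by norm_num)
      refine ⟨k, d, m, fun _ => ⟨by linarith, hd, ?_⟩⟩
      rw [lt_div_iff₀ (by positivity)] at hm
      linarith
    · exact ⟨0, ⟨0, hn⟩, 0, fun h => absurd h hx⟩
  choose k d m hkdm using key
  set M : ℕ := I.sup fun x => max (k x) (m x) with hM
  have hkM : ∀ x ∈ I, max (k x) (m x) ≤ M := fun x hx =>
    Finset.le_sup (f := fun x => max (k x) (m x)) hx
  set ω : ℝ := α * (R * (1 / 2) ^ M) / 4 with hω
  have hω0 : 0 < ω := by positivity
  have hωh : ∀ x ∈ I, n * ω ≤ h x / 2 := by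
    intro x hx
    have h1 : ((1 / 2 : ℝ)) ^ M ≤ (1 / 2) ^ m x :=
      pow_le_pow_of_le_one (by norm_num) (by norm_num) ((le_max_right _ _).trans (hkM x hx))
    have h2 : α * R * (1 / 2) ^ M * n ≤ α * R * (1 / 2) ^ m x * n := by gcongr
    have h3 := (hkdm x hx).2.2
    have h4 := hpos x hx
    rw [hω]
    nlinarith
  set B : ℝ := (8 * (1 + 8 * n / τ) * ε / α) ^ 2 +
      1024 * (1 + 8 * n / τ) ^ 2 * apxConst n τ κ / α ^ 2 * (3 * ((n + 1) * (J * η))) with hB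
  have hB0 : 0 ≤ B := by positivity
  have hdir : ∀ c : Fin n, ∑ x ∈ I with d x = c, h x ^ n ≤ (10 * n * R) ^ n * (4 * n / α) ^ 2 * B := by
    intro c
    have hsub : ∀ x ∈ I.filter (fun x => d x = c), x ∈ I := fun x hx => (Finset.mem_filter.1 hx).1
    have h1 := H.tsum_steep_le hn hE hε hflat hJ M (I.filter fun x => d x = c)
      (fun x hx => hI x (hsub x hx)) k
      (fun x hx => (le_max_left _ _).trans (hkM x (hsub x hx)))
      (fun x hx => (hkdm x (hsub x hx)).1) c
      (fun x hx => (Finset.mem_filter.1 hx).2 ▸ (hkdm x (hsub x hx)).2.1) hω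
    have h2 := sum_pow_le_tsum_lattice hn hω0 (I.filter fun x => d x = c) (fun x => π x)
      (fun x => h x / 2) (fun x hx => hωh x (hsub x hx))
      (fun x hx y hy hxy => hsep x (hsub x hx) y (hsub y hy) hxy)
      (c := (α / (4 * n)) ^ 2) (by positivity)
    have h3 := (ENNReal.ofReal_le_ofReal_iff (by positivity)).1 (h2.trans h1)
    have h4 : ∀ x : V, (h x / 2 / (n * ω)) ^ n = h x ^ n * (1 / (2 * n * ω)) ^ n := by
      intro x; rw [← mul_pow]; congr 1; field_simp
    simp only [h4] at h3
    rw [← Finset.sum_mul] at h3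
    set S := ∑ x ∈ I with d x = c, h x ^ n
    have h5 : (10 * n * R) ^ n * (1 / (2 * n * ω)) ^ n = (5 * R / ω) ^ n := by
      rw [← mul_pow]; congr 1; field_simp; norm_num
    have h6 : (4 * n / α) ^ 2 * (α / (4 * n)) ^ 2 = 1 := by
      rw [← mul_pow]; field_simp
    refine le_of_mul_le_mul_right (a := (1 / (2 * n * ω)) ^ n * (α / (4 * n)) ^ 2) ?_ (by positivity)
    calc _ = S * (1 / (2 * n * ω)) ^ n * (α / (4 * n)) ^ 2 := by ring
      _ ≤ _ := h3
      _ = ((10 * n * R) ^ n * (1 / (2 * n * ω)) ^ n) * ((4 * n / α) ^ 2 * (α / (4 * n)) ^ 2) * B := by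
        rw [h5, h6, mul_one]
      _ = _ := by ring
  calc ∑ x ∈ I, h x ^ n = ∑ c : Fin n, ∑ x ∈ I with d x = c, h x ^ n :=
        (Finset.sum_fiberwise I d _).symm
    _ ≤ ∑ c : Fin n, (10 * n * R) ^ n * (4 * n / α) ^ 2 * B := Finset.sum_le_sum fun c _ => hdir c
    _ = _ := by simp

end Scene

end Menger

namespace Menger

section Plane

variable {V : Type*} [NormedAddCommGroup V] [InnerProductSpace ℝ V]

lemma Indep.exists_coeff_of_near {n : ℕ} {c e : ℝ} (hc : 0 < c) {u u' : Fin n → V}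
    (hu : Indep c u) (hce : n * e ≤ c / 2)
    (hA : ∀ i, ∃ a : Fin n → ℝ, ‖u i - ∑ k, a k • u' k‖ ≤ e) {y : V}
    (hy : ∃ a : Fin n → ℝ, ‖y - ∑ k, a k • u' k‖ ≤ e) :
    ∃ b : Fin n → ℝ, ‖y - ∑ i, b i • u i‖ ≤ e * (1 + n * ((‖y‖ + e) / (c / 2))) := by
  choose A hA using hA
  obtain ⟨a, ha⟩ := hy
  set v : Fin n → V := fun i => ∑ k, A i k • u' k with hv
  have hvI : Indep (c / 2) v := hu.perturb hA (by simpa using hce)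
  have hle : Submodule.span ℝ (range v) ≤ Submodule.span ℝ (range u') := by
    rw [Submodule.span_le]
    rintro _ ⟨i, rfl⟩
    exact Submodule.sum_mem _ fun k _ => Submodule.smul_mem _ _ (Submodule.subset_span ⟨k, rfl⟩)
  have hfd : FiniteDimensional ℝ (Submodule.span ℝ (range u')) :=
    FiniteDimensional.span_of_finite ℝ (finite_range u')
  have heq : Submodule.span ℝ (range v) = Submodule.span ℝ (range u') := by
    refine Submodule.eq_of_le_of_finrank_le hle ?_
    rw [finrank_span_eq_card (hvI.linearIndependent (by positivity))]
    exact (finrank_range_le_card u')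
  have hmem : ∑ k, a k • u' k ∈ Submodule.span ℝ (range v) := by
    rw [heq]
    exact Submodule.sum_mem _ fun k _ => Submodule.smul_mem _ _ (Submodule.subset_span ⟨k, rfl⟩)
  obtain ⟨b, hb⟩ := (Submodule.mem_span_range_iff_exists_fun ℝ).1 hmem
  refine ⟨b, ?_⟩
  have he : 0 ≤ e := (norm_nonneg _).trans ha
  have hbn : ∀ i, |b i| ≤ (‖y‖ + e) / (c / 2) := by
    intro i
    rw [le_div_iff₀ (by positivity), mul_comm]
    refine (hvI b i).trans ?_
    rw [hb]
    have h1 : ∑ k, a k • u' k = y - (y - ∑ k, a k • u' k) := by abel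
    rw [h1]
    linarith [norm_sub_le y (y - ∑ k, a k • u' k)]
  have h1 : y - ∑ i, b i • u i = (y - ∑ k, a k • u' k) - ∑ i, b i • (u i - v i) := by
    simp only [smul_sub, Finset.sum_sub_distrib]
    rw [hb]; abel
  rw [h1]
  refine (norm_sub_le _ _).trans ?_
  have h2 : ‖∑ i, b i • (u i - v i)‖ ≤ ∑ _i : Fin n, (‖y‖ + e) / (c / 2) * e := by
    refine (norm_sum_le _ _).trans (Finset.sum_le_sum fun i _ => ?_)
    rw [norm_smul, Real.norm_eq_abs]
    exact mul_le_mul (hbn i) (hA i) (norm_nonneg _) (by positivity)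
  simp only [Finset.sum_const, Finset.card_univ, Fintype.card_fin, nsmul_eq_mul] at h2
  linarith

/-- The orthogonal splitting along an `n`-dimensional subspace. -/
lemma exists_split [FiniteDimensional ℝ V] {n : ℕ} (W : Submodule ℝ V)
    (hW : Module.finrank ℝ W = n) :
    ∃ (π : V →ₗ[ℝ] EuclideanSpace ℝ (Fin n)) (σ : V →ₗ[ℝ] V), IsSplit π σ ∧
      ∀ v, ∀ w ∈ W, ‖σ v‖ ≤ ‖v - w‖ := by
  let b := (stdOrthonormalBasis ℝ W).reindex (finCongr hW)
  refine ⟨b.repr.toLinearEquiv.toLinearMap ∘ₗ W.orthogonalProjectionOnto.toLinearMap,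
    LinearMap.id - (W.starProjection : V →ₗ[ℝ] V), ?_, ?_⟩
  · intro v
    have h := W.norm_sq_eq_add_norm_sq_projection v
    have h2 : v - W.starProjection v = Wᗮ.starProjection v := by
      rw [Submodule.starProjection_orthogonal']; simp
    simp only [LinearMap.comp_apply, LinearMap.sub_apply, LinearMap.id_apply,
      ContinuousLinearMap.coe_coe]
    rw [h2]
    simp only [LinearEquiv.coe_coe, LinearIsometryEquiv.coe_toLinearEquiv,
      LinearIsometryEquiv.norm_map]
    rw [h]
    simp
  · intro v w hw
    simp only [LinearMap.sub_apply, LinearMap.id_apply, ContinuousLinearMap.coe_coe]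
    rw [W.starProjection_minimal v]
    exact ciInf_le ⟨0, by rintro _ ⟨i, rfl⟩; positivity⟩ (⟨w, hw⟩ : W)

end Plane

variable {V : Type*} [NormedAddCommGroup V] [InnerProductSpace ℝ V] [FiniteDimensional ℝ V]
  [MeasurableSpace V] [BorelSpace V] {n : ℕ} {μ : Measure V} [IsFiniteMeasure μ] {E : Set V}

lemma IsSelection.exists_flat_split {τ m : ℝ} {x : V} {s : ℝ} {S : Fin (n + 1) → Set V}
    (hS : IsSelection n τ m μ E x s S) (hτ : 0 < τ) (hm : 0 < m) (hs : 0 < s)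
    (hE : E ⊆ closedBall x s) {η : ℝ} (hη : 0 < η)
    (hcurv : ∀ z ∈ E, pointCurv n μ z ≤ ENNReal.ofReal η)
    (hsmall : 4 * n * √(apxConst n τ m * ((n + 2) * η)) ≤ τ)
    (hsmall' : 2 * √(apxConst n τ m * ((n + 2) * η)) ≤ 1) :
    ∃ (π : V →ₗ[ℝ] EuclideanSpace ℝ (Fin n)) (σ : V →ₗ[ℝ] V), IsSplit π σ ∧
      ∀ y ∈ E, ∀ z ∈ E, ‖σ (y - z)‖ ≤
        4 * √(apxConst n τ m * ((n + 2) * η)) * (1 + 6 * n / τ) * s := by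
  set Q := √(apxConst n τ m * ((n + 2) * η)) with hQ
  have hap := apxConst_pos n hτ hm
  have hQ0 : 0 ≤ Q := Real.sqrt_nonneg _
  have hQ2 : Q ^ 2 = apxConst n τ m * ((n + 2) * η) := Real.sq_sqrt (by positivity)
  have hne : ∀ j, (S j).Nonempty := by
    intro j
    apply nonempty_of_measure_ne_zero (μ := μ)
    exact ((ENNReal.ofReal_pos.2 (by positivity)).trans_le (hS.le_measure j)).ne'
  choose t ht using hne
  have hI := hS.indep t ht
  have hτs : 0 < τ * s := by positivity
  set W := Submodule.span ℝ (range (edges t)) with hW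
  obtain ⟨π, σ, hsplit, hσ⟩ := exists_split (n := n) W
    (by rw [hW, finrank_span_eq_card (hI.linearIndependent hτs), Fintype.card_fin])
  refine ⟨π, σ, hsplit, ?_⟩
  have key : ∀ z ∈ E, ‖σ (z - t 0)‖ ≤ 2 * Q * (1 + 6 * n / τ) * s := by
    intro z hz
    set Z : Finset V := insert z (Finset.univ.image t) with hZ
    have hZE : ∀ w ∈ Z, w ∈ E := by
      intro w hw
      rw [hZ, Finset.mem_insert, Finset.mem_image] at hw
      rcases hw with rfl | ⟨j, -, rfl⟩
      · exact hz
      · exact (hS.subset j (ht j)).1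
    have hsum : ∑ w ∈ Z, scaleCurv n μ τ s w ≤ ENNReal.ofReal ((n + 2) * η) := by
      calc _ ≤ ∑ w ∈ Z, ENNReal.ofReal η := Finset.sum_le_sum fun w hw =>
            (scaleCurv_le_pointCurv n μ τ s w).trans (hcurv w (hZE w hw))
        _ = ENNReal.ofReal (Z.card * η) := by
            rw [Finset.sum_const, nsmul_eq_mul, ENNReal.ofReal_mul (by positivity),
              ENNReal.ofReal_natCast]
        _ ≤ _ := by
            apply ENNReal.ofReal_le_ofReal
            gcongr
            have : Z.card ≤ n + 2 := (Finset.card_insert_le _ _).trans (by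
              have := Finset.card_image_le (s := (Finset.univ : Finset (Fin (n + 1)))) (f := t)
              simp at this; lia)
            exact_mod_cast this
    obtain ⟨t', ht', happ⟩ := hS.exists_good_simplex hτ hm hs Z
      (fun w hw => closedBall_subset_closedBall (by linarith) (hE (hZE w hw)))
      (ne_top_of_le_ne_top ENNReal.ofReal_ne_top hsum)
    have happ' : ∀ w ∈ Z, ∃ a : Fin n → ℝ, ‖w - t' 0 - ∑ j, a j • edges t' j‖ ≤ Q * s := by
      intro w hw
      obtain ⟨a, ha⟩ := happ w hw
      refine ⟨a, le_of_sq_le_sq (ha.trans ?_) (by positivity)⟩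
      have := ENNReal.toReal_mono ENNReal.ofReal_ne_top hsum
      rw [ENNReal.toReal_ofReal (by positivity)] at this
      rw [mul_pow, hQ2]
      calc _ ≤ apxConst n τ m * s ^ 2 * ((n + 2) * η) := by gcongr
        _ = _ := by ring
    have htZ : ∀ j, t j ∈ Z := fun j =>
      Finset.mem_insert_of_mem (Finset.mem_image_of_mem _ (Finset.mem_univ j))
    have hdiff : ∀ w ∈ Z, ∃ a : Fin n → ℝ, ‖(w - t 0) - ∑ j, a j • edges t' j‖ ≤ 2 * Q * s := by
      intro w hw
      obtain ⟨a, ha⟩ := happ' w hw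
      obtain ⟨a', ha'⟩ := happ' _ (htZ 0)
      refine ⟨fun j => a j - a' j, ?_⟩
      have : (w - t 0) - ∑ j, (a j - a' j) • edges t' j =
          (w - t' 0 - ∑ j, a j • edges t' j) - (t 0 - t' 0 - ∑ j, a' j • edges t' j) := by
        simp only [sub_smul, Finset.sum_sub_distrib]; abel
      rw [this]
      linarith [norm_sub_le (w - t' 0 - ∑ j, a j • edges t' j)
        (t 0 - t' 0 - ∑ j, a' j • edges t' j)]
    obtain ⟨b, hb⟩ := hI.exists_coeff_of_near hτs (e := 2 * Q * s) (by nlinarith)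
      (fun i => hdiff _ (htZ i.succ)) (hdiff z (Finset.mem_insert_self _ _))
    refine (hσ _ _ (Submodule.sum_mem _ fun k _ => Submodule.smul_mem _ (b k)
      (Submodule.subset_span ⟨k, rfl⟩))).trans (hb.trans ?_)
    have h1 : ‖z - t 0‖ ≤ 2 * s := by
      have h2 := mem_closedBall.1 (hE hz)
      have h3 := mem_closedBall.1 (hS.subset 0 (ht 0)).2
      rw [← dist_eq_norm]
      linarith [dist_triangle_right z (t 0) x]
    have h2 : (‖z - t 0‖ + 2 * Q * s) / (τ * s / 2) ≤ 6 / τ := by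
      rw [div_le_div_iff₀ (by positivity) hτ]
      nlinarith
    calc _ ≤ 2 * Q * s * (1 + n * (6 / τ)) := by gcongr
      _ = _ := by ring
  intro y hy z hz
  have : σ (y - z) = σ (y - t 0) - σ (z - t 0) := by rw [← map_sub]; congr 1; abel
  rw [this]
  linarith [norm_sub_le (σ (y - t 0)) (σ (z - t 0)), key y hy, key z hz]

end Menger

namespace Menger

section Covering

variable {V : Type*} [NormedAddCommGroup V] [NormedSpace ℝ V] [FiniteDimensional ℝ V]
  [MeasurableSpace V]

/-- A measure bound for a set covered by balls, from packing bounds on disjoint subfamilies. -/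
lemma measure_le_of_packing {n : ℕ} {μ : Measure V} {A : Set V} {r : V → ℝ} {ρ c B : ℝ}
    (hr : ∀ x ∈ A, 0 < r x) (hρ : ∀ x ∈ A, r x ≤ ρ) (hc : 0 ≤ c)
    (hμ : ∀ x ∈ A, μ (closedBall x (5 * r x)) ≤ ENNReal.ofReal (c * r x ^ n))
    (hB : ∀ I : Finset V, (∀ x ∈ I, x ∈ A) →
      (∀ x ∈ I, ∀ y ∈ I, x ≠ y → r x + r y < dist x y) → ∑ x ∈ I, r x ^ n ≤ B) :
    μ A ≤ ENNReal.ofReal (c * B) := by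
  obtain ⟨u, huA, hdisj, hcov⟩ := Vitali.exists_disjoint_subfamily_covering_enlargement_closedBall
    A (fun x => x) r ρ hρ 5 (by norm_num)
  have hcount : u.Countable := hdisj.countable_of_nonempty_interior fun x hx => by
    refine ⟨x, ?_⟩
    exact ball_subset_interior_closedBall (mem_ball_self (hr x (huA hx)))
  have hA : A ⊆ ⋃ x ∈ u, closedBall x (5 * r x) := by
    intro a ha
    obtain ⟨b, hb, hab⟩ := hcov a ha
    exact mem_iUnion₂.2 ⟨b, hb, hab (mem_closedBall_self (hr a ha).le)⟩
  calc μ A ≤ ∑' x : u, μ (closedBall (x : V) (5 * r x)) :=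
        (measure_mono hA).trans (measure_biUnion_le μ hcount _)
    _ ≤ ∑' x : u, ENNReal.ofReal (c * r x ^ n) := ENNReal.tsum_le_tsum fun x => hμ x (huA x.2)
    _ ≤ _ := by
      rw [ENNReal.tsum_eq_iSup_sum]
      refine iSup_le fun I => ?_
      rw [← ENNReal.ofReal_sum_of_nonneg fun x _ => by
        have := hr x (huA x.2); positivity]
      apply ENNReal.ofReal_le_ofReal
      rw [← Finset.mul_sum]
      refine mul_le_mul_of_nonneg_left ?_ hc
      have := hB (I.map (Function.Embedding.subtype _))
        (fun x hx => by
          obtain ⟨y, -, rfl⟩ := Finset.mem_map.1 hx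
          exact huA y.2)
        (fun x hx y hy hxy => by
          obtain ⟨x, -, rfl⟩ := Finset.mem_map.1 hx
          obtain ⟨y, -, rfl⟩ := Finset.mem_map.1 hy
          exact (disjoint_closedBall_closedBall_iff (hr _ (huA x.2)).le (hr _ (huA y.2)).le).1
            (hdisj x.2 y.2 hxy))
      simpa using this

end Covering

section Stopping

variable {V : Type*} [NormedAddCommGroup V]

section Sparse

variable [MeasurableSpace V]

/-- The largest scale at which `μ` is sparse around `x`. -/
def sparseScale (n : ℕ) (μ : Measure V) (R δ : ℝ) (x : V) : ℝ :=
  sSup {t | 0 < t ∧ t ≤ R ∧ μ (closedBall x t) < ENNReal.ofReal (δ * t ^ n)}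

lemma sparseScale_nonneg (n : ℕ) (μ : Measure V) (R δ : ℝ) (x : V) : 0 ≤ sparseScale n μ R δ x :=
  Real.sSup_nonneg fun _ ht => ht.1.le

lemma le_measure_of_sparseScale_lt {n : ℕ} {μ : Measure V} {R δ : ℝ} {x : V} {s : ℝ}
    (hs : sparseScale n μ R δ x < s) (hsR : s ≤ R) :
    ENNReal.ofReal (δ * s ^ n) ≤ μ (closedBall x s) := by
  by_contra! h
  exact hs.not_ge (le_csSup ⟨R, fun t ht => ht.2.1⟩
    ⟨(sparseScale_nonneg n μ R δ x).trans_lt hs, hsR, h⟩)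

lemma exists_sparse {n : ℕ} {μ : Measure V} {R δ : ℝ} {x : V} (h : 0 < sparseScale n μ R δ x) :
    ∃ t, sparseScale n μ R δ x / 2 < t ∧ t ≤ sparseScale n μ R δ x ∧ t ≤ R ∧
      μ (closedBall x t) < ENNReal.ofReal (δ * t ^ n) := by
  have hne : {t | 0 < t ∧ t ≤ R ∧ μ (closedBall x t) < ENNReal.ofReal (δ * t ^ n)}.Nonempty := by
    by_contra hne
    rw [not_nonempty_iff_eq_empty] at hne
    rw [sparseScale, hne, Real.sSup_empty] at h
    exact lt_irrefl _ h
  obtain ⟨t, ht, hlt⟩ := exists_lt_of_lt_csSup hne (half_lt_self h)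
  exact ⟨t, hlt, le_csSup ⟨R, fun t ht => ht.2.1⟩ ht, ht.2.1, ht.2.2⟩

end Sparse

variable [NormedSpace ℝ V]

/-- The largest distance from `x` to a point of `E` outside the cone at `x`. -/
def steepScale (E : Set V) (σ : V →ₗ[ℝ] V) (α : ℝ) (x : V) : ℝ :=
  sSup {t | ∃ y ∈ E, t = ‖y - x‖ ∧ α * ‖y - x‖ < ‖σ (y - x)‖}

lemma steepScale_nonneg (E : Set V) (σ : V →ₗ[ℝ] V) (α : ℝ) (x : V) : 0 ≤ steepScale E σ α x :=
  Real.sSup_nonneg fun _ ⟨_, _, ht, _⟩ => ht ▸ norm_nonneg _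

variable {E : Set V} {σ : V →ₗ[ℝ] V} {α D : ℝ} {x : V}

lemma cone_of_steepScale_lt (hα : 0 < α) (hD : ∀ y ∈ E, ‖σ (y - x)‖ ≤ D) {y : V} (hy : y ∈ E)
    (h : steepScale E σ α x < ‖y - x‖) : ‖σ (y - x)‖ ≤ α * ‖y - x‖ := by
  by_contra! hc
  refine h.not_ge (le_csSup ⟨D / α, ?_⟩ ⟨y, hy, rfl, hc⟩)
  rintro _ ⟨z, hz, rfl, hlt⟩
  rw [le_div_iff₀ hα]
  linarith [hD z hz]

lemma steepScale_le (hα : 0 < α) (hD0 : 0 ≤ D) (hD : ∀ y ∈ E, ‖σ (y - x)‖ ≤ D) :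
    steepScale E σ α x ≤ D / α := by
  refine Real.sSup_le ?_ (by positivity)
  rintro _ ⟨z, hz, rfl, hlt⟩
  rw [le_div_iff₀ hα]
  linarith [hD z hz]

lemma exists_steep (hα : 0 < α) (hD : ∀ y ∈ E, ‖σ (y - x)‖ ≤ D) (h : 0 < steepScale E σ α x) :
    ∃ y ∈ E, steepScale E σ α x / 2 ≤ ‖y - x‖ ∧ ‖y - x‖ ≤ steepScale E σ α x ∧
      α * ‖y - x‖ < ‖σ (y - x)‖ := by
  have hne : {t | ∃ y ∈ E, t = ‖y - x‖ ∧ α * ‖y - x‖ < ‖σ (y - x)‖}.Nonempty := by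
    by_contra hne
    rw [not_nonempty_iff_eq_empty] at hne
    rw [steepScale, hne, Real.sSup_empty] at h
    exact lt_irrefl _ h
  obtain ⟨t, ⟨y, hy, rfl, hc⟩, hlt⟩ := exists_lt_of_lt_csSup hne (half_lt_self h)
  refine ⟨y, hy, hlt.le, le_csSup ⟨D / α, ?_⟩ ⟨y, hy, rfl, hc⟩, hc⟩
  rintro _ ⟨z, hz, rfl, hlt⟩
  rw [le_div_iff₀ hα]
  linarith [hD z hz]

end Stopping

section Graph

lemma exists_lipschitz_of_fst {V X : Type*} [NormedAddCommGroup V] [NormedSpace ℝ V]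
    [FiniteDimensional ℝ V] [NormedAddCommGroup X] [NormedSpace ℝ X] (π : V →ₗ[ℝ] X) {F : Set V}
    (hF : ∀ x ∈ F, ∀ y ∈ F, ‖y - x‖ ≤ 2 * ‖π (y - x)‖) :
    ∃ f : X → V, (∃ L : ℝ≥0, LipschitzWith L f) ∧ F ⊆ range f := by
  rcases F.eq_empty_or_nonempty with rfl | ⟨x₀, hx₀⟩
  · exact ⟨fun _ => 0, ⟨0, LipschitzWith.const 0⟩, empty_subset _⟩
  have hinj : ∀ x ∈ F, ∀ y ∈ F, π x = π y → x = y := by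
    intro x hx y hy hxy
    have := hF x hx y hy
    rw [map_sub, hxy, sub_self, norm_zero, mul_zero] at this
    exact (sub_eq_zero.1 (norm_le_zero_iff.1 this)).symm
  let g : X → V := Function.invFunOn π F
  have hg : ∀ x ∈ F, g (π x) = x := fun x hx =>
    hinj _ (Function.invFunOn_mem ⟨x, hx, rfl⟩) x hx (Function.invFunOn_eq ⟨x, hx, rfl⟩)
  have hL : LipschitzOnWith 2 g (π '' F) := by
    refine LipschitzOnWith.of_dist_le_mul ?_
    rintro _ ⟨x, hx, rfl⟩ _ ⟨y, hy, rfl⟩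
    rw [hg x hx, hg y hy, dist_eq_norm, dist_eq_norm, ← map_sub]
    exact hF y hy x hx
  obtain ⟨f, hf, hfg⟩ := hL.extend_finite_dimension
  exact ⟨f, ⟨_, hf⟩, fun x hx => ⟨π x, by rw [← hfg ⟨x, hx, rfl⟩, hg x hx]⟩⟩

end Graph

end Menger

namespace Menger

namespace Scene

variable {V : Type*} [NormedAddCommGroup V] [InnerProductSpace ℝ V]
    [FiniteDimensional ℝ V] [MeasurableSpace V] [BorelSpace V] {n : ℕ} {μ : Measure V}
    [IsFiniteMeasure μ] {E : Set V} {π : V →ₗ[ℝ] EuclideanSpace ℝ (Fin n)}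
    {σ : V →ₗ[ℝ] V} {h : V → ℝ} {R α τ κ η : ℝ}

omit [FiniteDimensional ℝ V] [BorelSpace V] [IsFiniteMeasure μ] in
lemma dist_le_two_mul (H : Scene n μ E π σ h R α τ κ η) {x y : V} (hx : x ∈ E) (hy : y ∈ E)
    (hxy : h x / 10 < dist x y) : dist x y ≤ 2 * ‖π x - π y‖ := by
  rw [dist_comm, dist_eq_norm] at hxy ⊢
  rw [norm_sub_rev (π x), ← map_sub]
  exact H.split.norm_le_two_mul (by linarith [H.α_le]) (H.cone x hx y hy hxy)

omit [BorelSpace V] [IsFiniteMeasure μ] in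
/-- The part of `E` on which the stopping scale is caused by sparseness is small. -/
lemma measure_sparse_le (H : Scene n μ E π σ h R α τ κ η) {x₀ : V}
    (hE : ∀ x ∈ E, ‖x - x₀‖ ≤ R) {δ : ℝ} (hδ : 0 ≤ δ) {A : Set V} (hA : A ⊆ E)
    (hsparse : ∀ x ∈ A, ∃ t, 0 < t ∧ h x / 2 < t ∧ t ≤ R ∧
      μ (closedBall x t) ≤ ENNReal.ofReal (δ * t ^ n)) :
    μ A ≤ ENNReal.ofReal (δ * 5 ^ n * (4 * R) ^ n) := by
  have hR := H.R_pos
  choose! t ht0 hth htR htμ using hsparse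
  refine measure_le_of_packing (n := n) (r := fun x => t x / 5) (ρ := R) (fun x hx => ?_) (fun x hx => ?_)
    (by positivity) (fun x hx => ?_) fun I hI hsep => ?_
  · have := ht0 x hx; positivity
  · have := ht0 x hx; have := htR x hx; linarith
  · have e1 : 5 * (t x / 5) = t x := by ring
    have e2 : δ * 5 ^ n * (t x / 5) ^ n = δ * t x ^ n := by
      rw [mul_assoc, ← mul_pow, e1]
    rw [e1, e2]
    exact htμ x hx
  · have hs := sum_pow_le_of_separated I (fun x => π x) (fun x => t x / 10) (c := π x₀)
      (ρ := 2 * R) (by positivity) (fun x hx => by have := ht0 x (hI x hx); positivity) ?_ ?_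
    · rw [finrank_euclideanSpace_fin] at hs
      have e : ∀ x, (t x / 5) ^ n = 2 ^ n * (t x / 10) ^ n := fun x => by
        rw [← mul_pow]; congr 1; ring
      simp only [e]
      rw [← Finset.mul_sum]
      calc _ ≤ 2 ^ n * (2 * R) ^ n := by gcongr
        _ = _ := by rw [← mul_pow]; congr 1; ring
    · intro x hx y hy hxy
      have h1 := hsep x hx y hy hxy
      have h2 := ht0 y (hI y hy)
      have h3 := hth x (hI x hx)
      have h4 := H.dist_le_two_mul (hA (hI x hx)) (hA (hI y hy)) (by linarith)
      rw [dist_eq_norm (π x)]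
      linarith
    · intro x hx
      have h1 := (H.split.norm_fst_le (x - x₀)).trans (hE x (hA (hI x hx)))
      have h2 := htR x (hI x hx)
      rw [dist_eq_norm, ← map_sub]
      linarith

/-- The part of `E` on which the stopping scale is caused by steepness is small. -/
lemma measure_steep_le (H : Scene n μ E π σ h R α τ κ η) (hn : 1 ≤ n) {x₀ : V}
    (hE : ∀ x ∈ E, ‖x - x₀‖ ≤ R) {ε : ℝ} (hε : 0 ≤ ε)
    (hflat : ∀ y ∈ E, ∀ z ∈ E, ‖σ (y - z)‖ ≤ ε * R) {J : ℕ} (hJ : 2 / τ < 2 ^ J)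
    {C₀ : ℝ} (hC₀ : 0 ≤ C₀) (hup : UpperRegular n C₀ μ)
    {A : Set V} (hA : A ⊆ E) (hpos : ∀ x ∈ A, 0 < h x)
    (hle : ∀ x ∈ A, 4 * h x ≤ α * R)
    (hsteep : ∀ x ∈ A, ∃ y ∈ E, h x / 20 ≤ ‖y - x‖ ∧ ‖y - x‖ ≤ h x / 10 ∧
      α * ‖y - x‖ < ‖σ (y - x)‖)
    (hη : 2 ^ 22 * apxConst n τ κ * η ≤ α ^ 4)
    (hη' : (4 * n / τ + 8 * (1 + 8 * n / τ) / α) * √(4 * apxConst n τ κ * (3 * (n + 1) * η)) ≤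
      α / (4 * n)) :
    μ A ≤ ENNReal.ofReal (C₀ * 5 ^ n * (n * ((10 * n * R) ^ n * (4 * n / α) ^ 2 *
      ((8 * (1 + 8 * n / τ) * ε / α) ^ 2 +
      1024 * (1 + 8 * n / τ) ^ 2 * apxConst n τ κ / α ^ 2 * (3 * ((n + 1) * (J * η))))))) := by
  have hR := H.R_pos
  refine measure_le_of_packing (n := n) (r := h) (ρ := α * R) hpos (fun x hx => ?_) (by positivity)
    (fun x hx => ?_) fun I hI hsep => ?_
  · linarith [hpos x hx, hle x hx]
  · refine (hup x (5 * h x) (by have := hpos x hx; positivity)).trans_eq ?_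
    rw [mul_pow, mul_assoc]
  · refine H.sum_steep_le hn hE hε hflat hJ I (fun x hx => hA (hI x hx))
      (fun x hx => hpos x (hI x hx)) (fun x hx => hle x (hI x hx))
      (fun x hx => hsteep x (hI x hx)) (fun x hx y hy hxy => ?_) hη hη'
    have h1 := hsep x hx y hy hxy
    have h2 := hpos x (hI x hx)
    have h3 := hpos y (hI y hy)
    have h4 := H.dist_le_two_mul (hA (hI x hx)) (hA (hI y hy)) (by linarith)
    linarith

end Scene

lemma exists_small {f : ℝ → ℝ} (hf : Continuous f) (h0 : f 0 = 0) {b : ℝ} (hb : 0 < b) :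
    ∀ᶠ x in nhdsWithin 0 (Ioi 0), f x ≤ b := by
  have h1 : Filter.Tendsto f (nhdsWithin 0 (Ioi 0)) (nhds 0) := by
    simpa only [h0] using (hf.tendsto 0).mono_left (nhdsWithin_le_nhds (s := Ioi 0))
  exact (h1.eventually (gt_mem_nhds hb)).mono fun x hx => hx.le

variable (V : Type*) [NormedAddCommGroup V] [InnerProductSpace ℝ V]
    [FiniteDimensional ℝ V] [MeasurableSpace V] [BorelSpace V]

/-- A dense set with small pointwise curvature has a large piece in a Lipschitz graph. -/
lemma exists_lipschitz_piece {n : ℕ} (hn : 1 ≤ n) {C₀ c₀ : ℝ} (hC₀ : 0 < C₀) (hc₀ : 0 < c₀) :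
    ∃ η : ℝ, 0 < η ∧ ∀ (μ : Measure V) [IsFiniteMeasure μ] (E : Set V) (x₀ : V) (R : ℝ),
      MeasurableSet E → μ Eᶜ = 0 → UpperRegular n C₀ μ → 0 < R → E ⊆ closedBall x₀ R →
      ENNReal.ofReal (c₀ * R ^ n) ≤ μ E → (∀ z ∈ E, pointCurv n μ z ≤ ENNReal.ofReal η) →
      ∃ F ⊆ E, μ F ≠ 0 ∧ ∃ f : EuclideanSpace ℝ (Fin n) → V,
        (∃ L : ℝ≥0, LipschitzWith L f) ∧ F ⊆ range f := by
  have hn0 : (0 : ℝ) < n := by exact_mod_cast hn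
  set δ : ℝ := c₀ / (4 * 20 ^ n) with hδdef
  have hδ : 0 < δ := by positivity
  obtain ⟨τ, κ, hτ, hκ, hsel⟩ := exists_selection V n hδ hC₀
  obtain ⟨τ', κ', hτ', hκ', hsel'⟩ := exists_selection V n (δ := c₀ / 2 ^ n) (by positivity) hC₀
  obtain ⟨J, hJ⟩ := pow_unbounded_of_one_lt (2 / τ) (one_lt_two)
  set α : ℝ := min (1 / 6) (τ / (4 * n)) with hα
  have hα0 : 0 < α := by positivity
  have hατ : 4 * n * α ≤ τ := by
    have : α ≤ τ / (4 * n) := min_le_right _ _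
    rw [le_div_iff₀ (by positivity)] at this
    linarith
  set Q : ℝ → ℝ := fun η => √(apxConst n τ' κ' * ((n + 2) * η)) with hQ
  have hQc : Continuous Q := by fun_prop
  have hQ0 : Q 0 = 0 := by simp [hQ]
  set ε : ℝ → ℝ := fun η => 8 * Q η * (1 + 6 * n / τ') with hε
  have hεc : Continuous ε := by fun_prop
  have hε0 : ε 0 = 0 := by simp [hε, hQ0]
  obtain ⟨η, ⟨⟨⟨⟨⟨⟨h1, h2⟩, h3⟩, h4⟩, h5⟩, h6⟩, hη⟩⟩ :=
    ((((((exists_small (f := fun η => 4 * n * Q η) (by fun_prop) (by simp [hQ0]) hτ').and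
    (exists_small (f := fun η => 2 * Q η) (by fun_prop) (by simp [hQ0]) one_pos)).and
    (exists_small (f := fun η => 40 * ε η) (by fun_prop) (by simp [hε0])
      (show 0 < α ^ 2 by positivity))).and
    (exists_small (f := fun η => 2 ^ 22 * apxConst n τ κ * η) (by fun_prop) (by simp)
      (show 0 < α ^ 4 by positivity))).and
    (exists_small (f := fun η => (4 * n / τ + 8 * (1 + 8 * n / τ) / α) *
      √(4 * apxConst n τ κ * (3 * (n + 1) * η))) (by fun_prop) (by simp)
      (show 0 < α / (4 * n) by positivity))).and
    (exists_small (f := fun η => C₀ * 5 ^ n * (n * ((10 * n) ^ n * (4 * n / α) ^ 2 *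
      ((8 * (1 + 8 * n / τ) * ε η / α) ^ 2 +
      1024 * (1 + 8 * n / τ) ^ 2 * apxConst n τ κ / α ^ 2 * (3 * ((n + 1) * (J * η)))))))
      (by fun_prop) (by simp [hε0]) (show 0 < c₀ / 4 by positivity))).and
    self_mem_nhdsWithin |>.exists
  have hη : 0 < η := hη
  refine ⟨η, hη, ?_⟩
  intro μ _ E x₀ R hEm hμE hup hR hER hmass hcurv
  have hEx : ∀ x ∈ E, ‖x - x₀‖ ≤ R := fun x hx => by
    rw [← dist_eq_norm]; exact hER hx
  have hE0 : μ E ≠ 0 := ((ENNReal.ofReal_pos.2 (by positivity)).trans_le hmass).ne'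
  obtain ⟨x₁, hx₁⟩ := nonempty_of_measure_ne_zero hE0
  have hE1 : E ⊆ closedBall x₁ (2 * R) := fun x hx => by
    rw [mem_closedBall]
    linarith [dist_triangle_right x x₁ x₀, mem_closedBall.1 (hER hx), mem_closedBall.1 (hER hx₁)]
  obtain ⟨S, hS⟩ := hsel' μ E hEm hμE hup x₁ (2 * R) (by positivity) (by
    refine le_trans (le_of_eq ?_) (hmass.trans (measure_mono hE1))
    congr 1
    rw [mul_pow]; field_simp)
  obtain ⟨π, σ, hsplit, hflat⟩ := hS.exists_flat_split hτ' hκ' (by positivity) hE1 hη hcurv h1 h2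
  have hεnn : 0 ≤ ε η := by simp only [hε, hQ]; positivity
  have hflat' : ∀ y ∈ E, ∀ z ∈ E, ‖σ (y - z)‖ ≤ ε η * R := fun y hy z hz =>
    (hflat y hy z hz).trans_eq (by simp only [hε, hQ]; ring)
  set a : V → ℝ := sparseScale n μ R δ with ha
  set b : V → ℝ := steepScale E σ α with hb
  have ha0 : ∀ x, 0 ≤ a x := sparseScale_nonneg n μ R δ
  have hb0 : ∀ x, 0 ≤ b x := steepScale_nonneg E σ α
  set h : V → ℝ := fun x => max (a x) (10 * b x) with hh
  have H : Scene n μ E π σ h R α τ κ η :=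
    { finrank_eq := by simp
      split := hsplit
      R_pos := hR
      α_pos := hα0
      α_le := min_le_left _ _
      τ_pos := hτ
      κ_pos := hκ
      η_pos := hη
      α_le_τ := hατ
      h_nonneg := fun x => (ha0 x).trans (le_max_left _ _)
      cone := fun x hx y hy hxy => cone_of_steepScale_lt hα0 (fun z hz => hflat' z hz x hx) hy (by
        have : 10 * b x ≤ h x := le_max_right _ _
        change b x < _
        linarith)
      selection := fun x hx s hs hsR => hsel μ E hEm hμE hup x s
        (((ha0 x).trans (le_max_left _ _)).trans_lt hs)
        (le_measure_of_sparseScale_lt ((le_max_left _ _).trans_lt hs) hsR)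
      curvature := hcurv }
  refine ⟨{x ∈ E | h x = 0}, sep_subset _ _, ?_, exists_lipschitz_of_fst π ?_⟩
  · intro hF
    have hF1 : μ {x ∈ E | 10 * b x ≤ a x ∧ 0 < a x} ≤ ENNReal.ofReal (c₀ / 4 * R ^ n) := by
      refine (H.measure_sparse_le hEx hδ.le (sep_subset _ _) ?_).trans_eq ?_
      · rintro x ⟨hx, hxa, hxp⟩
        obtain ⟨t, ht1, ht2, ht3, ht4⟩ := exists_sparse hxp
        refine ⟨t, by change a x / 2 < t at ht1; linarith, ?_, ht3, ht4.le⟩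
        have : h x = a x := max_eq_left hxa
        rw [this]; exact ht1
      · congr 1
        have : (20 : ℝ) ^ n = 5 ^ n * 4 ^ n := by rw [← mul_pow]; norm_num
        rw [hδdef, this, mul_pow]; field_simp
    have hF3 : μ {x ∈ E | a x < 10 * b x} ≤ ENNReal.ofReal (c₀ / 4 * R ^ n) := by
      have hbh : ∀ x ∈ {x ∈ E | a x < 10 * b x}, h x = 10 * b x := fun x hx => max_eq_right hx.2.le
      refine (H.measure_steep_le hn hEx hεnn hflat' hJ hC₀.le hup (sep_subset _ _)
        (fun x hx => ?_) (fun x hx => ?_) (fun x hx => ?_) h4 h5).trans ?_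
      · rw [hbh x hx]; exact (ha0 x).trans_lt hx.2
      · rw [hbh x hx]
        have h7 : b x ≤ ε η * R / α := steepScale_le hα0 (by positivity)
          (fun z hz => hflat' z hz x hx.1)
        rw [le_div_iff₀ hα0] at h7
        nlinarith
      · have h8 : 0 < b x := by linarith [ha0 x, hx.2]
        obtain ⟨y, hy, g1, g2, g3⟩ := exists_steep hα0 (fun z hz => hflat' z hz x hx.1) h8
        refine ⟨y, hy, ?_, ?_, g3⟩ <;> rw [hbh x hx]
        · change b x / 2 ≤ _ at g1; linarith
        · change _ ≤ b x at g2; linarith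
      · apply ENNReal.ofReal_le_ofReal
        have h9 := mul_le_mul_of_nonneg_right h6 (show 0 ≤ R ^ n by positivity)
        refine le_trans (le_of_eq ?_) h9
        rw [mul_pow _ R]; ring
    have hcov : E ⊆ {x ∈ E | h x = 0} ∪ {x ∈ E | 10 * b x ≤ a x ∧ 0 < a x} ∪
        {x ∈ E | a x < 10 * b x} := by
      intro x hx
      rcases lt_or_ge (a x) (10 * b x) with hab | hab
      · exact Or.inr ⟨hx, hab⟩
      rcases (ha0 x).eq_or_lt with h0 | h0
      · exact Or.inl (Or.inl ⟨hx, by simp only [hh]; rw [max_eq_left hab, ← h0]⟩)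
      · exact Or.inl (Or.inr ⟨hx, hab, h0⟩)
    have htot : μ E ≤ ENNReal.ofReal (c₀ / 2 * R ^ n) := by
      calc μ E ≤ μ {x ∈ E | h x = 0} + μ {x ∈ E | 10 * b x ≤ a x ∧ 0 < a x} +
            μ {x ∈ E | a x < 10 * b x} := (measure_mono hcov).trans
              ((measure_union_le _ _).trans (add_le_add_left (measure_union_le _ _) _))
        _ ≤ 0 + ENNReal.ofReal (c₀ / 4 * R ^ n) + ENNReal.ofReal (c₀ / 4 * R ^ n) := by
            gcongr; exact hF.le
        _ = _ := by
            rw [zero_add, ← ENNReal.ofReal_add (by positivity) (by positivity)]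
            congr 1; ring
    have h10 := (ENNReal.ofReal_le_ofReal_iff (by positivity)).1 (hmass.trans htot)
    have : 0 < c₀ * R ^ n := by positivity
    linarith
  · rintro x ⟨hx, hx0⟩ y ⟨hy, -⟩
    rcases eq_or_ne x y with rfl | hxy
    · simp
    · have := H.dist_le_two_mul hx hy (by rw [hx0, zero_div]; exact dist_pos.2 hxy)
      rwa [dist_comm, dist_eq_norm, norm_sub_rev (π x), ← map_sub] at this

end Menger

namespace Menger

variable {V : Type*} [NormedAddCommGroup V] [NormedSpace ℝ V] [FiniteDimensional ℝ V]
  [MeasurableSpace V] [BorelSpace V]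

/-- Points of large upper density form a set of small Hausdorff measure. -/
lemma hausdorffMeasure_le_of_dense {n : ℕ} {μ : Measure V} {A : Set V} {C : ℝ} (hC : 0 < C)
    (h : ∀ x ∈ A, ∀ ρ > 0, ∃ r, 0 < r ∧ r < ρ ∧ ENNReal.ofReal (C * r ^ n) ≤ μ (closedBall x r)) :
    μH[(n : ℝ)] A ≤ ENNReal.ofReal (10 ^ n / C) * μ univ := by
  have key : ∀ k : ℕ, ∃ (r : V → ℝ) (u : Set V), u.Countable ∧
      (∀ x ∈ u, 0 < r x ∧ r x < 1 / ((k : ℝ) + 1) ∧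
        ENNReal.ofReal (C * r x ^ n) ≤ μ (closedBall x (r x))) ∧
      u.PairwiseDisjoint (fun x => closedBall x (r x)) ∧ A ⊆ ⋃ x : u, closedBall (x : V) (5 * r x) := by
    intro k
    have hk : 0 < 1 / ((k : ℝ) + 1) := by positivity
    choose! r hr using fun x hx => h x hx _ hk
    obtain ⟨u, huA, hdisj, hcov⟩ :=
      Vitali.exists_disjoint_subfamily_covering_enlargement_closedBall
        A (fun x => x) r _ (fun x hx => (hr x hx).2.1.le) 5 (by norm_num)
    refine ⟨r, u, hdisj.countable_of_nonempty_interior fun x hx =>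
      ⟨x, ball_subset_interior_closedBall (mem_ball_self (hr x (huA hx)).1)⟩,
      fun x hx => hr x (huA hx), hdisj, fun a ha => ?_⟩
    obtain ⟨b, hb, hab⟩ := hcov a ha
    exact mem_iUnion.2 ⟨⟨b, hb⟩, hab (mem_closedBall_self (hr a ha).1.le)⟩
  choose r u hcount hr hdisj hcov using key
  have hdiam : ∀ k (x : u k), ediam (closedBall (x : V) (5 * r k x)) ≤ ENNReal.ofReal (10 * r k x) := by
    intro k x
    refine ediam_le_of_forall_dist_le fun y hy z hz => ?_
    linarith [dist_triangle_right y z x, mem_closedBall.1 hy, mem_closedBall.1 hz]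
  have : ∀ k, Countable (u k) := fun k => (hcount k).to_subtype
  refine (Measure.hausdorffMeasure_le_liminf_tsum (l := Filter.atTop) (n : ℝ) A
    (fun k : ℕ => ENNReal.ofReal (10 * (1 / ((k : ℝ) + 1)))) ?_
    (fun k (x : u k) => closedBall (x : V) (5 * r k x)) ?_ ?_).trans ?_
  · have h1 := (tendsto_one_div_add_atTop_nhds_zero_nat (𝕜 := ℝ)).const_mul 10
    rw [mul_zero] at h1
    simpa using ENNReal.tendsto_ofReal h1
  · refine Filter.Eventually.of_forall fun k x => (hdiam k x).trans ?_
    apply ENNReal.ofReal_le_ofReal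
    have := (hr k x x.2).2.1
    linarith
  · exact Filter.Eventually.of_forall hcov
  · refine (Filter.liminf_le_liminf (v := fun _ => ENNReal.ofReal (10 ^ n / C) * μ univ)
      (Filter.Eventually.of_forall fun k => ?_)).trans_eq (Filter.liminf_const _)
    calc _ ≤ ∑' x : u k, ENNReal.ofReal (10 ^ n / C) * μ (closedBall (x : V) (r k x)) := by
          refine ENNReal.tsum_le_tsum fun x => ?_
          obtain ⟨h1, -, h2⟩ := hr k x x.2
          rw [ENNReal.rpow_natCast]
          calc _ ≤ ENNReal.ofReal (10 * r k x) ^ n := by gcongr; exact hdiam k x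
            _ = ENNReal.ofReal (10 ^ n / C) * ENNReal.ofReal (C * r k x ^ n) := by
              rw [← ENNReal.ofReal_pow (by positivity), ← ENNReal.ofReal_mul (by positivity), mul_pow]
              congr 1; field_simp
            _ ≤ _ := by gcongr
      _ ≤ _ := by
          rw [ENNReal.tsum_mul_left]
          gcongr
          rw [← measure_biUnion (hcount k) (hdisj k) fun x _ => isClosed_closedBall.measurableSet]
          exact measure_mono (subset_univ _)

/-- A set of positive finite Hausdorff measure has a part of positive measure on which the upper
densities are bounded. -/
lemma exists_upper_part {n : ℕ} {E : Set V} (hE : MeasurableSet E) (h0 : μH[(n : ℝ)] E ≠ 0)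
    (hfin : μH[(n : ℝ)] E ≠ ∞) :
    ∃ C ρ : ℝ, 0 < C ∧ 0 < ρ ∧ ∃ A ⊆ E, MeasurableSet A ∧ μH[(n : ℝ)] A ≠ 0 ∧
      ∀ z ∈ A, ∀ r, 0 < r → r ≤ ρ →
        μH[(n : ℝ)].restrict E (closedBall z r) ≤ ENNReal.ofReal (C * r ^ n) := by
  set μ := μH[(n : ℝ)].restrict E with hμ
  let G : ℕ → Set V := fun j => {x | ∀ r, 0 < r → r < 1 / ((j : ℝ) + 1) →
    μ (closedBall x r) ≤ ENNReal.ofReal ((j + 1) * r ^ n)}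
  have hex : ∃ j, μH[(n : ℝ)] (E ∩ closure (G j)) ≠ 0 := by
    by_contra! hcon
    refine h0 ?_
    have hrest : μH[(n : ℝ)] (E \ ⋃ j, G j) = 0 := by
      have hb : ∀ j : ℕ, μH[(n : ℝ)] (E \ ⋃ j, G j) ≤
          ENNReal.ofReal (10 ^ n / ((j : ℝ) + 1)) * μ univ := by
        intro j
        refine hausdorffMeasure_le_of_dense (by positivity) fun x hx ρ hρ => ?_
        obtain ⟨i, hi⟩ := exists_nat_one_div_lt hρ
        have hxn : x ∉ G (max i j) := fun hxG => hx.2 (mem_iUnion.2 ⟨_, hxG⟩)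
        simp only [G, mem_ofPred_eq] at hxn
        push Not at hxn
        obtain ⟨r, hr0, hr1, hr2⟩ := hxn
        refine ⟨r, hr0, hr1.trans_le (le_trans ?_ hi.le), le_trans ?_ hr2.le⟩
        · gcongr; exact le_max_left _ _
        · apply ENNReal.ofReal_le_ofReal
          gcongr; exact le_max_right _ _
      have hlim : Filter.Tendsto (fun j : ℕ => ENNReal.ofReal (10 ^ n / ((j : ℝ) + 1)) * μ univ)
          Filter.atTop (nhds 0) := by
        have h1 := (tendsto_one_div_add_atTop_nhds_zero_nat (𝕜 := ℝ)).const_mul (10 ^ n)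
        rw [mul_zero] at h1
        have h2 := ENNReal.Tendsto.mul_const (b := μ univ) (ENNReal.tendsto_ofReal h1)
          (Or.inr (by rw [hμ, Measure.restrict_apply_univ]; exact hfin))
        simp only [mul_one_div, ENNReal.ofReal_zero, zero_mul] at h2
        exact h2
      exact le_antisymm (ge_of_tendsto' hlim hb) zero_le
    have hsub : E ⊆ (E \ ⋃ j, G j) ∪ ⋃ j, E ∩ closure (G j) := by
      intro x hx
      by_cases hxG : x ∈ ⋃ j, G j
      · obtain ⟨j, hj⟩ := mem_iUnion.1 hxG
        exact Or.inr (mem_iUnion.2 ⟨j, hx, subset_closure hj⟩)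
      · exact Or.inl ⟨hx, hxG⟩
    exact measure_mono_null hsub (measure_union_null hrest (measure_iUnion_null hcon))
  obtain ⟨j, hj⟩ := hex
  refine ⟨(j + 1) * 2 ^ n, 1 / (4 * ((j : ℝ) + 1)), by positivity, by positivity,
    E ∩ closure (G j), inter_subset_left, hE.inter isClosed_closure.measurableSet, hj, ?_⟩
  rintro z ⟨-, hz⟩ r hr hrρ
  obtain ⟨y, hy, hzy⟩ := Metric.mem_closure_iff.1 hz r hr
  have hsub : closedBall z r ⊆ closedBall y (2 * r) := closedBall_subset_closedBall' (by linarith)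
  refine (measure_mono hsub).trans ((hy (2 * r) (by positivity) ?_).trans_eq ?_)
  · rw [le_div_iff₀ (by positivity)] at hrρ
    rw [lt_div_iff₀ (by positivity)]
    linarith
  · congr 1; ring

/-- A set of positive finite Hausdorff measure has arbitrarily small balls of large density. -/
lemma exists_dense_ball {n : ℕ} (hn : 1 ≤ n) {E : Set V} (hE : MeasurableSet E)
    (h0 : μH[(n : ℝ)] E ≠ 0) (hfin : μH[(n : ℝ)] E ≠ ∞) {ρ : ℝ} (hρ : 0 < ρ) :
    ∃ x ∈ E, ∃ r, 0 < r ∧ r ≤ ρ ∧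
      ENNReal.ofReal (1 / 2 * r ^ n) ≤ μH[(n : ℝ)] (E ∩ closedBall x r) := by
  by_contra! hcon
  have : NullSingletonClass (μH[(n : ℝ)] : Measure V) :=
    Measure.nullSingletonClass_hausdorff V (by exact_mod_cast hn)
  have hle : (2 : ℝ≥0∞) • μH[(n : ℝ)].restrict E ≤ μH[(n : ℝ)] := by
    refine Measure.le_hausdorffMeasure (n : ℝ) _ (ENNReal.ofReal ρ) (by simpa using hρ) fun s hs => ?_
    rw [Measure.smul_apply, Measure.restrict_apply' hE, smul_eq_mul]
    rcases (s ∩ E).eq_empty_or_nonempty with hse | ⟨x, hxs, hxE⟩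
    · simp [hse]
    have hne : ediam s ≠ ∞ := ne_top_of_le_ne_top ENNReal.ofReal_ne_top hs
    set d := (ediam s).toReal with hd
    have hed : ediam s = ENNReal.ofReal d := (ENNReal.ofReal_toReal hne).symm
    rcases (ENNReal.toReal_nonneg : 0 ≤ d).eq_or_lt with hd0 | hd0
    · have hs1 : s ∩ E ⊆ {x} := by
        intro y hy
        have h1 := edist_le_ediam_of_mem hy.1 hxs
        rw [hed, show d = 0 from hd0.symm, ENNReal.ofReal_zero, nonpos_iff_eq_zero, edist_eq_zero] at h1
        exact h1
      rw [measure_mono_null hs1 (measure_singleton x), mul_zero]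
      exact zero_le
    · have hsub : s ∩ E ⊆ E ∩ closedBall x d := by
        rintro y ⟨hys, hyE⟩
        refine ⟨hyE, ?_⟩
        have h1 := edist_le_ediam_of_mem hys hxs
        rw [hed, edist_dist] at h1
        exact (ENNReal.ofReal_le_ofReal_iff hd0.le).1 h1
      have hdρ : d ≤ ρ := by
        rw [hed] at hs
        exact (ENNReal.ofReal_le_ofReal_iff hρ.le).1 hs
      calc _ ≤ 2 * ENNReal.ofReal (1 / 2 * d ^ n) := by
            gcongr
            exact (measure_mono hsub).trans (hcon x hxE d hd0 hdρ).le
        _ = ediam s ^ (n : ℝ) := by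
            rw [ENNReal.rpow_natCast, hed, ← ENNReal.ofReal_pow hd0.le,
              ← ENNReal.ofReal_ofNat 2, ← ENNReal.ofReal_mul (by norm_num)]
            congr 1; ring
  have h1 := hle E
  rw [Measure.smul_apply, Measure.restrict_apply_self, smul_eq_mul, two_mul] at h1
  exact absurd h1 (not_le.2 (ENNReal.lt_add_right hfin h0))

end Menger

namespace Menger

variable {V : Type*} [NormedAddCommGroup V] [InnerProductSpace ℝ V] [FiniteDimensional ℝ V]
  [MeasurableSpace V] [BorelSpace V]

/-- The total curvature of a measure. -/
def totalCurv (n : ℕ) (μ : Measure V) : ℝ≥0∞ :=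
  ∫⁻ x, ENNReal.ofReal (curv x) ∂(Measure.pi fun _ : Fin (n + 2) => μ)

/-- The part of the pointwise curvature at `z` coming from simplices of size at most `ρ`. -/
def localCurv (n : ℕ) (μ : Measure V) (ρ : ℝ) (z : V) : ℝ≥0∞ :=
  ∫⁻ t in univ.pi fun _ => closedBall z ρ, ENNReal.ofReal (curv (Fin.snoc t z : Fin (n + 2) → V))
    ∂(Measure.pi fun _ : Fin (n + 1) => μ)

lemma measurable_curv_snoc_prod {n : ℕ} :
    Measurable fun p : V × (Fin (n + 1) → V) => curv (Fin.snoc p.2 p.1 : Fin (n + 2) → V) := by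
  refine measurable_curv.comp (measurable_pi_iff.2 fun i => ?_)
  refine Fin.lastCases ?_ (fun i => ?_) i
  · simpa using measurable_fst
  · simp only [Fin.snoc_castSucc]
    fun_prop

lemma totalCurv_eq_lintegral_pointCurv (n : ℕ) (μ : Measure V) [IsFiniteMeasure μ] :
    totalCurv n μ = ∫⁻ z, pointCurv n μ z ∂μ := by
  have hmp := (measurePreserving_piFinSuccAbove (fun _ : Fin (n + 2) => μ) (Fin.last (n + 1))).symm
  rw [totalCurv, ← hmp.lintegral_comp_emb (MeasurableEquiv.measurableEmbedding _)]
  have h : ∀ p : V × (Fin (n + 1) → V),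
      (MeasurableEquiv.piFinSuccAbove (fun _ : Fin (n + 2) => V) (Fin.last (n + 1))).symm p =
        Fin.snoc p.2 p.1 := fun p => Fin.insertNth_last' p.1 p.2
  simp only [h]
  exact lintegral_prod _ measurable_curv_snoc_prod.ennreal_ofReal.aemeasurable

lemma measurable_localCurv (n : ℕ) (μ : Measure V) [IsFiniteMeasure μ] (ρ : ℝ) :
    Measurable (localCurv n μ ρ) := by
  have hS : MeasurableSet {p : V × (Fin (n + 1) → V) | ∀ j, dist (p.2 j) p.1 ≤ ρ} := by
    refine MeasurableSet.congr (s := ⋂ j, {p | dist (p.2 j) p.1 ≤ ρ}) (MeasurableSet.iInter fun j =>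
      (isClosed_le (by fun_prop) continuous_const).measurableSet) ?_
    ext; simp
  have hm := (measurable_curv_snoc_prod (V := V) (n := n)).ennreal_ofReal.indicator hS
  convert hm.lintegral_prod_right' (ν := Measure.pi fun _ : Fin (n + 1) => μ) using 2 with z
  rw [localCurv, ← lintegral_indicator
    (MeasurableSet.univ_pi fun _ => isClosed_closedBall.measurableSet)]
  refine lintegral_congr fun t => ?_
  simp [indicator]

lemma tendsto_localCurv {n : ℕ} {μ : Measure V} [IsFiniteMeasure μ] {z : V} (hz : μ {z} = 0)
    (h : pointCurv n μ z ≠ ∞) :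
    Filter.Tendsto (fun k : ℕ => localCurv n μ (1 / ((k : ℝ) + 1)) z) Filter.atTop (nhds 0) := by
  refine tendsto_setLIntegral_zero h ?_
  have h1 : Filter.Tendsto (fun k : ℕ => μ (closedBall z (1 / ((k : ℝ) + 1)))) Filter.atTop
      (nhds 0) := by
    have h2 := (tendsto_measure_cthickening_of_isClosed (μ := μ) (s := {z})
      ⟨1, one_pos, measure_ne_top _ _⟩ isClosed_singleton).comp
      (tendsto_one_div_add_atTop_nhds_zero_nat (𝕜 := ℝ))
    rw [hz] at h2
    refine h2.congr fun k => ?_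
    simp only [Function.comp]
    rw [cthickening_singleton _ (by positivity)]
  have h3 := ((ENNReal.continuous_pow (n + 1)).tendsto 0).comp h1
  rw [zero_pow (by omega)] at h3
  refine h3.congr fun k => ?_
  simp [Measure.pi_pi]

lemma pointCurv_restrict_le_localCurv {n : ℕ} {μ : Measure V} [IsFiniteMeasure μ] {F : Set V}
    {ρ : ℝ} {z : V} (hF : F ⊆ closedBall z ρ) :
    pointCurv n (μ.restrict F) z ≤ localCurv n μ ρ z := by
  rw [pointCurv, localCurv, ← Measure.restrict_pi_pi]
  exact lintegral_mono_set (pi_mono fun _ _ => hF)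

/-- A set of positive finite measure and finite curvature meets a Lipschitz image in a set of
positive measure. -/
lemma exists_lipschitz_of_totalCurv {n : ℕ} (hn : 1 ≤ n) {E : Set V} (hE : MeasurableSet E)
    (h0 : μH[(n : ℝ)] E ≠ 0) (hfin : μH[(n : ℝ)] E ≠ ∞)
    (hcurv : totalCurv n (μH[(n : ℝ)].restrict E) ≠ ∞) :
    ∃ f : EuclideanSpace ℝ (Fin n) → V, (∃ L : ℝ≥0, LipschitzWith L f) ∧
      μH[(n : ℝ)] (E ∩ range f) ≠ 0 := by
  have : NullSingletonClass (μH[(n : ℝ)] : Measure V) :=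
    Measure.nullSingletonClass_hausdorff V (by exact_mod_cast hn)
  set μ := μH[(n : ℝ)].restrict E with hμ
  have : IsFiniteMeasure μ := isFiniteMeasure_restrict.2 hfin
  obtain ⟨C, ρ, hC, hρ, A, hAE, hA, hA0, hup⟩ := exists_upper_part hE h0 hfin
  obtain ⟨η, hη, hpiece⟩ := exists_lipschitz_piece V hn (C₀ := C * 2 ^ n) (c₀ := 1 / 2)
    (by positivity) (by norm_num)
  have hae : ∀ᵐ z ∂μ, pointCurv n μ z ≠ ∞ := by
    have hmeas : Measurable fun z => pointCurv n μ z :=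
      (measurable_curv_snoc_prod (V := V) (n := n)).ennreal_ofReal.lintegral_prod_right'
    rw [totalCurv_eq_lintegral_pointCurv] at hcurv
    exact (ae_lt_top hmeas hcurv).mono fun z hz => hz.ne
  let B : ℕ → Set V := fun k => A ∩ {z | localCurv n μ (1 / ((k : ℝ) + 1)) z ≤ ENNReal.ofReal η}
  have hBm : ∀ k, MeasurableSet (B k) := fun k =>
    hA.inter (measurable_localCurv n μ _ measurableSet_Iic)
  have hex : ∃ k, μH[(n : ℝ)] (B k) ≠ 0 := by
    by_contra! hcon
    refine hA0 ?_
    have hsub : A ⊆ (E ∩ {z | ¬ pointCurv n μ z ≠ ∞}) ∪ ⋃ k, B k := by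
      intro z hz
      by_cases hzc : pointCurv n μ z ≠ ∞
      · have hzz : μ {z} = 0 := by
          rw [hμ, Measure.restrict_apply (measurableSet_singleton z)]
          exact measure_mono_null inter_subset_left (measure_singleton z)
        have h1 := (tendsto_localCurv hzz hzc).eventually
          (ge_mem_nhds (ENNReal.ofReal_pos.2 hη))
        obtain ⟨k, hk⟩ := h1.exists
        exact Or.inr (mem_iUnion.2 ⟨k, hz, hk⟩)
      · exact Or.inl ⟨hAE hz, hzc⟩
    refine measure_mono_null hsub (measure_union_null ?_ (measure_iUnion_null hcon))
    have h2 := ae_iff.1 hae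
    rw [hμ, Measure.restrict_apply' hE, inter_comm] at h2
    exact h2
  obtain ⟨k, hk⟩ := hex
  have hBE : B k ⊆ E := inter_subset_left.trans hAE
  have hk0 : 0 < 1 / ((k : ℝ) + 1) := by positivity
  obtain ⟨x₀, -, r₀, hr₀, hr₀ρ, hdense⟩ := exists_dense_ball hn (hBm k) hk
    (ne_top_of_le_ne_top hfin (measure_mono hBE))
    (ρ := min (ρ / 2) (1 / ((k : ℝ) + 1) / 2)) (by positivity)
  set F := B k ∩ closedBall x₀ r₀ with hF
  have hFE : F ⊆ E := inter_subset_left.trans hBE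
  have hFm : MeasurableSet F := (hBm k).inter isClosed_closedBall.measurableSet
  have hFz : ∀ z ∈ F, F ⊆ closedBall z (2 * r₀) := by
    intro z hz y hy
    rw [mem_closedBall]
    linarith [dist_triangle_right y z x₀, mem_closedBall.1 hy.2, mem_closedBall.1 hz.2]
  have hμF : μ.restrict F = μH[(n : ℝ)].restrict F := by
    rw [hμ, Measure.restrict_restrict hFm, inter_eq_self_of_subset_left hFE]
  have hr1 : 2 * r₀ ≤ ρ := by linarith [hr₀ρ.trans (min_le_left _ _)]
  have hr2 : 2 * r₀ ≤ 1 / ((k : ℝ) + 1) := by linarith [hr₀ρ.trans (min_le_right _ _)]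
  have hreg : UpperRegular n (C * 2 ^ n) (μ.restrict F) := by
    intro y r hr
    rw [Measure.restrict_apply' hFm]
    rcases (closedBall y r ∩ F).eq_empty_or_nonempty with he | ⟨z, hzy, hzF⟩
    · simp [he]
    have hmin : 0 < min (2 * r) ρ := by positivity
    have hsub : closedBall y r ∩ F ⊆ closedBall z (min (2 * r) ρ) := by
      rintro w ⟨hw, hwF⟩
      rw [mem_closedBall, le_min_iff]
      refine ⟨?_, (mem_closedBall.1 (hFz z hzF hwF)).trans hr1⟩
      linarith [dist_triangle_right w z y, mem_closedBall.1 hw, mem_closedBall.1 hzy]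
    refine (measure_mono hsub).trans ((hup z hzF.1.1 _ hmin (min_le_right _ _)).trans ?_)
    apply ENNReal.ofReal_le_ofReal
    rw [mul_assoc, ← mul_pow]
    gcongr
    exact min_le_left _ _
  obtain ⟨G, hGF, hG0, f, hf, hGf⟩ := hpiece (μ.restrict F) F x₀ r₀ hFm
    (by rw [Measure.restrict_apply' hFm, compl_inter_self, measure_empty]) hreg hr₀ inter_subset_right
    (by rw [hμF, Measure.restrict_apply_self]; exact hdense)
    (fun z hz => (pointCurv_restrict_le_localCurv ((hFz z hz).trans
      (closedBall_subset_closedBall hr2))).trans hz.1.2)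
  refine ⟨f, hf, fun h => hG0 ?_⟩
  rw [hμF, Measure.restrict_apply' hFm]
  exact measure_mono_null (t := E ∩ range f) (fun x hx => ⟨hFE hx.2, hGf hx.1⟩) h

end Menger

namespace Menger

section Pi

variable {ι α : Type*} [Fintype ι] [MeasurableSpace α]

lemma pi_mono_measure {μ ν : Measure α} (h : μ ≤ ν) :
    (Measure.pi fun _ : ι => μ) ≤ Measure.pi fun _ : ι => ν := by
  refine Measure.le_iff.2 fun s hs => ?_
  rw [Measure.pi_def, Measure.pi_def, toMeasure_apply _ _ hs, toMeasure_apply _ _ hs]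
  refine OuterMeasure.le_boundedBy.2 (fun t => ?_) s
  refine (OuterMeasure.boundedBy_le t).trans ?_
  exact Finset.prod_le_prod' fun i _ => h _

end Pi

variable {N n : ℕ}

lemma totalCurv_mono {V : Type*} [NormedAddCommGroup V] [InnerProductSpace ℝ V] [MeasurableSpace V]
    [BorelSpace V] {μ ν : Measure V} (h : μ ≤ ν) : totalCurv n μ ≤ totalCurv n ν :=
  lintegral_mono' (pi_mono_measure h) le_rfl

lemma isNRectifiable_mono {E F : Set (EuclideanSpace ℝ (Fin N))} (hEF : E ⊆ F)
    (hF : IsNRectifiable N n F) : IsNRectifiable N n E := by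
  obtain ⟨f, hf, h⟩ := hF
  exact ⟨f, hf, measure_mono_null (sdiff_subset_sdiff_left hEF) h⟩

lemma isNRectifiable_iUnion {E : ℕ → Set (EuclideanSpace ℝ (Fin N))}
    (hE : ∀ k, IsNRectifiable N n (E k)) : IsNRectifiable N n (⋃ k, E k) := by
  choose f hf h using hE
  refine ⟨fun i => f i.unpair.1 i.unpair.2, fun i => hf _ _, ?_⟩
  refine measure_mono_null ?_ (measure_iUnion_null h)
  rintro x ⟨hx, hxn⟩
  obtain ⟨k, hk⟩ := mem_iUnion.1 hx
  refine mem_iUnion.2 ⟨k, hk, fun hxk => hxn ?_⟩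
  obtain ⟨j, hj⟩ := mem_iUnion.1 hxk
  exact mem_iUnion.2 ⟨Nat.pair k j, by simpa using hj⟩

lemma isNRectifiable_of_subset_range {E : Set (EuclideanSpace ℝ (Fin N))}
    {f : EuclideanSpace ℝ (Fin n) → EuclideanSpace ℝ (Fin N)} {L : ℝ≥0} (hf : LipschitzWith L f)
    (hE : E ⊆ range f) : IsNRectifiable N n E :=
  ⟨fun _ => f, fun _ => ⟨L, hf⟩, measure_mono_null
    (fun _ hx => (hx.2 (mem_iUnion.2 ⟨0, hE hx.1⟩)).elim) measure_empty⟩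

lemma measurableSet_range_of_lipschitz {f : EuclideanSpace ℝ (Fin n) → EuclideanSpace ℝ (Fin N)}
    (hf : ∃ L : ℝ≥0, LipschitzWith L f) : MeasurableSet (range f) := by
  obtain ⟨L, hL⟩ := hf
  obtain ⟨K, hK, hKu⟩ := isSigmaCompact_range hL.continuous
  rw [← hKu]
  exact MeasurableSet.iUnion fun k => (hK k).measurableSet

/-- A set which meets, in each of its parts of positive measure, a Lipschitz image is
rectifiable. -/
lemma isNRectifiable_of_forall_exists {E : Set (EuclideanSpace ℝ (Fin N))} (hE : MeasurableSet E)
    (hfin : μH[(n : ℝ)] E ≠ ∞)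
    (h : ∀ F ⊆ E, MeasurableSet F → μH[(n : ℝ)] F ≠ 0 →
      ∃ f : EuclideanSpace ℝ (Fin n) → EuclideanSpace ℝ (Fin N),
        (∃ L : ℝ≥0, LipschitzWith L f) ∧ μH[(n : ℝ)] (F ∩ range f) ≠ 0) :
    IsNRectifiable N n E := by
  let S : Set ℝ≥0∞ := {a | ∃ f : ℕ → EuclideanSpace ℝ (Fin n) → EuclideanSpace ℝ (Fin N),
    (∀ i, ∃ L : ℝ≥0, LipschitzWith L (f i)) ∧ a = μH[(n : ℝ)] (E ∩ ⋃ i, range (f i))}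
  have hS : S.Nonempty := ⟨_, fun _ _ => 0, fun _ => ⟨0, LipschitzWith.const 0⟩, rfl⟩
  obtain ⟨u, -, hu, huS⟩ := exists_seq_tendsto_sSup hS (OrderTop.bddAbove S)
  choose f hf hfu using huS
  let g : ℕ → EuclideanSpace ℝ (Fin n) → EuclideanSpace ℝ (Fin N) :=
    fun i => f i.unpair.1 i.unpair.2
  have hg : ∀ i, ∃ L : ℝ≥0, LipschitzWith L (g i) := fun i => hf _ _
  have hgu : ∀ k, u k ≤ μH[(n : ℝ)] (E ∩ ⋃ i, range (g i)) := by
    intro k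
    rw [hfu k]
    refine measure_mono (inter_subset_inter_right _ (iUnion_subset fun j => ?_))
    refine subset_iUnion_of_subset (Nat.pair k j) ?_
    simp [g]
  have hsup : sSup S ≤ μH[(n : ℝ)] (E ∩ ⋃ i, range (g i)) := le_of_tendsto' hu hgu
  have hgm : MeasurableSet (⋃ i, range (g i)) :=
    MeasurableSet.iUnion fun i => measurableSet_range_of_lipschitz (hg i)
  refine ⟨g, hg, ?_⟩
  by_contra h0
  obtain ⟨f', hf', hpos⟩ := h _ sdiff_subset (hE.diff hgm) h0
  let g' : ℕ → EuclideanSpace ℝ (Fin n) → EuclideanSpace ℝ (Fin N) :=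
    fun i => Nat.casesOn i f' g
  have hg' : ∀ i, ∃ L : ℝ≥0, LipschitzWith L (g' i) := by
    rintro (_ | i)
    · exact hf'
    · exact hg i
  have hle : μH[(n : ℝ)] (E ∩ ⋃ i, range (g' i)) ≤ μH[(n : ℝ)] (E ∩ ⋃ i, range (g i)) :=
    (le_sSup (a := μH[(n : ℝ)] (E ∩ ⋃ i, range (g' i))) (s := S) ⟨g', hg', rfl⟩).trans hsup
  have hdisj : Disjoint (E ∩ ⋃ i, range (g i)) ((E \ ⋃ i, range (g i)) ∩ range f') :=
    disjoint_left.2 fun x hx hx' => hx'.1.2 hx.2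
  have hsub : (E ∩ ⋃ i, range (g i)) ∪ ((E \ ⋃ i, range (g i)) ∩ range f') ⊆
      E ∩ ⋃ i, range (g' i) := by
    rintro x (⟨hxE, hx⟩ | ⟨⟨hxE, -⟩, hx⟩)
    · obtain ⟨i, hi⟩ := mem_iUnion.1 hx
      exact ⟨hxE, mem_iUnion.2 ⟨i + 1, hi⟩⟩
    · exact ⟨hxE, mem_iUnion.2 ⟨0, hx⟩⟩
  have h1 := (measure_mono hsub).trans hle
  rw [measure_union hdisj ((hE.diff hgm).inter (measurableSet_range_of_lipschitz hf'))] at h1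
  exact absurd h1 (not_le.2 (ENNReal.lt_add_right
    (ne_top_of_le_ne_top hfin (measure_mono inter_subset_left)) hpos))

lemma isNRectifiable_of_finite (hn : 1 ≤ n) {E : Set (EuclideanSpace ℝ (Fin N))}
    (hE : MeasurableSet E) (hfin : μH[(n : ℝ)] E ≠ ∞)
    (hcurv : totalCurv n (μH[(n : ℝ)].restrict E) ≠ ∞) : IsNRectifiable N n E :=
  isNRectifiable_of_forall_exists hE hfin fun _ hFE hF hF0 =>
    exists_lipschitz_of_totalCurv hn hF hF0 (ne_top_of_le_ne_top hfin (measure_mono hFE))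
      (ne_top_of_le_ne_top hcurv (totalCurv_mono (Measure.restrict_mono hFE le_rfl)))

end Menger

namespace Menger

lemma curv_pos_of_affineIndependent {V : Type*} [NormedAddCommGroup V] [InnerProductSpace ℝ V]
    {n : ℕ} {x : Fin (n + 2) → V} (hx : AffineIndependent ℝ x) : 0 < curv x := by
  have hli : LinearIndependent ℝ fun i : Fin (n + 1) => x i.succ - x 0 :=
    ((affineIndependent_iff_linearIndependent_vsub ℝ x 0).1 hx).comp
      (fun i : Fin (n + 1) => ⟨i.succ, Fin.succ_ne_zero i⟩)
      fun i j hij => Fin.succ_injective _ (congrArg Subtype.val hij)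
  have hpos : 0 < pairDist x :=
    Finset.prod_pos fun i _ => Finset.prod_pos fun j hj => dist_pos.2 fun he =>
      (Finset.mem_filter.1 hj).2.ne (hx.injective he)
  exact div_pos (Matrix.posDef_gram_of_linearIndependent hli).det_pos (by positivity)

/-- A set without nondegenerate `(n + 1)`-simplices lies in an affine image of `ℝⁿ`. -/
lemma exists_lipschitz_of_flat {N n : ℕ} {S : Set (EuclideanSpace ℝ (Fin N))}
    (hS : ∀ x : Fin (n + 2) → EuclideanSpace ℝ (Fin N), (∀ i, x i ∈ S) → curv x ≤ 0) :
    ∃ f : EuclideanSpace ℝ (Fin n) → EuclideanSpace ℝ (Fin N),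
      (∃ L : ℝ≥0, LipschitzWith L f) ∧ S ⊆ range f := by
  obtain ⟨t, htS, hspan, hind⟩ := exists_affineIndependent ℝ (EuclideanSpace ℝ (Fin N)) S
  rcases S.eq_empty_or_nonempty with rfl | ⟨p, hp⟩
  · exact ⟨fun _ => 0, ⟨0, LipschitzWith.const 0⟩, empty_subset _⟩
  have : Finite t := finite_set_of_fin_dim_affineIndependent ℝ hind
  have : Fintype t := Fintype.ofFinite t
  have htne : t.Nonempty := by
    rw [← affineSpan_nonempty ℝ, hspan, affineSpan_nonempty]
    exact ⟨p, hp⟩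
  have : Nonempty t := htne.to_subtype
  have hcard : Fintype.card t ≤ n + 1 := by
    by_contra! hlt
    obtain ⟨e⟩ : Nonempty (Fin (n + 2) ↪ t) :=
      Function.Embedding.nonempty_of_card_le (by rw [Fintype.card_fin]; omega)
    exact absurd (hS _ fun i => htS (e i).2)
      (not_le.2 (curv_pos_of_affineIndependent (hind.comp_embedding e)))
  set W := vectorSpan ℝ S with hW
  have hWt : W = vectorSpan ℝ t := by
    rw [hW, ← direction_affineSpan, ← hspan, direction_affineSpan]
  have hrank : Module.finrank ℝ W ≤ n := by
    have h1 : _ = Fintype.card t := hind.finrank_vectorSpan_add_one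
    rw [Subtype.range_coe, ← hWt] at h1
    omega
  obtain ⟨g, hg⟩ : ∃ g : W →ₗ[ℝ] EuclideanSpace ℝ (Fin n), Function.Injective g := by
    rw [← rank_le_iff_exists_linearMap, ← Module.finrank_eq_rank, ← Module.finrank_eq_rank,
      finrank_euclideanSpace_fin]
    exact_mod_cast hrank
  obtain ⟨l, hl⟩ := g.exists_leftInverse_of_injective (LinearMap.ker_eq_bot.2 hg)
  let L : EuclideanSpace ℝ (Fin n) →L[ℝ] EuclideanSpace ℝ (Fin N) :=
    LinearMap.toContinuousLinearMap (W.subtype ∘ₗ l)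
  refine ⟨fun c => p + L c, ⟨‖L‖₊, ?_⟩, fun q hq => ?_⟩
  · exact LipschitzWith.of_dist_le_mul fun a b => by
      rw [dist_add_left]; exact L.lipschitz.dist_le_mul a b
  · refine ⟨g ⟨q - p, vsub_mem_vectorSpan ℝ hq hp⟩, ?_⟩
    have h2 := LinearMap.congr_fun hl ⟨q - p, vsub_mem_vectorSpan ℝ hq hp⟩
    simp only [LinearMap.comp_apply, LinearMap.id_apply] at h2
    simp [L, h2]

/-- A measurable set of finite product measure is covered by countably many sets, each of which has
a projection of finite measure. -/
lemma exists_cover_of_pi_ne_top {ι α : Type*} [Fintype ι] [Nonempty ι] [MeasurableSpace α]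
    {μ : Measure α} {T : Set (ι → α)} (hT : MeasurableSet T)
    (h : (Measure.pi fun _ : ι => μ) T ≠ ∞) :
    ∃ (S : ℕ → Set (ι → α)) (i : ℕ → ι), T ⊆ ⋃ k, S k ∧
      ∀ k, μ (Function.eval (i k) '' S k) ≠ ∞ := by
  rw [Measure.pi_def, toMeasure_apply _ _ hT, OuterMeasure.pi, OuterMeasure.boundedBy_apply] at h
  obtain ⟨S, hS⟩ := iInf_lt_iff.1 (lt_top_iff_ne_top.2 h)
  obtain ⟨hTS, hS⟩ := iInf_lt_iff.1 hS
  have hex : ∀ k, ∃ i, μ (Function.eval i '' S k) ≠ ∞ := by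
    intro k
    by_contra! hcon
    rcases (S k).eq_empty_or_nonempty with he | hne
    · obtain ⟨i⟩ := ‹Nonempty ι›
      simpa [he] using hcon i
    · refine (ENNReal.ne_top_of_tsum_ne_top hS.ne k) ?_
      rw [iSup_pos hne, piPremeasure]
      have : ∀ i, μ.toOuterMeasure (Function.eval i '' S k) = ∞ := hcon
      simp [this]
  choose i hi using hex
  exact ⟨S, i, hTS, hi⟩

/-- A set of finite curvature splits into countably many parts of finite measure and a flat part. -/
lemma isNRectifiable_of_totalCurv {N n : ℕ} (hn : 1 ≤ n) {E : Set (EuclideanSpace ℝ (Fin N))}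
    (hE : MeasurableSet E) (hcurv : totalCurv n (μH[(n : ℝ)].restrict E) ≠ ∞) :
    IsNRectifiable N n E := by
  set μ := μH[(n : ℝ)].restrict E with hμ
  have hm : Measurable fun x : Fin (n + 2) → EuclideanSpace ℝ (Fin N) => ENNReal.ofReal (curv x) :=
    measurable_curv.ennreal_ofReal
  have hcov : ∀ j : ℕ, ∃ (S : ℕ → Set (Fin (n + 2) → EuclideanSpace ℝ (Fin N)))
      (i : ℕ → Fin (n + 2)),
      {x | ENNReal.ofReal (1 / ((j : ℝ) + 1)) ≤ ENNReal.ofReal (curv x)} ⊆ ⋃ k, S k ∧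
        ∀ k, μ (Function.eval (i k) '' S k) ≠ ∞ := by
    intro j
    have hj : ENNReal.ofReal (1 / ((j : ℝ) + 1)) ≠ 0 := by
      rw [Ne, ENNReal.ofReal_eq_zero, not_le]; positivity
    exact exists_cover_of_pi_ne_top (hm measurableSet_Ici)
      (meas_ge_le_lintegral_div hm.aemeasurable hj ENNReal.ofReal_ne_top |>.trans_lt
        (ENNReal.div_lt_top hcurv hj)).ne
  choose S i hS hi using hcov
  let D : ℕ → ℕ → Set (EuclideanSpace ℝ (Fin N)) := fun j k =>
    toMeasurable μ (Function.eval (i j k) '' S j k)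
  have hDm : ∀ j k, MeasurableSet (D j k) := fun j k => measurableSet_toMeasurable _ _
  have hrect : IsNRectifiable N n (⋃ j, ⋃ k, E ∩ D j k) := by
    refine isNRectifiable_iUnion fun j => isNRectifiable_iUnion fun k => ?_
    refine isNRectifiable_of_finite hn (hE.inter (hDm j k)) ?_
      (ne_top_of_le_ne_top hcurv (totalCurv_mono (Measure.restrict_mono inter_subset_left le_rfl)))
    rw [inter_comm, ← Measure.restrict_apply (hDm j k), ← hμ, measure_toMeasurable]
    exact hi j k
  have hflat : IsNRectifiable N n (E \ ⋃ j, ⋃ k, E ∩ D j k) := by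
    obtain ⟨f, ⟨L, hf⟩, hsub⟩ := exists_lipschitz_of_flat (n := n)
      (S := E \ ⋃ j, ⋃ k, E ∩ D j k) (fun x hx => by
        by_contra! hpos
        obtain ⟨j, hj⟩ := exists_nat_one_div_lt hpos
        obtain ⟨k, hk⟩ := mem_iUnion.1 (hS j (ENNReal.ofReal_le_ofReal hj.le))
        exact (hx (i j k)).2 (mem_iUnion₂.2 ⟨j, k, (hx _).1,
          subset_toMeasurable _ _ (mem_image_of_mem _ hk)⟩))
    exact isNRectifiable_of_subset_range hf hsub
  refine isNRectifiable_mono (F := ⋃ m : ℕ, if m = 0 then ⋃ j, ⋃ k, E ∩ D j k else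
    E \ ⋃ j, ⋃ k, E ∩ D j k) (fun x hx => ?_) (isNRectifiable_iUnion fun m => ?_)
  · by_cases h : x ∈ ⋃ j, ⋃ k, E ∩ D j k
    · exact mem_iUnion.2 ⟨0, by simpa using h⟩
    · exact mem_iUnion.2 ⟨1, by simpa using ⟨hx, by simpa using h⟩⟩
  · split_ifs
    · exact hrect
    · exact hflat

end Menger

/-- **Theorem.** Let `1 ≤ n < N`. If `E ⊆ ℝ^N` is a Borel set with
`M_{K₁²}(E) = ∫_E ⋯ ∫_E K₁² dH^n ⋯ dH^n < ∞`, then `E` is `n`-rectifiable. -/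
theorem menger_rectifiable_K1 {N n : ℕ} (hn : 1 ≤ n) (hnN : n < N)
    (E : Set (EuclideanSpace ℝ (Fin N))) (hE : MeasurableSet E)
    (hfin : MengerEnergy N n 2 (K1 N n) (μH[(n : ℝ)].restrict E) < ⊤) :
    IsNRectifiable N n E := by
  refine Menger.isNRectifiable_of_totalCurv hn hE fun htop => ?_
  have hc : 0 < Menger.cornerVolume (n + 1) ^ 2 := pow_pos (Menger.cornerVolume_pos _) 2
  refine hfin.ne ?_
  simp only [MengerEnergy, Real.rpow_two, Menger.K1_sq, ENNReal.ofReal_mul hc.le]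
  rw [lintegral_const_mul _ Menger.measurable_curv.ennreal_ofReal]
  rw [Menger.totalCurv] at htop
  rw [htop]
  exact ENNReal.mul_top (ENNReal.ofReal_pos.2 hc).ne'

end
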